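/- Let k ≥ 2, n > 5, and suppose L_n^{(k)} = b·10^{d} with integers 1 ≤ b ≤ 9 and d ≥ 2. Then n < 2.1·10^{17}·k^4·(log k)^4. -/

import Mathlib

/-- Shifted `k`-generalized Lucas sequence: `genLucas k m` equals `L^{(k)}_{m - (k-2)}`,
so that index `m = 0` corresponds to `n = 2 - k`.  The initial values are
`L^{(k)}_{2-k} = ⋯ = L^{(k)}_{-1} = 0`, `L^{(k)}_0 = 2`, `L^{(k)}_1 = 1`, and each term
afterwards is the sum of the `k` preceding terms. -/
def genLucas (k : ℕ) : ℕ → ℤ := fun m =>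
  if h1 : m < k - 2 then 0
  else if h2 : m = k - 2 then 2
  else if h3 : m = k - 1 then 1
  else ∑ i ∈ Finset.range k, genLucas k (m - 1 - i)
decreasing_by omega

/-- The `k`-generalized Lucas number `L^{(k)}_n` for `n ≥ 0`. -/
def lucasL (k n : ℕ) : ℤ := genLucas k (n + k - 2)

section
open Finset

theorem gl_lt (k m : ℕ) (h : m < k - 2) : genLucas k m = 0 := by
  rw [genLucas]; simp [h]
theorem gl_a (k : ℕ) : genLucas k (k-2) = 2 := by
  rw [genLucas]; simp
theorem gl_b (k : ℕ) (hk : 2 ≤ k) : genLucas k (k-1) = 1 := by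
  rw [genLucas]
  rw [dif_neg (by omega), dif_neg (by omega), dif_pos rfl]
theorem gl_sum (k m : ℕ) (hk : 2 ≤ k) : genLucas k (m+k) = ∑ j ∈ range k, genLucas k (m + j) := by
  rw [genLucas, dif_neg (by omega), dif_neg (by omega), dif_neg (by omega)]
  rw [← Finset.sum_range_reflect]
  apply Finset.sum_congr rfl
  intro i hi
  rw [mem_range] at hi
  congr 1; omega
theorem gl_k (k : ℕ) (hk : 2 ≤ k) : genLucas k k = 3 := by
  have h := gl_sum k 0 hk
  rw [zero_add] at h
  obtain ⟨j, rfl⟩ : ∃ j, k = j + 2 := ⟨k-2, by omega⟩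
  rw [h, sum_range_succ, sum_range_succ, sum_eq_zero]
  · have := gl_a (j+2); have := gl_b (j+2) hk
    simp at *; simp [*]
  · intro i hi; rw [mem_range] at hi; rw [zero_add]; exact gl_lt _ _ (by omega)
theorem gl_rec (k m : ℕ) (hk : 2 ≤ k) :
    genLucas k (m+k+1) = 2 * genLucas k (m+k) - genLucas k m := by
  have h1 := gl_sum k (m+1) hk
  have h2 := gl_sum k m hk
  have h3 := sum_range_succ (fun j => genLucas k (m+j)) k
  have h4 := sum_range_succ' (fun j => genLucas k (m+j)) k
  have h5 : ∑ j ∈ range k, genLucas k (m + 1 + j) = ∑ j ∈ range k, genLucas k (m + (j+1)) :=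
    sum_congr rfl (fun j _ => by congr 1; omega)
  rw [show m+k+1 = m+1+k by omega, h1, h5]
  simp only [add_zero] at h4
  linarith

/-- k = 2 -/
theorem lucas_two_mod (n : ℕ) : ¬ (5:ℤ) ∣ lucasL 2 n := by
  have key : ∀ j, ∃ x y : ℤ, (genLucas 2 (4*j) = 2 + 5 * x) ∧ genLucas 2 (4*j+1) = 1 + 5 * y := by
    intro j
    induction j with
    | zero =>
      refine ⟨0,0,?_,?_⟩
      · have := gl_a 2; simpa using this
      · have := gl_b 2 le_rfl; simpa using this
    | succ j ih =>
      obtain ⟨x,y,hx,hy⟩ := ih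
      have f : ∀ m, genLucas 2 (m+2) = genLucas 2 m + genLucas 2 (m+1) := by
        intro m; have := gl_sum 2 m le_rfl; simpa [sum_range_succ] using this
      have h2 := f (4*j); have h3 := f (4*j+1); have h4 := f (4*j+2); have h5 := f (4*j+3)
      refine ⟨x*2+y*3+1, x*3+y*5+2, ?_, ?_⟩
      · rw [show 4*(j+1) = 4*j+2+2 by ring, h4, show 4*j+2+1=4*j+1+2 by ring, h3, show 4*j+1+1=4*j+2 by ring, h2]
        linarith
      · rw [show 4*(j+1)+1 = 4*j+3+2 by ring, h5, show 4*j+3+1=4*j+2+2 by ring, h4, show 4*j+2+1=4*j+1+2 by ring, show 4*j+3=4*j+1+2 by ring,  h3, show 4*j+1+1=4*j+2 by ring, h2]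
        linarith
  have f : ∀ m, genLucas 2 (m+2) = genLucas 2 m + genLucas 2 (m+1) := by
    intro m; have := gl_sum 2 m le_rfl; simpa [sum_range_succ] using this
  obtain ⟨x,y,hx,hy⟩ := key (n/4)
  have h2 := f (4*(n/4)); have h3 := f (4*(n/4)+1)
  rw [show 4*(n/4)+1+1=4*(n/4)+2 by ring] at h3
  have e : lucasL 2 n = genLucas 2 n := by simp [lucasL]
  rw [e]
  have hc : n = 4*(n/4) ∨ n = 4*(n/4)+1 ∨ n = 4*(n/4)+2 ∨ n = 4*(n/4)+1+2 := by omega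
  rcases hc with h | h | h | h <;> rw [h] <;> omega

theorem L0 (k : ℕ) : lucasL k 0 = 2 := by simp [lucasL, gl_a]
theorem L1 (k : ℕ) (hk : 2 ≤ k): lucasL k 1 = 1 := by
  rw [lucasL, show 1+k-2 = k-1 by omega, gl_b k hk]
theorem Linit (k s : ℕ) (hk : 2 ≤ k) (h : s + 2 ≤ k) : lucasL k (s+2) = 2^s * 3 := by
  rw [lucasL, show s+2+k-2 = s+k by omega]
  induction s with
  | zero => simp [gl_k k hk]
  | succ s ih =>
    rw [show s+1+k = s+k+1 by ring, gl_rec k s hk, ih (by omega), gl_lt k s (by omega)]; ring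
theorem Lrec (k n : ℕ) (hk : 2 ≤ k) : lucasL k (n+(k+1)) = 2 * lucasL k (n+k) - lucasL k n := by
  simp only [lucasL]
  have := gl_rec k (n+k-2) hk
  rw [show n+(k+1)+k-2 = n+k-2+k+1 by omega, this, show n+k+k-2=n+k-2+k by omega]

def tt (m s : ℕ) : ℤ := (m+s).choose s - 6 * (m+s+1).choose (s+1) + 8 * (m+s+2).choose (s+2)

theorem tt_zero (s : ℕ) : tt 0 s = 3 := by simp [tt]
theorem tt_rec (m s : ℕ) : tt (m+1) (s+1) = tt (m+1) s + tt m (s+1) := by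
  simp only [tt]
  have e1 : (m+1+(s+1)).choose (s+1) = (m+1+s).choose s + (m+(s+1)).choose (s+1) := by
    rw [show m+1+(s+1) = (m+1+s)+1 by ring, Nat.choose_succ_succ]; congr 2; ring
  have e2 : (m+1+(s+1)+1).choose (s+1+1) = (m+1+s+1).choose (s+1) + (m+(s+1)+1).choose (s+1+1) := by
    rw [Nat.choose_succ_succ]; congr 2 <;> ring_nf
  have e3 : (m+1+(s+1)+2).choose (s+1+2) = (m+1+s+2).choose (s+2) + (m+(s+1)+2).choose (s+1+2) := by
    rw [show m+1+(s+1)+2 = (m+1+s+2)+1 by ring, show s+1+2=s+2+1 by ring, Nat.choose_succ_succ]; congr 2 <;> ring_nf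
  rw [e1,e2,e3]; push_cast; ring

theorem tt_mul (m s : ℕ) : (s+1) * (s+2) * tt m s =
    (((m+s).choose s * (8*m^2+(10*s+12)*m+3*(s+1)*(s+2)) : ℕ) : ℤ) := by
  have e1 := Nat.add_one_mul_choose_eq (m+s) s
  have e2 := Nat.add_one_mul_choose_eq (m+s+1) (s+1)
  zify at e1 e2
  simp only [tt]
  rw [show s+2 = s+1+1 by ring, show m+s+2 = m+s+1+1 by ring]
  push_cast at *
  generalize ((m+s+1+1).choose (s+1+1) : ℤ) = Z at *
  generalize ((m+s+1).choose (s+1) : ℤ) = Y at *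
  generalize ((m+s).choose (s) : ℤ) = X at *
  linear_combination (6*(s+2) - 8 * (m+s+2) :ℤ) * e1 - 8*(s+1)*e2

theorem tt_zero' (m : ℕ) : tt m 0 = 4*m^2+6*m+3 := by
  have := tt_mul m 0
  push_cast at this
  simp at this
  linarith

theorem two_adic (k : ℕ) (hk : 2 ≤ k) (m : ℕ) :
    ((2:ℤ)^(k-1) ∣ lucasL k ((k+1)*m) - (-1)^m * 2) ∧
    ((2:ℤ)^k ∣ lucasL k ((k+1)*m+1) - (-1)^m * (1+4*m)) ∧
    (∀ s, s + 2 ≤ k → (2:ℤ)^(s+(k+1)) ∣ lucasL k ((k+1)*m+(s+2)) - (-1)^m * (2^s * tt m s)) := by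
  induction m with
  | zero =>
    refine ⟨by simp [L0], by simp [L1 k hk], ?_⟩
    intro s hs
    rw [mul_zero, zero_add, Linit k s hk hs, tt_zero]; simp
  | succ m ih =>
    obtain ⟨h0, h1, hs⟩ := ih
    have g0 : (2:ℤ)^(k-1) ∣ lucasL k ((k+1)*(m+1)) - (-1)^(m+1) * 2 := by
      obtain ⟨x, hx⟩ := h0
      obtain ⟨y, hy⟩ := hs (k-2) (by omega)
      have := Lrec k ((k+1)*m) hk
      rw [show (k+1)*(m+1) = (k+1)*m+(k+1) by ring, this]
      rw [show k-2+2=k by omega] at hy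
      obtain ⟨j, rfl⟩ : ∃ j, k = j+2 := ⟨k-2, by omega⟩
      simp only [show j+2-2=j by omega, show j+2-1=j+1 by omega] at *
      refine ⟨(-1)^m * tt m j + 2^(j+3) * y - x, ?_⟩
      ring_nf at *
      linear_combination 2 * hy - hx
    have g1 : (2:ℤ)^k ∣ lucasL k ((k+1)*(m+1)+1) - (-1)^(m+1) * (1+4*((m+1:ℕ):ℤ)) := by
      obtain ⟨x, hx⟩ := g0
      obtain ⟨y, hy⟩ := h1
      have := Lrec k ((k+1)*m+1) hk
      rw [show (k+1)*(m+1)+1 = (k+1)*m+1+(k+1) by ring, this]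
      rw [show (k+1)*m+1+k = (k+1)*(m+1) by ring]
      obtain ⟨j, rfl⟩ : ∃ j, k = j+2 := ⟨k-2, by omega⟩
      simp only [show j+2-2=j by omega, show j+2-1=j+1 by omega] at *
      refine ⟨x-y, ?_⟩
      push_cast
      have e : (-1:ℤ)^(m+1) = - (-1)^m := by ring
      rw [e] at *
      have e2 : (2:ℤ)^(j+2) = 2 * 2^(j+1) := by ring
      rw [e2] at *
      linear_combination 2 * hx - hy
    refine ⟨g0, g1, ?_⟩
    intro s
    induction s with
    | zero =>
      intro h
      obtain ⟨x, hx⟩ := g1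
      obtain ⟨y, hy⟩ := hs 0 h
      have := Lrec k ((k+1)*m+(0+2)) hk
      rw [show (k+1)*(m+1)+(0+2) = (k+1)*m+(0+2)+(k+1) by ring, this]
      rw [show (k+1)*m+(0+2)+k = (k+1)*(m+1)+1 by ring]
      rw [tt_zero'] at *
      refine ⟨x-y, ?_⟩
      rw [zero_add] at *
      push_cast at *
      have e : (-1:ℤ)^(m+1) = - (-1)^m := by ring
      rw [e] at *
      have e2 : (2:ℤ)^(k+1) = 2 * 2^k := by ring
      rw [e2] at *
      linear_combination 2 * hx - hy
    | succ s ihs =>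
      intro h
      obtain ⟨x, hx⟩ := ihs (by omega)
      obtain ⟨y, hy⟩ := hs (s+1) h
      have := Lrec k ((k+1)*m+(s+1+2)) hk
      rw [show (k+1)*(m+1)+(s+1+2) = (k+1)*m+(s+1+2)+(k+1) by ring, this]
      rw [show (k+1)*m+(s+1+2)+k = (k+1)*(m+1)+(s+2) by ring, tt_rec]
      refine ⟨x-y, ?_⟩
      have e : (-1:ℤ)^(m+1) = - (-1)^m := by ring
      rw [e] at *
      have e2 : (2:ℤ)^(s+1+(k+1)) = 2 * 2^(s+(k+1)) := by ring
      rw [e2] at *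
      linear_combination 2 * hx - hy

theorem partA (k n d : ℕ) (b : ℤ) (hk : 3 ≤ k) (hn : 5 < n) (hd : 2*k ≤ d)
    (heq : lucasL k n = b * 10 ^ d) : 2^(k+1) ≤ 6 * n^3 := by
  have h2 : (2:ℤ)^(2*k) ∣ lucasL k n := by
    rw [heq]
    apply Dvd.dvd.mul_left
    exact (pow_dvd_pow _ hd).trans (pow_dvd_pow_of_dvd (by norm_num) d)
  obtain ⟨h0, h1, hs⟩ := two_adic k (by omega) (n/(k+1))
  set m := n/(k+1) with hm
  have hnm : (k+1)*m + n % (k+1) = n := Nat.div_add_mod n (k+1)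
  have hr : n % (k+1) < k+1 := Nat.mod_lt _ (by omega)
  have sgn : ∀ x : ℤ, ∀ j, (2:ℤ)^j ∣ (-1)^m * x → (2:ℤ)^j ∣ x := by
    intro x j h
    rcases neg_one_pow_eq_or ℤ m with e | e <;> rw [e] at h <;> simpa using h
  rcases Nat.lt_or_ge (n % (k+1)) 2 with hlt | hge
  · exfalso
    have hc : n % (k+1) = 0 ∨ n % (k+1) = 1 := by omega
    rcases hc with hc | hc
    · rw [hc, add_zero] at hnm
      rw [hnm] at h0
      have := (dvd_sub_right ((pow_dvd_pow _ (by omega)).trans h2)).1 h0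
      have := sgn _ _ this
      have h4 : (2:ℤ)^2 ∣ 2 := (pow_dvd_pow _ (by omega)).trans this
      norm_num at h4
    · rw [hc] at hnm
      rw [hnm] at h1
      have := (dvd_sub_right ((pow_dvd_pow _ (by omega)).trans h2)).1 h1
      have := sgn _ _ this
      have h4 : (2:ℤ)^1 ∣ 1+4*m := (pow_dvd_pow _ (by omega)).trans this
      omega
  · obtain ⟨s, hs'⟩ : ∃ s, n % (k+1) = s+2 := ⟨n%(k+1)-2, by omega⟩
    rw [hs'] at hnm
    have h3 := hs s (by omega)
    rw [hnm] at h3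
    have := (dvd_sub_right ((pow_dvd_pow _ (by omega)).trans h2)).1 h3
    have := sgn _ _ this
    rw [pow_add] at this
    have h5 : (2:ℤ)^(k+1) ∣ tt m s := (mul_dvd_mul_iff_left (by positivity)).1 this
    have h6 : (2:ℤ)^(k+1) ∣ (s+1)*(s+2)*tt m s := h5.mul_left _
    rw [tt_mul] at h6
    set Q := 8*m^2+(10*s+12)*m+3*(s+1)*(s+2) with hQ
    have h7 : 2^(k+1) ∣ (m+s).choose s * Q := by exact_mod_cast h6
    have hC0 : (m+s).choose s ≠ 0 := (Nat.choose_pos (Nat.le_add_left s m)).ne'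
    have hQ0 : Q ≠ 0 := by positivity
    have hms : 0 < m+s := by
      rcases Nat.eq_zero_or_pos (m+s) with h | h
      · obtain ⟨hz, hz'⟩ := Nat.add_eq_zero_iff.1 h
        rw [hz, hz'] at hnm; omega
      · exact h
    have h8 := (Nat.prime_two.pow_dvd_iff_le_factorization (mul_ne_zero hC0 hQ0)).1 h7
    rw [Nat.factorization_mul hC0 hQ0] at h8
    simp only [Finsupp.add_apply] at h8
    have h9 : 2^((m+s).choose s).factorization 2 ≤ m+s := Nat.pow_factorization_choose_le hms
    have h10 : 2^Q.factorization 2 ≤ Q := Nat.ordProj_le 2 hQ0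
    have h11 : 2^(k+1) ≤ (m+s)*Q := by
      calc 2^(k+1) ≤ 2^(((m+s).choose s).factorization 2 + Q.factorization 2) :=
            Nat.pow_le_pow_right (by norm_num) h8
        _ = _ := pow_add _ _ _
        _ ≤ _ := Nat.mul_le_mul h9 h10
    refine h11.trans ?_
    have hm4 : 4*m + (s+2) ≤ n := by nlinarith
    have a1 : m + s ≤ n := by omega
    have a2 : Q ≤ 6 * n^2 := by
      have : Q ≤ 3*(4*m+(s+2))^2 := by rw [hQ]; nlinarith [sq_nonneg m, sq_nonneg s]
      have : (4*m+(s+2))^2 ≤ n^2 := Nat.pow_le_pow_left hm4 2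
      omega
    calc (m+s)*Q ≤ n * (6*n^2) := Nat.mul_le_mul a1 a2
      _ = _ := by ring
end

section
open Finset

theorem alpha_exists (k : ℕ) (hk : 3 ≤ k) : ∃ α : ℝ, 9/5 < α ∧ α < 2 ∧ α^k*(2-α) = 1 ∧
    ((k:ℝ)+1)*(2-α) ≤ 1 := by
  have hb : ((k:ℝ)+1) < (9/5:ℝ)^k := by
    induction k, hk using Nat.le_induction with
    | base => norm_num
    | succ k hk ih =>
      rw [pow_succ]; push_cast
      have : (3:ℝ) ≤ k := by exact_mod_cast hk
      nlinarith
  have h5 : (5:ℝ) < (9/5:ℝ)^k := by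
    calc (5:ℝ) < (9/5)^3 := by norm_num
      _ ≤ _ := pow_le_pow_right₀ (by norm_num) hk
  have hc : ContinuousOn (fun x : ℝ => x^k*(2-x)) (Set.Icc (9/5) 2) := by fun_prop
  have := intermediate_value_Ioo' (by norm_num : (9/5:ℝ) ≤ 2) hc
  obtain ⟨α, ⟨h1, h2⟩, h3⟩ := this (show (1:ℝ) ∈ _ from ⟨by norm_num, by norm_num; linarith⟩)
  refine ⟨α, h1, h2, h3, ?_⟩
  have h6 : (9/5:ℝ)^k ≤ α^k := pow_le_pow_left₀ (by norm_num) h1.le k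
  simp only at h3
  nlinarith

theorem partR (k n : ℕ) (α : ℝ) (hk : 3 ≤ k) (h1 : 9/5 < α) (h2 : α < 2)
    (hα : α^k*(2-α) = 1) (he : ((k:ℝ)+1)*(2-α) ≤ 1) :
    |α * ((k+1)*α - 2*k) * (lucasL k n : ℝ) - (2*α-1)*(α-1) * α^n| ≤ 20 := by
  set e := 2-α with he'
  have he0 : 0 < e := by rw [he']; linarith
  set a : ℕ → ℝ := fun m => (genLucas k m : ℝ) with ha
  set S : ℕ → ℝ := fun m => ∑ j ∈ range k, α^(k-1-j) * a (m+j) with hS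
  have S1 : ∀ m, S (m+1) = α * S m - α^k * a m + a (m+k) := by
    intro m
    obtain ⟨j, rfl⟩ : ∃ j, k = j+1 := ⟨k-1, by omega⟩
    simp only [hS]
    rw [sum_range_succ, sum_range_succ' (fun i => α^(j+1-1-i) * a (m+i)) j]
    have : ∑ i ∈ range j, α^(j+1-1-i) * a (m+1+i) = α * ∑ i ∈ range j, α^(j+1-1-(i+1)) * a (m+(i+1)) := by
      rw [mul_sum]
      apply sum_congr rfl
      intro i hi
      rw [mem_range] at hi
      rw [show j+1-1-i = (j+1-1-(i+1))+1 by omega, pow_succ, show m+1+i = m+(i+1) by ring]; ring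
    rw [this, show m+1+j = m+(j+1) by ring]
    simp only [Nat.add_sub_cancel, Nat.sub_self, pow_zero, add_zero, Nat.sub_zero]
    ring
  have S0 : S 0 = 2*α+1 := by
    obtain ⟨j, rfl⟩ : ∃ j, k = j+2 := ⟨k-2, by omega⟩
    simp only [hS, ha]
    rw [sum_range_succ, sum_range_succ, sum_eq_zero]
    · have g1 := gl_a (j+2)
      have g2 := gl_b (j+2) (by omega)
      simp only [show j+2-2=j by omega, show j+2-1=j+1 by omega] at g1 g2
      simp [g1, g2]; ring
    · intro i hi
      rw [mem_range] at hi
      rw [zero_add, gl_lt _ _ (by omega)]; simp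
  set v := (2*α-1)*(α-1) with hv
  have W : ∀ m, a (m+k) - e * S m = v * α^m := by
    intro m
    induction m with
    | zero => 
      rw [S0, zero_add]; simp only [ha]; rw [gl_k k (by omega)]; rw [hv, he']; push_cast; ring
    | succ m ih =>
      rw [S1]
      have : a (m+1+k) = 2 * a (m+k) - a m := by
        simp only [ha]; rw [show m+1+k=m+k+1 by ring, gl_rec k m (by omega)]; push_cast; ring
      rw [this, pow_succ, ← mul_assoc, ← ih, he']
      rw [he'] at hα
      linear_combination a m * hα
  set D := ((k:ℝ)+1)*α - 2*k with hD
  have hD1 : 1 ≤ D := by rw [hD]; rw [he'] at he; linarith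
  have hD2 : D ≤ 2 := by
    have : D = 2 - ((k:ℝ)+1)*e := by rw [hD, he']; ring
    rw [this]
    have : 0 ≤ ((k:ℝ)+1)*e := by positivity
    linarith
  have hα0 : 0 < α := by linarith
  set φ := v / (α^(k-1)*D) with hφ
  have hφ' : φ * (α^(k-1)*D) = v := by rw [hφ]; field_simp
  have hv0 : 0 ≤ v := by rw [hv]; apply mul_nonneg <;> linarith
  have hv3 : v ≤ 3 := by rw [hv]; nlinarith
  have hφ0 : 0 ≤ φ := by rw [hφ]; positivity
  have E : ∀ m, |a m - φ * α^m| ≤ 3 := by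
    intro m
    induction m using Nat.strong_induction_on with
    | _ m ih =>
    rcases Nat.lt_or_ge m k with h | h
    · have b1 : φ * α^m ≤ 3 := by
        have : φ * α^m ≤ φ * (α^(k-1) * D) := by
          apply mul_le_mul_of_nonneg_left _ hφ0
          calc α^m ≤ α^(k-1) := pow_le_pow_right₀ (by linarith) (by omega)
            _ ≤ _ := le_mul_of_one_le_right (by positivity) hD1
        linarith
      have b2 : 0 ≤ φ * α^m := by positivity
      have b3 : 0 ≤ a m ∧ a m ≤ 2 := by
        simp only [ha]
        rcases Nat.lt_trichotomy m (k-2) with h' | h' | h'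
        · rw [gl_lt _ _ h']; simp
        · rw [h', gl_a]; simp
        · rw [show m = k-1 by omega, gl_b _ (by omega)]; norm_num
      rw [abs_le]; constructor <;> linarith [b3.1, b3.2]
    · obtain ⟨m', rfl⟩ : ∃ m', m = m' + k := ⟨m-k, by omega⟩
      have c1 : a (m'+k) - φ * α^(m'+k) = ∑ j ∈ range k, e * α^(k-1-j) * (a (m'+j) - φ * α^(m'+j)) := by
        have c2 : ∑ j ∈ range k, e * α^(k-1-j) * (a (m'+j) - φ * α^(m'+j)) =
            e * S m' - ∑ j ∈ range k, e * φ * α^(m'+(k-1)) := by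
          simp only [hS]
          rw [mul_sum, ← sum_sub_distrib]
          apply sum_congr rfl
          intro j hj
          rw [mem_range] at hj
          have : α^(m'+(k-1)) = α^(k-1-j) * α^(m'+j) := by rw [← pow_add]; congr 1; omega
          rw [this]; ring
        rw [c2]
        have w := W m'
        rw [sum_const, card_range, nsmul_eq_mul]
        have p1 : α^(m'+k) = α^m' * α^(k-1) * α := by
          rw [← pow_add, ← pow_succ]; congr 1; omega
        rw [p1, pow_add]
        rw [← hφ', hD] at w
        rw [he'] at *
        linear_combination w
      rw [c1]
      have c3 : ∑ j ∈ range k, e * α^(k-1-j) = 1 := by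
        rw [← mul_sum, Finset.sum_range_reflect (fun i => α^i) k]
        have g := geom_sum_mul α k
        have : (e * ∑ i ∈ range k, α^i) * (α-1) = 1 * (α-1) := by
          rw [mul_assoc, g]; linear_combination hα
        exact mul_right_cancel₀ (by linarith) this
      calc _ ≤ ∑ j ∈ range k, |e * α^(k-1-j) * (a (m'+j) - φ * α^(m'+j))| := abs_sum_le_sum_abs _ _
        _ ≤ ∑ j ∈ range k, e * α^(k-1-j) * 3 := by
          apply sum_le_sum
          intro j hj
          rw [mem_range] at hj
          rw [abs_mul, abs_of_nonneg (by positivity : 0 ≤ e * α^(k-1-j))]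
          exact mul_le_mul_of_nonneg_left (ih _ (by omega)) (by positivity)
        _ = 3 := by rw [← sum_mul, c3, one_mul]
  have hE := E (n+k-2)
  have eq : α * D * (lucasL k n : ℝ) - v * α^n = α * D * (a (n+k-2) - φ * α^(n+k-2)) := by
    have : α^(n+k-2) * α = α^n * α^(k-1) := by rw [← pow_succ, ← pow_add]; congr 1; omega
    simp only [lucasL, ha]
    linear_combination D * φ * this + α^n * hφ'
  rw [eq, abs_mul, abs_of_nonneg (by positivity : 0 ≤ α * D)]
  have : α * D ≤ 4 := by nlinarith
  calc α * D * _ ≤ 4 * 3 := mul_le_mul this hE (abs_nonneg _) (by norm_num)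
    _ ≤ 20 := by norm_num
end

section

/-- jets -/
noncomputable def jet (j : ℕ) (f : ℂ → ℂ) (z : ℂ) : ℂ := iteratedDeriv j f z / (j.factorial : ℂ)

lemma dslope_entire {f : ℂ → ℂ} (hf : Differentiable ℂ f) (a : ℂ) : Differentiable ℂ (dslope f a) := by
  have := (Complex.differentiableOn_dslope (f := f) (c := a) (s := Set.univ) Filter.univ_mem).2
    hf.differentiableOn
  exact differentiableOn_univ.1 this

lemma iter_mul_sub {f g : ℂ → ℂ} (hg : Differentiable ℂ g) (a : ℂ) (c : ℂ)
    (hfg : ∀ z, f z = c + (z - a) * g z) (j : ℕ) :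
    ∀ z, iteratedDeriv (j+1) f z = (z - a) * iteratedDeriv (j+1) g z + (j+1) * iteratedDeriv j g z := by
  have hgj : ∀ i, Differentiable ℂ (iteratedDeriv i g) := by
    intro i
    exact (hg.contDiff (n := (⊤ : ℕ∞))).differentiable_iteratedDeriv i (by exact_mod_cast WithTop.coe_lt_top _)
  induction j with
  | zero =>
    intro z
    have h1 : f = fun z => c + (z - a) * g z := funext hfg
    simp only [zero_add, iteratedDeriv_one, iteratedDeriv_zero, Nat.cast_zero, one_mul]
    rw [h1]
    have h2 : HasDerivAt (fun z => c + (z - a) * g z) (1 * g z + (z - a) * deriv g z) z :=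
      (((hasDerivAt_id z).sub_const a).mul (hg z).hasDerivAt).const_add c
    rw [h2.deriv]; ring
  | succ j ih =>
    intro z
    rw [iteratedDeriv_succ (n := j+1), funext ih]
    have h2 : HasDerivAt (fun z => (z - a) * iteratedDeriv (j+1) g z + ((j:ℂ)+1) * iteratedDeriv j g z)
        ((1 * iteratedDeriv (j+1) g z + (z-a) * deriv (iteratedDeriv (j+1) g) z) +
          ((j:ℂ)+1) * deriv (iteratedDeriv j g) z) z := by
      refine HasDerivAt.add ?_ ?_
      · exact ((hasDerivAt_id z).sub_const a).mul (hgj _ z).hasDerivAt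
      · exact (hgj _ z).hasDerivAt.const_mul _
    rw [h2.deriv, ← iteratedDeriv_succ, ← iteratedDeriv_succ]
    push_cast; ring

lemma jet_rel {f g : ℂ → ℂ} (hg : Differentiable ℂ g) (a : ℂ) (c : ℂ)
    (hfg : ∀ z, f z = c + (z - a) * g z) (j : ℕ) (z : ℂ) :
    jet (j+1) f z = (z - a) * jet (j+1) g z + jet j g z := by
  unfold jet
  rw [iter_mul_sub hg a c hfg]
  have h : ((j+1).factorial : ℂ) = (j+1) * (j.factorial : ℂ) := by
    rw [Nat.factorial_succ]; push_cast; ring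
  have h0 : (j.factorial : ℂ) ≠ 0 := by exact_mod_cast j.factorial_ne_zero
  have h1 : ((j:ℂ)+1) ≠ 0 := by exact_mod_cast j.succ_ne_zero
  rw [h]; field_simp

lemma lemmaX (R s : ℕ) (ρ R' : ℝ) (hRR : (R:ℝ) ≤ R') (hρ : R' < ρ) :
    ∀ (N : ℕ) (f : ℂ → ℂ) (δ M : ℝ) (μ : ℕ → ℕ), Differentiable ℂ f → 0 ≤ δ →
    (∑ z ∈ Finset.range R, μ z = N) → (∀ z, μ z ≤ s) →
    (∀ w : ℂ, ‖w‖ ≤ ρ → ‖f w‖ ≤ M) →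
    (∀ z < R, ∀ j < μ z, ‖jet j f z‖ ≤ δ) →
    ∀ w : ℂ, ‖w‖ ≤ R' → ‖f w‖ ≤ δ * ∑ i ∈ Finset.range N, (2*R'*(s+1))^i + M * (4*R'/(ρ-R))^N := by
  intro N
  induction N with
  | zero =>
    intro f δ M μ hf hδ hN hs hM hj w hw
    simpa using hM w (hw.trans hρ.le)
  | succ N ih =>
    intro f δ M μ hf hδ hN hs hM hj w hw
    have hR0 : (0:ℝ) ≤ R := Nat.cast_nonneg R
    have hρR : 0 < ρ - R := by linarith
    have hM0 : 0 ≤ M := (norm_nonneg _).trans (hM 0 (by simp; linarith))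
    obtain ⟨a, haR, ha⟩ : ∃ a, a < R ∧ 0 < μ a := by
      by_contra! h
      have : ∑ z ∈ Finset.range R, μ z = 0 :=
        Finset.sum_eq_zero fun z hz => by
          have := h z (Finset.mem_range.1 hz); omega
      omega
    set g := dslope f (a:ℂ) with hg
    have hgd : Differentiable ℂ g := dslope_entire hf _
    have hfg : ∀ z, f z = f a + (z - a) * g z := by
      intro z
      have := sub_smul_dslope f (a:ℂ) z
      rw [smul_eq_mul] at this
      rw [hg, this]; ring
    have hfa : ‖f a‖ ≤ δ := by
      have := hj a haR 0 ha
      simpa [jet] using this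
    have haR' : (a:ℝ) ≤ R := by exact_mod_cast haR.le
    -- bound on g
    have hgM : ∀ w : ℂ, ‖w‖ ≤ ρ → ‖g w‖ ≤ 2*M/(ρ-R) := by
      intro w hw
      have hfr : ∀ z ∈ frontier (Metric.ball (0:ℂ) ρ), ‖g z‖ ≤ 2*M/(ρ-R) := by
        intro z hz
        have hz' : ‖z‖ = ρ := by
          rw [frontier_ball (0:ℂ) (by linarith : ρ ≠ 0)] at hz
          simpa using hz
        have h1 : ρ - R ≤ ‖z - a‖ := by
          have := norm_sub_norm_le z (a:ℂ)
          rw [hz', Complex.norm_natCast] at this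
          linarith
        have h2 : ‖z - a‖ * ‖g z‖ ≤ 2 * M := by
          rw [← norm_mul]
          have : (z - a) * g z = f z - f a := by rw [hfg z]; ring
          rw [this]
          have ha2 : ‖f a‖ ≤ M := hM a (by rw [Complex.norm_natCast]; linarith)
          have := norm_sub_le (f z) (f a)
          have := hM z hz'.le
          linarith
        rw [le_div_iff₀ hρR]
        nlinarith [norm_nonneg (g z)]
      apply Complex.norm_le_of_forall_mem_frontier_norm_le Metric.isBounded_ball
        (hgd.diffContOnCl) hfr
      rw [closure_ball (0:ℂ) (by linarith : ρ ≠ 0)]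
      simpa using hw
    -- jets of g
    have hjet : ∀ z < R, ∀ j < Function.update μ a (μ a - 1) z, ‖jet j g z‖ ≤ (s+1)*δ := by
      intro z hz j hjz
      by_cases hza : z = a
      · subst hza
        rw [Function.update_self] at hjz
        have := jet_rel hgd (z:ℂ) (f z) hfg j z
        rw [sub_self, zero_mul, zero_add] at this
        rw [← this]
        have := hj z hz (j+1) (by omega)
        have hs0 : (0:ℝ) ≤ s := Nat.cast_nonneg s
        nlinarith
      · rw [Function.update_of_ne hza] at hjz
        have hd : 1 ≤ ‖(z:ℂ) - a‖ := by
          have h1 : (z:ℂ) - a = (((z:ℤ) - (a:ℤ) : ℤ) : ℂ) := by push_cast; ring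
          rw [h1, Complex.norm_intCast]
          have : (1:ℤ) ≤ |(z:ℤ) - a| := Int.one_le_abs (by omega)
          exact_mod_cast this
        have key : ∀ j, j < μ z → ‖jet j g z‖ ≤ (j+2)*δ := by
          intro j
          induction j with
          | zero =>
            intro h0
            have h1 := hj z hz 0 h0
            have h2 : ((z:ℂ) - a) * jet 0 g z = jet 0 f z - f a := by
              simp [jet]; rw [hfg z]; ring
            have h3 : ‖(z:ℂ) - a‖ * ‖jet 0 g z‖ ≤ 2*δ := by
              rw [← norm_mul, h2]
              have := norm_sub_le (jet 0 f z) (f a)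
              linarith
            push_cast
            nlinarith [norm_nonneg (jet 0 g z)]
          | succ j ihj =>
            intro h0
            have h1 := hj z hz (j+1) h0
            have h2 : ((z:ℂ) - a) * jet (j+1) g z = jet (j+1) f z - jet j g z := by
              rw [jet_rel hgd (a:ℂ) (f a) hfg j z]; ring
            have h3 : ‖(z:ℂ) - a‖ * ‖jet (j+1) g z‖ ≤ (j+3)*δ := by
              rw [← norm_mul, h2]
              have := norm_sub_le (jet (j+1) f z) (jet j g z)
              have := ihj (by omega)
              linarith
            push_cast
            nlinarith [norm_nonneg (jet (j+1) g z)]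
        refine (key j hjz).trans ?_
        have : (j:ℝ) + 1 ≤ s := by exact_mod_cast (Nat.succ_le_of_lt hjz).trans (hs z)
        nlinarith
    have hsum : ∑ z ∈ Finset.range R, Function.update μ a (μ a - 1) z = N := by
      have ham : a ∈ Finset.range R := Finset.mem_range.2 haR
      rw [Finset.sum_update_of_mem ham]
      have := Finset.add_sum_erase (Finset.range R) μ ham
      rw [Finset.sdiff_singleton_eq_erase]
      omega
    have hs' : ∀ z, Function.update μ a (μ a - 1) z ≤ s := by
      intro z
      by_cases hza : z = a
      · subst hza; rw [Function.update_self]; have := hs z; omega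
      · rw [Function.update_of_ne hza]; exact hs z
    have hres := ih g ((s+1)*δ) (2*M/(ρ-R)) _ hgd (by positivity) hsum hs' hgM hjet w hw
    have hw2 : ‖w - a‖ ≤ 2*R' := by
      have := norm_sub_le w (a:ℂ)
      rw [Complex.norm_natCast] at this
      linarith
    have hstep : ‖f w‖ ≤ δ + 2*R' * ‖g w‖ := by
      rw [hfg w]
      refine (norm_add_le _ _).trans ?_
      rw [norm_mul]
      gcongr
    refine hstep.trans ?_
    have hR'0 : 0 ≤ R' := by linarith
    calc δ + 2*R'*‖g w‖ ≤ δ + 2*R' * ((s+1)*δ * ∑ i ∈ Finset.range N, (2*R'*(s+1))^i + 2*M/(ρ-R) * (4*R'/(ρ-R))^N) := by gcongr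
      _ = _ := by
        rw [Finset.sum_range_succ', pow_succ (4*R'/(ρ-R))]
        simp only [pow_succ, pow_zero]
        rw [← Finset.sum_mul]
        ring
end

section
open Finset

noncomputable def GG {ι : Type} [Fintype ι] (p x y w : ι → ℝ) (m1 m2 : ℕ) (z : ℂ) : ℂ :=
  ∑ l, ((p l * x l ^ m1 * y l ^ m2 : ℝ) : ℂ) * Complex.exp ((w l : ℂ) * z)

noncomputable def FF {ι : Type} [Fintype ι] (p x y Z : ι → ℝ) (m1 m2 z : ℕ) : ℝ :=
  ∑ l, p l * x l ^ m1 * y l ^ m2 * Z l ^ z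

lemma GG_iter {ι : Type} [Fintype ι] (p x y w : ι → ℝ) (m1 m2 j : ℕ) :
    iteratedDeriv j (GG p x y w m1 m2) =
      fun z => ∑ l, ((p l * x l ^ m1 * y l ^ m2 : ℝ) : ℂ) * ((w l : ℂ)^j * Complex.exp ((w l : ℂ) * z)) := by
  induction j with
  | zero => funext z; simp [GG]
  | succ j ih =>
    rw [iteratedDeriv_succ, ih]
    funext z
    apply HasDerivAt.deriv
    apply HasDerivAt.fun_sum
    intro l _
    apply HasDerivAt.const_mul
    have h1 : HasDerivAt (fun z : ℂ => Complex.exp ((w l : ℂ) * z)) (Complex.exp ((w l : ℂ) * z) * ((w l:ℂ) * 1)) z :=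
      ((hasDerivAt_id z).const_mul (w l : ℂ)).cexp
    have := h1.const_mul ((w l : ℂ)^j)
    convert this using 1
    ring

lemma GG_diff {ι : Type} [Fintype ι] (p x y w : ι → ℝ) (m1 m2 : ℕ) :
    Differentiable ℂ (GG p x y w m1 m2) := by
  unfold GG; fun_prop

lemma GG_iter' {ι : Type} [Fintype ι] (p x y w : ι → ℝ) (a c : ℝ) (hw : ∀ l, w l = x l * a + y l * c)
    (m1 m2 j : ℕ) (z : ℂ) :
    iteratedDeriv j (GG p x y w m1 m2) z =
      ∑ i ∈ range (j+1), ((a^i * c^(j-i) * (j.choose i) : ℝ) : ℂ) * GG p x y w (m1+i) (m2+(j-i)) z := by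
  rw [GG_iter]
  simp only [GG, mul_sum]
  rw [sum_comm]
  refine sum_congr rfl fun l _ => ?_
  rw [hw l]
  push_cast
  rw [add_pow, sum_mul, mul_sum]
  refine sum_congr rfl fun i _ => ?_
  rw [mul_pow, mul_pow, pow_add, pow_add]
  ring

lemma jet_bound {ι : Type} [Fintype ι] (p x y w : ι → ℝ) (a c : ℝ) (hw : ∀ l, w l = x l * a + y l * c)
    (ha : 0 ≤ a) (hc : 0 ≤ c) (hac : a + c ≤ 4) (E : ℝ)
    (m1 m2 j s : ℕ) (hj : j < s) (z : ℂ)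
    (hE : ∀ i ≤ j, ‖GG p x y w (m1+i) (m2+(j-i)) z‖ ≤ E) :
    ‖jet j (GG p x y w m1 m2) z‖ ≤ 4^s * E := by
  have hE0 : 0 ≤ E := (norm_nonneg _).trans (hE 0 (Nat.zero_le _))
  have h1 : ‖iteratedDeriv j (GG p x y w m1 m2) z‖ ≤ 4^s * E := by
    rw [GG_iter' p x y w a c hw]
    refine (norm_sum_le _ _).trans ?_
    have : ∀ i ∈ range (j+1), ‖((a^i * c^(j-i) * (j.choose i) : ℝ) : ℂ) * GG p x y w (m1+i) (m2+(j-i)) z‖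
        ≤ (a^i * c^(j-i) * (j.choose i)) * E := by
      intro i hi
      rw [norm_mul, Complex.norm_real, Real.norm_of_nonneg (by positivity)]
      gcongr
      exact hE i (by have := mem_range.1 hi; omega)
    refine (sum_le_sum this).trans ?_
    rw [← sum_mul, ← add_pow]
    gcongr
    calc (a+c)^j ≤ 4^j := by gcongr
      _ ≤ 4^s := pow_le_pow_right₀ (by norm_num) hj.le
  unfold jet
  rw [norm_div, Complex.norm_natCast]
  refine (div_le_self (norm_nonneg _) ?_).trans h1
  exact_mod_cast Nat.one_le_iff_ne_zero.2 j.factorial_ne_zero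

lemma extrap {ι : Type} [Fintype ι] (p x y w Z : ι → ℝ) (a c : ℝ)
    (hw : ∀ l, w l = x l * a + y l * c)
    (ha : 0 ≤ a) (hc : 0 ≤ c) (hac : a + c ≤ 4) (P X W η : ℝ) (hP : 0 ≤ P) (hX : 1 ≤ X) (hη : 0 ≤ η)
    (hp : ∀ l, |p l| ≤ P) (hx : ∀ l, |x l| ≤ X) (hy : ∀ l, |y l| ≤ X) (hW : ∀ l, |w l| ≤ W) (hW0 : 0 ≤ W)
    (R s S S1 : ℕ) (hR : 1 ≤ R) (hS : S1 ≤ S)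
    (hZ : ∀ l, ∀ z < 2*R, |Real.exp (w l * z) - Z l ^ z| ≤ η)
    (hF : ∀ m1 m2, m1 + m2 < S1 → ∀ z < R, FF p x y Z m1 m2 z = 0)
    (hs1 : 1 ≤ s)
    (m1 m2 : ℕ) (hm : m1 + m2 + s ≤ S1) (z : ℕ) (hz : z < 2*R) :
    |FF p x y Z m1 m2 z| ≤ (Fintype.card ι * P * X^S * η) +
      (4^s * (Fintype.card ι * P * X^S * η)) * ∑ i ∈ range (s*R), (4*R*(s+1) : ℝ)^i
      + (Fintype.card ι * P * X^S * Real.exp (W * (2049*R))) * (1/256)^(s*R) := by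
  set E := Fintype.card ι * P * X^S * η with hE
  have hE0 : 0 ≤ E := by positivity
  have hco : ∀ l, ∀ m1 m2, m1 + m2 ≤ S → |p l * x l ^ m1 * y l ^ m2| ≤ P * X^S := by
    intro l m1 m2 h
    rw [abs_mul, abs_mul, abs_pow, abs_pow, mul_assoc]
    calc |p l| * (|x l|^m1 * |y l|^m2) ≤ P * (X^m1 * X^m2) := by
          gcongr
          · exact hp l
          · exact hx l
          · exact hy l
      _ = P * X^(m1+m2) := by rw [pow_add]
      _ ≤ P * X^S := by gcongr
  have hdiff : ∀ m1 m2, m1 + m2 ≤ S → ∀ z < 2*R, ‖GG p x y w m1 m2 (z:ℂ) - (FF p x y Z m1 m2 z : ℂ)‖ ≤ E := by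
    intro m1 m2 h z hz
    have : GG p x y w m1 m2 (z:ℂ) - (FF p x y Z m1 m2 z : ℂ) =
        ((∑ l, (p l * x l ^ m1 * y l ^ m2) * (Real.exp (w l * z) - Z l ^ z) : ℝ) : ℂ) := by
      unfold GG FF
      push_cast
      rw [← sum_sub_distrib]
      refine sum_congr rfl fun l _ => ?_
      ring
    rw [this, Complex.norm_real, Real.norm_eq_abs]
    refine (abs_sum_le_sum_abs _ _).trans ?_
    calc ∑ l, |(p l * x l ^ m1 * y l ^ m2) * (Real.exp (w l * z) - Z l ^ z)| ≤ ∑ l : ι, P * X^S * η := by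
          refine sum_le_sum fun l _ => ?_
          rw [abs_mul]
          exact mul_le_mul (hco l m1 m2 h) (hZ l z hz) (abs_nonneg _) (by positivity)
      _ = E := by rw [sum_const, card_univ, nsmul_eq_mul, hE]; ring
  have hsm : m1 + m2 ≤ S := by omega
  have hGM : ∀ v : ℂ, ‖v‖ ≤ 2049*R → ‖GG p x y w m1 m2 v‖ ≤ Fintype.card ι * P * X^S * Real.exp (W * (2049*R)) := by
    intro v hv
    unfold GG
    refine (norm_sum_le _ _).trans ?_
    calc _ ≤ ∑ l : ι, P * X^S * Real.exp (W * (2049*R)) := by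
          refine sum_le_sum fun l _ => ?_
          rw [norm_mul, Complex.norm_real, Real.norm_eq_abs]
          refine mul_le_mul (hco l m1 m2 hsm) ?_ (norm_nonneg _) (by positivity)
          rw [Complex.norm_exp]
          apply Real.exp_le_exp.2
          refine (Complex.re_le_norm _).trans ?_
          rw [norm_mul, Complex.norm_real, Real.norm_eq_abs]
          exact mul_le_mul (hW l) hv (norm_nonneg _) hW0
      _ = _ := by rw [sum_const, card_univ, nsmul_eq_mul]; ring
  have hRpos : (1:ℝ) ≤ R := by exact_mod_cast hR
  have hmain := lemmaX R s (2049*R) (2*R) (by linarith) (by linarith) (s*R)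
    (GG p x y w m1 m2) (4^s*E) (Fintype.card ι * P * X^S * Real.exp (W * (2049*R))) (fun _ => s)
    (GG_diff _ _ _ _ _ _) (by positivity) (by simp [mul_comm]) (fun _ => le_rfl) hGM
    (by
      intro z hz j hj
      apply jet_bound p x y w a c hw ha hc hac E m1 m2 j s hj
      intro i hi
      have h1 := hdiff (m1+i) (m2+(j-i)) (by omega) z (by omega)
      rw [hF (m1+i) (m2+(j-i)) (by omega) z hz] at h1
      simpa using h1)
    (z:ℂ) (by rw [Complex.norm_natCast]; exact_mod_cast hz.le)
  have e1 : (2:ℝ)*(2*R)*(s+1) = 4*R*(s+1) := by ring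
  have e2 : (4:ℝ)*(2*R)/(2049*R - R) = 1/256 := by
    have : (R:ℝ) ≠ 0 := by linarith
    field_simp
    ring
  rw [e1, e2] at hmain
  have hd := hdiff m1 m2 hsm z hz
  have : ‖((FF p x y Z m1 m2 z : ℝ):ℂ)‖ ≤ E + ‖GG p x y w m1 m2 (z:ℂ)‖ := by
    have h := norm_sub_le (GG p x y w m1 m2 (z:ℂ)) (GG p x y w m1 m2 (z:ℂ) - (FF p x y Z m1 m2 z : ℂ))
    rw [sub_sub_cancel] at h
    linarith
  rw [Complex.norm_real, Real.norm_eq_abs] at this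
  linarith
end

section
open Polynomial

lemma liouville (h : ℤ[X]) (hm : h.Monic) (k : ℕ) (hk : h.natDegree ≤ k) (α : ℝ) (hα : aeval α h = 0)
    (Q : ℤ[X]) (B : ℝ) (hB1 : 1 ≤ B) (hB : ∀ z : ℂ, aeval z h = 0 → ‖aeval z Q‖ ≤ B)
    (hQ : aeval α Q ≠ 0) : 1 ≤ |aeval α Q| * B ^ k := by
  have hint : IsIntegral ℤ α := ⟨h, hm, by simpa [aeval_def] using hα⟩
  have hintQ : IsIntegral ℚ α := hint.tower_top
  let K := IntermediateField.adjoin ℚ {α}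
  have : FiniteDimensional ℚ K := IntermediateField.adjoin.finiteDimensional hintQ
  let g : K := IntermediateField.AdjoinSimple.gen ℚ α
  have hg : algebraMap K ℝ g = α := IntermediateField.AdjoinSimple.algebraMap_gen ℚ α
  let ξ : K := aeval g Q
  have hξ : algebraMap K ℝ ξ = aeval α Q := by
    rw [← hg, aeval_algebraMap_apply]
  have hξ0 : ξ ≠ 0 := by
    intro h0; apply hQ; rw [← hξ, h0, map_zero]
  have hgh : aeval g h = 0 := by
    apply (algebraMap K ℝ).injective
    rw [← aeval_algebraMap_apply, hg, hα, map_zero]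
  have hgint : IsIntegral ℤ g := ⟨h, hm, by simpa [aeval_def] using hgh⟩
  have hξint : IsIntegral ℤ ξ := by
    have h1 : ((aeval (⟨g, hgint⟩ : integralClosure ℤ K) Q : integralClosure ℤ K) : K) = ξ :=
      (aeval_algebraMap_apply K (⟨g, hgint⟩ : integralClosure ℤ K) Q).symm
    rw [← h1]
    exact (aeval (⟨g, hgint⟩ : integralClosure ℤ K) Q).2
  have hnint : IsIntegral ℤ (Algebra.norm ℚ ξ) := Algebra.isIntegral_norm ℚ hξint
  obtain ⟨N, hN⟩ := IsIntegrallyClosed.isIntegral_iff.1 hnint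
  have hN0 : N ≠ 0 := by
    rintro rfl
    rw [map_zero] at hN
    exact hξ0 (Algebra.norm_eq_zero_iff.1 hN.symm)
  have hprod := Algebra.norm_eq_prod_embeddings ℚ ℂ ξ
  rw [← hN] at hprod
  have hnorm : (1:ℝ) ≤ ∏ σ : K →ₐ[ℚ] ℂ, ‖σ ξ‖ := by
    rw [← norm_prod, ← hprod]
    simp only [eq_intCast, map_intCast, Complex.norm_intCast]
    exact_mod_cast Int.one_le_abs hN0
  have hcard : Fintype.card (K →ₐ[ℚ] ℂ) ≤ k := by
    rw [AlgHom.card]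
    rw [IntermediateField.adjoin.finrank hintQ]
    have hd : minpoly ℚ α ∣ h.map (algebraMap ℤ ℚ) := by
      apply minpoly.dvd
      rw [aeval_map_algebraMap]; exact hα
    refine (natDegree_le_of_dvd hd (hm.map _).ne_zero).trans ?_
    rw [hm.natDegree_map]; exact hk
  let σ0 : K →ₐ[ℚ] ℂ := (Complex.ofRealAm.restrictScalars ℚ).comp K.val
  have hσ0 : ‖σ0 ξ‖ = |aeval α Q| := by
    have : σ0 ξ = ((algebraMap K ℝ ξ : ℝ) : ℂ) := rfl
    rw [this, hξ, Complex.norm_real, Real.norm_eq_abs]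
  have hle : ∏ σ : K →ₐ[ℚ] ℂ, ‖σ ξ‖ ≤ |aeval α Q| * B^k := by
    classical
    rw [← Finset.mul_prod_erase _ _ (Finset.mem_univ σ0), hσ0]
    apply mul_le_mul_of_nonneg_left _ (abs_nonneg _)
    calc ∏ σ ∈ Finset.univ.erase σ0, ‖σ ξ‖ ≤ ∏ σ ∈ Finset.univ.erase σ0, B := by
          apply Finset.prod_le_prod (fun _ _ => norm_nonneg _)
          intro σ _
          have h1 : σ ξ = aeval (σ g) Q := by
            have := (Polynomial.aeval_algHom_apply (σ.restrictScalars ℤ) g Q)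
            simpa using this.symm
          rw [h1]
          apply hB
          have := (Polynomial.aeval_algHom_apply (σ.restrictScalars ℤ) g h)
          rw [hgh, map_zero] at this
          simpa using this
      _ = B ^ (Finset.univ.erase σ0).card := by rw [Finset.prod_const]
      _ ≤ B ^ k := by
          apply pow_le_pow_right₀ hB1
          exact (Finset.card_erase_le).trans hcard
  exact hnorm.trans hle
end

section
open Finset

def Red (k : ℕ) (α ξ : ℝ) (B : ℤ) : Prop :=
  ∃ c : ℕ → ℤ, (∀ i, |c i| ≤ B) ∧ ξ = ∑ i ∈ range k, (c i : ℝ) * α ^ i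

lemma Red.one {k : ℕ} (hk : 1 ≤ k) (α : ℝ) : Red k α 1 1 := by
  refine ⟨fun i => if i = 0 then 1 else 0, ?_, ?_⟩
  · intro i; dsimp only; split_ifs <;> simp
  · rw [sum_eq_single 0]
    · simp
    · intro b _ hb; simp [hb]
    · intro h; exact absurd (mem_range.2 hk) h

lemma Red.add {k : ℕ} {α ξ η : ℝ} {A B : ℤ} (h1 : Red k α ξ A) (h2 : Red k α η B) :
    Red k α (ξ + η) (A + B) := by
  obtain ⟨c, hc, rfl⟩ := h1
  obtain ⟨e, he, rfl⟩ := h2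
  refine ⟨fun i => c i + e i, fun i => (abs_add_le _ _).trans (add_le_add (hc i) (he i)), ?_⟩
  rw [← sum_add_distrib]
  refine sum_congr rfl fun i _ => ?_
  push_cast; ring

lemma Red.smul {k : ℕ} {α ξ : ℝ} {A : ℤ} (h1 : Red k α ξ A) (m : ℤ) :
    Red k α (m * ξ) (|m| * A) := by
  obtain ⟨c, hc, rfl⟩ := h1
  refine ⟨fun i => m * c i, fun i => ?_, ?_⟩
  · rw [abs_mul]; exact mul_le_mul_of_nonneg_left (hc i) (abs_nonneg _)
  · rw [mul_sum]
    refine sum_congr rfl fun i _ => ?_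
    push_cast; ring

lemma Red.mono {k : ℕ} {α ξ : ℝ} {A B : ℤ} (h1 : Red k α ξ A) (h : A ≤ B) : Red k α ξ B := by
  obtain ⟨c, hc, rfl⟩ := h1
  exact ⟨c, fun i => (hc i).trans h, rfl⟩

lemma Red.nonneg {k : ℕ} {α ξ : ℝ} {A : ℤ} (h1 : Red k α ξ A) : 0 ≤ A := by
  obtain ⟨c, hc, rfl⟩ := h1
  exact (abs_nonneg _).trans (hc 0)

lemma Red.mulα {k : ℕ} (hk : 1 ≤ k) {α ξ : ℝ} (hα : α ^ k = ∑ i ∈ range k, α ^ i) {A : ℤ}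
    (h1 : Red k α ξ A) : Red k α (α * ξ) (2 * A) := by
  have hA := h1.nonneg
  obtain ⟨c, hc, rfl⟩ := h1
  obtain ⟨k, rfl⟩ : ∃ j, k = j + 1 := ⟨k - 1, by omega⟩
  refine ⟨fun i => (if i = 0 then 0 else c (i-1)) + c k, fun i => ?_, ?_⟩
  · refine (abs_add_le _ _).trans ?_
    have := hc k
    split_ifs
    · simp; linarith
    · have := hc (i-1); linarith
  · have e1 : ∑ i ∈ range (k+1), (((if i = 0 then 0 else c (i-1)) + c k : ℤ) : ℝ) * α ^ i
      = ∑ i ∈ range (k+1), (((if i = 0 then 0 else c (i-1)) : ℤ) : ℝ) * α^i + c k * α^(k+1) := by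
      rw [hα, mul_sum, ← sum_add_distrib]
      refine sum_congr rfl fun i _ => ?_
      push_cast; ring
    rw [e1, sum_range_succ, sum_range_succ' (fun i => (((if i = 0 then 0 else c (i-1)) : ℤ) : ℝ) * α^i)]
    simp only [Nat.succ_ne_zero, if_false, Nat.add_sub_cancel, if_true]
    rw [mul_add, mul_sum]
    have : ∑ i ∈ range k, α * ((c i : ℝ) * α^i) = ∑ i ∈ range k, (c i : ℝ) * α^(i+1) :=
      sum_congr rfl fun i _ => by ring
    rw [this]; push_cast; ring

lemma Red.mul_pow {k : ℕ} {α ω : ℝ} {U : ℤ} (hω : ∀ ξ A, Red k α ξ A → Red k α (ω * ξ) (U * A))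
    {ξ : ℝ} {A : ℤ} (h : Red k α ξ A) (m : ℕ) : Red k α (ω ^ m * ξ) (U ^ m * A) := by
  induction m with
  | zero => simpa using h
  | succ m ih =>
    have := hω _ _ ih
    rw [pow_succ', pow_succ', mul_assoc, mul_assoc]; exact this

lemma siegel {ι κ : Type} [Fintype ι] [Fintype κ] {k : ℕ} (hk : 1 ≤ k) (α : ℝ) (μ : κ → ι → ℝ) (A : ℤ)
    (hA : 1 ≤ A) (h : ∀ e l, Red k α (μ e l) A) (hκ : 0 < Fintype.card κ)
    (hcard : 2 * (Fintype.card κ * k) ≤ Fintype.card ι) :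
    ∃ p : ι → ℤ, p ≠ 0 ∧ (∀ l, |p l| ≤ Fintype.card ι * A) ∧ ∀ e, ∑ l, (p l : ℝ) * μ e l = 0 := by
  classical
  let _ : SeminormedAddCommGroup (Matrix (κ × Fin k) ι ℤ) := Matrix.seminormedAddCommGroup
  choose c hc hμ using h
  let M : Matrix (κ × Fin k) ι ℤ := fun e l => c e.1 l e.2
  have hpos : 0 < Fintype.card κ * k := Nat.mul_pos hκ hk
  have hc1 : Fintype.card (κ × Fin k) = Fintype.card κ * k := by simp
  obtain ⟨t, ht0, ht, htn⟩ := Int.Matrix.exists_ne_zero_int_vec_norm_le M (by rw [hc1]; omega) (by rw [hc1]; omega)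
  refine ⟨t, ht0, ?_, ?_⟩
  · intro l
    have h1 : ‖M‖ ≤ A := by
      rw [Matrix.norm_le_iff (by exact_mod_cast (by linarith : (0:ℤ) ≤ A))]
      intro e l
      rw [Int.norm_eq_abs]
      exact_mod_cast hc _ _ _
    have hA1 : (1:ℝ) ≤ A := by exact_mod_cast hA
    have h2 : ‖t‖ ≤ Fintype.card ι * A := by
      refine htn.trans ?_
      have hb : (1:ℝ) ≤ Fintype.card ι * max 1 ‖M‖ := by
        have : (1:ℝ) ≤ Fintype.card ι := by exact_mod_cast (by omega : 1 ≤ Fintype.card ι)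
        nlinarith [le_max_left 1 ‖M‖]
      refine (Real.rpow_le_rpow_of_exponent_le hb (z := 1) ?_).trans ?_
      · rw [hc1]
        have : (2:ℝ) * ((Fintype.card κ * k : ℕ):ℝ) ≤ Fintype.card ι := by exact_mod_cast hcard
        have hp' : (0:ℝ) < ((Fintype.card κ * k : ℕ):ℝ) := by exact_mod_cast hpos
        rw [div_le_one (by linarith)]
        linarith
      · rw [Real.rpow_one]
        gcongr
        exact max_le hA1 h1
    have h3 := (norm_le_pi_norm t l).trans h2
    rw [Int.norm_eq_abs] at h3
    exact_mod_cast h3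
  · intro e
    have h1 : ∀ i : Fin k, ∑ l, (c e l i : ℝ) * t l = 0 := by
      intro i
      have := congrFun ht (e, i)
      simp only [Matrix.mulVec, dotProduct, M, Pi.zero_apply] at this
      exact_mod_cast this
    have : ∑ l, (t l : ℝ) * μ e l = ∑ i : Fin k, (∑ l, (c e l i : ℝ) * t l) * α ^ (i:ℕ) := by
      simp only [sum_mul]
      rw [sum_comm]
      refine sum_congr rfl fun l _ => ?_
      rw [hμ e l, Finset.sum_range, mul_sum]
      refine sum_congr rfl fun i _ => ?_
      ring
    rw [this]
    exact sum_eq_zero fun i _ => by rw [h1 i, zero_mul]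
end

section
open Finset Polynomial

lemma poly_kill {ι : Type} [Fintype ι] (p x Z : ι → ℝ) (M T : ℕ)
    (h : ∀ m < M, ∀ z < T, ∑ l, p l * x l ^ m * Z l ^ z = 0) (A B : ℝ[X])
    (hB : B.natDegree < M) (hA : A.natDegree < T) :
    ∑ l, p l * B.eval (x l) * A.eval (Z l) = 0 := by
  have : ∀ l, p l * B.eval (x l) * A.eval (Z l) =
      ∑ m ∈ range M, ∑ z ∈ range T, B.coeff m * A.coeff z * (p l * x l ^ m * Z l ^ z) := by
    intro l
    rw [eval_eq_sum_range' hB, eval_eq_sum_range' hA, mul_assoc, sum_mul_sum, mul_sum]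
    refine sum_congr rfl fun m _ => ?_
    rw [mul_sum]
    refine sum_congr rfl fun z _ => ?_
    ring
  simp only [this]
  rw [sum_comm]
  refine sum_eq_zero fun m hm => ?_
  rw [sum_comm]
  refine sum_eq_zero fun z hz => ?_
  rw [← mul_sum, h m (mem_range.1 hm) z (mem_range.1 hz), mul_zero]

lemma vand {ι : Type} [Fintype ι] [DecidableEq ι] (p x Z : ι → ℝ) (M : ℕ)
    (h : ∀ m < M, ∀ z < Fintype.card ι, ∑ l, p l * x l ^ m * Z l ^ z = 0)
    (hcl : ∀ l, (univ.filter fun l' => Z l' = Z l).card ≤ M)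
    (hinj : ∀ l l', Z l = Z l' → x l = x l' → l = l') (l : ι) : p l = 0 := by
  classical
  let A : ℝ[X] := ∏ ζ ∈ (univ.image Z).erase (Z l), (X - C ζ)
  let B : ℝ[X] := ∏ l' ∈ (univ.filter fun l' => Z l' = Z l).erase l, (X - C (x l'))
  have hA : A.natDegree < Fintype.card ι := by
    rw [natDegree_prod_of_monic _ _ (fun _ _ => monic_X_sub_C _)]
    simp only [natDegree_X_sub_C, sum_const, smul_eq_mul, mul_one]
    have h1 : Z l ∈ univ.image Z := mem_image_of_mem _ (mem_univ l)
    rw [card_erase_of_mem h1]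
    have h2 : (univ.image Z).card ≤ Fintype.card ι := card_image_le
    have : 0 < (univ.image Z).card := card_pos.2 ⟨_, h1⟩
    omega
  have hB : B.natDegree < M := by
    rw [natDegree_prod_of_monic _ _ (fun _ _ => monic_X_sub_C _)]
    simp only [natDegree_X_sub_C, sum_const, smul_eq_mul, mul_one]
    have h1 : l ∈ univ.filter fun l' => Z l' = Z l := by simp
    rw [card_erase_of_mem h1]
    have := hcl l
    have : 0 < (univ.filter fun l' => Z l' = Z l).card := card_pos.2 ⟨_, h1⟩
    omega
  have hs := poly_kill p x Z M _ h A B hB hA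
  rw [sum_eq_single l] at hs
  · have hA0 : A.eval (Z l) ≠ 0 := by
      rw [eval_prod]
      refine prod_ne_zero_iff.2 fun ζ hζ => ?_
      simp only [eval_sub, eval_X, eval_C]
      exact sub_ne_zero.2 (ne_of_mem_erase hζ).symm
    have hB0 : B.eval (x l) ≠ 0 := by
      rw [eval_prod]
      refine prod_ne_zero_iff.2 fun l' hl' => ?_
      simp only [eval_sub, eval_X, eval_C]
      refine sub_ne_zero.2 fun hx => ?_
      have h1 := mem_erase.1 hl'
      exact h1.1 (hinj _ _ (mem_filter.1 h1.2).2 hx.symm)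
    rcases mul_eq_zero.1 hs with h1 | h1
    · rcases mul_eq_zero.1 h1 with h2 | h2
      · exact h2
      · exact absurd h2 hB0
    · exact absurd h1 hA0
  · intro l' _ hne
    by_cases hZ : Z l' = Z l
    · have : B.eval (x l') = 0 := by
        rw [eval_prod]
        refine prod_eq_zero (mem_erase.2 ⟨hne, mem_filter.2 ⟨mem_univ _, hZ⟩⟩) ?_
        simp
      rw [this]; ring
    · have : A.eval (Z l') = 0 := by
        rw [eval_prod]
        refine prod_eq_zero (mem_erase.2 ⟨hZ, mem_image_of_mem _ (mem_univ l')⟩) ?_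
        simp
      rw [this]; ring
  · intro h; exact absurd (mem_univ l) h
end

section
open Finset

abbrev Ix (L : ℕ) : Type := Fin (L+1) × Fin (L+1) × Fin (L+1)

def xx {L : ℕ} (n : ℕ) (l : Ix L) : ℤ := l.1 + l.2.2 * n
def yy {L : ℕ} (d : ℕ) (l : Ix L) : ℤ := l.2.1 - l.2.2 * d
noncomputable def Zr {L : ℕ} (α γ : ℝ) (l : Ix L) : ℝ := α ^ (l.1:ℕ) * 10 ^ (l.2.1:ℕ) * γ ^ (l.2.2:ℕ)

section polys
open Polynomial

noncomputable def hp (k : ℕ) : ℤ[X] := X ^ k - ∑ i ∈ range k, X ^ i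
noncomputable def up (k : ℕ) (b : ℤ) : ℤ[X] := C b * X * (C ((k:ℤ)+1) * X - C (2*(k:ℤ)))
noncomputable def vp : ℤ[X] := (C 2 * X - C 1) * (X - C 1)

lemma hp_deg_aux (k : ℕ) : (∑ i ∈ range k, X ^ i : ℤ[X]).degree < k := by
  rw [degree_lt_iff_coeff_zero]
  intro m hm
  rw [finsetSum_coeff]
  refine sum_eq_zero fun i hi => ?_
  rw [coeff_X_pow, if_neg]
  have := mem_range.1 hi; omega

lemma hp_monic (k : ℕ) : (hp k).Monic := monic_X_pow_sub (hp_deg_aux k)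

lemma hp_natDegree (k : ℕ) : (hp k).natDegree ≤ k := by
  unfold hp
  rw [natDegree_le_iff_degree_le]
  refine (degree_sub_le _ _).trans (max_le (degree_X_pow_le _) (hp_deg_aux k).le)

lemma hp_root {k : ℕ} {z : ℂ} (hz : aeval z (hp k) = 0) : ‖z‖ ≤ 2 := by
  by_contra! h
  have h1 : z ^ k = ∑ i ∈ range k, z ^ i := by
    simpa [hp, sub_eq_zero] using hz
  have h2 : ‖z‖ ^ k ≤ ∑ i ∈ range k, ‖z‖ ^ i := by
    rw [← norm_pow, h1]
    refine (norm_sum_le _ _).trans ?_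
    simp
  have h3 := geom_sum_mul ‖z‖ k
  have h4 : 0 < ‖z‖ ^ k := by positivity
  have h5 : 0 ≤ ∑ i ∈ range k, ‖z‖ ^ i := by positivity
  nlinarith

noncomputable def Tp {L : ℕ} (k n d : ℕ) (b : ℤ) (p : Ix L → ℤ) (m1 m2 z : ℕ) : ℤ[X] :=
  ∑ l : Ix L, C (p l * xx n l ^ m1 * yy d l ^ m2) * (X ^ ((l.1:ℕ) * z) * (C 10 ^ ((l.2.1:ℕ) * z) *
    (up k b ^ ((l.2.2:ℕ) * z) * vp ^ ((L - (l.2.2:ℕ)) * z))))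

lemma Tp_eval {L : ℕ} (k n d : ℕ) (b : ℤ) (p : Ix L → ℤ) (m1 m2 z : ℕ) (α u v : ℝ)
    (hu : u = b * α * ((k+1) * α - 2 * k)) (hv : v = (2*α-1)*(α-1)) (hv0 : v ≠ 0) :
    aeval α (Tp k n d b p m1 m2 z) =
      v ^ (L*z) * FF (fun l => (p l : ℝ)) (fun l => (xx n l : ℝ)) (fun l => (yy d l : ℝ)) (Zr α (u/v)) m1 m2 z := by
  have e1 : aeval α (up k b) = u := by
    simp only [up, map_mul, map_sub, aeval_X, aeval_C, algebraMap_int_eq, Int.coe_castRingHom, hu]; push_cast; ring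
  have e2 : aeval α vp = v := by
    simp only [vp, map_mul, map_sub, aeval_X, aeval_C, algebraMap_int_eq, Int.coe_castRingHom, hv]; push_cast; ring
  unfold Tp FF Zr
  rw [map_sum, mul_sum]
  refine sum_congr rfl fun l _ => ?_
  have hl : (l.2.2:ℕ) ≤ L := by omega
  have e3 : v ^ (L*z) = v ^ ((l.2.2:ℕ) * z) * v ^ ((L - (l.2.2:ℕ)) * z) := by
    rw [← pow_add, ← add_mul, Nat.add_sub_cancel' hl]
  have h10 : aeval α (C (10:ℤ)) = (10:ℝ) := by rw [aeval_C]; simp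
  simp only [map_mul, map_pow, e1, e2, aeval_X, h10]
  have hc : aeval α (C (p l * xx n l ^ m1 * yy d l ^ m2)) = ((p l : ℝ) * (xx n l:ℝ)^m1 * (yy d l : ℝ)^m2) := by
    simp
  simp only [← map_pow, ← map_mul] at *
  rw [hc, e3, mul_pow, mul_pow, ← pow_mul, ← pow_mul, ← pow_mul, div_pow]
  field_simp

lemma up_bound {k : ℕ} (hk : 3 ≤ k) {b : ℤ} (hb : 1 ≤ b) (hb9 : b ≤ 9) {z : ℂ} (hz : ‖z‖ ≤ 2) :
    ‖aeval z (up k b)‖ ≤ 108 * k := by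
  have hk' : (3:ℝ) ≤ k := by exact_mod_cast hk
  have : aeval z (up k b) = b * z * ((k+1) * z - 2 * k) := by
    simp only [up, map_mul, map_sub, aeval_X, aeval_C, algebraMap_int_eq, Int.coe_castRingHom]; push_cast; ring
  rw [this, norm_mul, norm_mul, Complex.norm_intCast]
  have hb' : |(b:ℝ)| ≤ 9 := by
    rw [abs_of_nonneg (by exact_mod_cast (by linarith : (0:ℤ) ≤ b))]; exact_mod_cast hb9
  have h2 : ‖((k:ℂ)+1) * z - 2 * k‖ ≤ 4*k+2 := by
    refine (norm_sub_le _ _).trans ?_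
    rw [norm_mul, norm_mul]
    have : ‖(k:ℂ)+1‖ = k+1 := by
      have := Complex.norm_natCast (k+1); push_cast at this; exact this
    rw [this]
    simp only [Complex.norm_ofNat, Complex.norm_natCast]
    nlinarith
  calc |(b:ℝ)| * ‖z‖ * ‖((k:ℂ)+1) * z - 2 * k‖ ≤ 9 * 2 * (4*k+2) := by gcongr
    _ ≤ _ := by linarith

lemma vp_bound {z : ℂ} (hz : ‖z‖ ≤ 2) : ‖aeval z vp‖ ≤ 15 := by
  have : aeval z vp = (2 * z - 1) * (z - 1) := by
    simp only [vp, map_mul, map_sub, aeval_X, aeval_C, algebraMap_int_eq, Int.coe_castRingHom]; push_cast; ring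
  rw [this, norm_mul]
  have h1 : ‖2 * z - 1‖ ≤ 5 := by
    refine (norm_sub_le _ _).trans ?_
    rw [norm_mul]; simp; linarith
  have h2 : ‖z - 1‖ ≤ 3 := by
    refine (norm_sub_le _ _).trans ?_
    simp; linarith
  calc _ ≤ (5:ℝ) * 3 := by gcongr
    _ = 15 := by norm_num

lemma Tp_bound {L : ℕ} {k n d : ℕ} (hk : 3 ≤ k) {b : ℤ} (hb : 1 ≤ b) (hb9 : b ≤ 9) (p : Ix L → ℤ)
    (m1 m2 z S : ℕ) (hm : m1 + m2 ≤ S) (P Y : ℝ) (hY : 1 ≤ Y)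
    (hP : ∀ l, |(p l : ℝ)| ≤ P) (hx : ∀ l : Ix L, |(xx n l : ℝ)| ≤ Y) (hy : ∀ l : Ix L, |(yy d l : ℝ)| ≤ Y)
    {ζ : ℂ} (hz : ‖ζ‖ ≤ 2) :
    ‖aeval ζ (Tp k n d b p m1 m2 z)‖ ≤ Fintype.card (Ix L) * (P * Y^S * (2160 * k)^(L*z)) := by
  have hk' : (3:ℝ) ≤ k := by exact_mod_cast hk
  have hP0 : 0 ≤ P := (abs_nonneg _).trans (hP (0,0,0))
  unfold Tp
  rw [map_sum]
  refine (norm_sum_le _ _).trans ?_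
  rw [← card_univ, ← nsmul_eq_mul]
  refine sum_le_card_nsmul _ _ _ fun l _ => ?_
  have hc : aeval ζ (C (p l * xx n l ^ m1 * yy d l ^ m2)) = (((p l : ℝ) * (xx n l:ℝ)^m1 * (yy d l : ℝ)^m2 : ℝ) : ℂ) := by
    simp
  rw [map_mul, hc]
  simp only [map_mul, map_pow, aeval_X] 
  rw [show (aeval ζ) (C (10:ℤ)) = (10:ℂ) by rw [aeval_C]; simp]
  rw [norm_mul, Complex.norm_real, Real.norm_eq_abs, abs_mul, abs_mul, abs_pow, abs_pow]
  simp only [norm_mul, norm_pow]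
  have hl1 : (l.1:ℕ) ≤ L := by omega
  have hl2 : (l.2.1:ℕ) ≤ L := by omega
  have hl3 : (l.2.2:ℕ) ≤ L := by omega
  have a1 : |(p l:ℝ)| * |(xx n l:ℝ)|^m1 * |(yy d l:ℝ)|^m2 ≤ P * Y^S := by
    calc _ ≤ P * Y^m1 * Y^m2 := by
          gcongr
          · exact hP l
          · exact hx l
          · exact hy l
      _ = P * Y^(m1+m2) := by rw [pow_add]; ring
      _ ≤ P * Y^S := by gcongr
  refine mul_le_mul a1 ?_ (by positivity) (by positivity)
  have b1 : ‖ζ‖ ^ ((l.1:ℕ)*z) ≤ 2 ^ (L*z) := by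
    calc _ ≤ (2:ℝ) ^ ((l.1:ℕ)*z) := by gcongr
      _ ≤ _ := pow_le_pow_right₀ (by norm_num) (by gcongr)
  have b2 : ‖(10:ℂ)‖ ^ ((l.2.1:ℕ)*z) ≤ 10 ^ (L*z) := by
    rw [Complex.norm_ofNat]
    exact pow_le_pow_right₀ (by norm_num) (by gcongr)
  have b3 : ‖aeval ζ (up k b)‖ ^ ((l.2.2:ℕ) * z) * ‖aeval ζ vp‖ ^ ((L - (l.2.2:ℕ)) * z) ≤ (108*k)^(L*z) := by
    calc _ ≤ (108*k:ℝ) ^ ((l.2.2:ℕ) * z) * (108*k:ℝ) ^ ((L - (l.2.2:ℕ)) * z) := by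
          gcongr
          · exact up_bound hk hb hb9 hz
          · exact (vp_bound hz).trans (by linarith)
      _ = _ := by rw [← pow_add, ← add_mul, Nat.add_sub_cancel' hl3]
  calc _ ≤ (2:ℝ)^(L*z) * (10^(L*z) * (108*k)^(L*z)) := by gcongr
    _ = _ := by rw [← mul_pow, ← mul_pow]; ring_nf

lemma α_rel {k : ℕ} {α : ℝ} (h1 : 9/5 < α) (hα : α ^ k * (2 - α) = 1) : α ^ k = ∑ i ∈ range k, α ^ i := by
  have h3 := geom_sum_mul α k
  have : (α - 1) * α ^ k = (α - 1) * ∑ i ∈ range k, α ^ i := by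
    rw [mul_comm (α - 1) (∑ i ∈ range k, α ^ i), h3]; linarith
  exact mul_left_cancel₀ (by linarith) this

lemma FF_lower {L : ℕ} {k n d : ℕ} (hk : 3 ≤ k) {b : ℤ} (hb : 1 ≤ b) (hb9 : b ≤ 9) (p : Ix L → ℤ)
    (m1 m2 z S : ℕ) (hm : m1 + m2 ≤ S) (P Y : ℝ) (hP1 : 1 ≤ P) (hY : 1 ≤ Y)
    (hP : ∀ l, |(p l : ℝ)| ≤ P) (hx : ∀ l : Ix L, |(xx n l : ℝ)| ≤ Y) (hy : ∀ l : Ix L, |(yy d l : ℝ)| ≤ Y)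
    (α u v : ℝ) (h1 : 9/5 < α) (h2 : α < 2) (hα : α ^ k * (2 - α) = 1)
    (hu : u = b * α * ((k+1) * α - 2 * k)) (hv : v = (2*α-1)*(α-1))
    (hF : FF (fun l => (p l : ℝ)) (fun l => (xx n l : ℝ)) (fun l => (yy d l : ℝ)) (Zr α (u/v)) m1 m2 z ≠ 0) :
    1 ≤ 3 ^ (L*z) * |FF (fun l => (p l : ℝ)) (fun l => (xx n l : ℝ)) (fun l => (yy d l : ℝ)) (Zr α (u/v)) m1 m2 z|
      * (Fintype.card (Ix L) * (P * Y^S * (2160 * k)^(L*z))) ^ k := by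
  have hv0 : 0 < v := by rw [hv]; nlinarith
  have hv3 : v ≤ 3 := by rw [hv]; nlinarith
  have hk' : (3:ℝ) ≤ k := by exact_mod_cast hk
  have hT := Tp_eval k n d b p m1 m2 z α u v hu hv hv0.ne'
  have hB1 : (1:ℝ) ≤ Fintype.card (Ix L) * (P * Y^S * (2160 * k)^(L*z)) := by
    have c1 : (1:ℝ) ≤ Fintype.card (Ix L) := by
      exact_mod_cast Fintype.card_pos
    have c2 : (1:ℝ) ≤ Y^S := one_le_pow₀ hY
    have c3 : (1:ℝ) ≤ (2160 * k:ℝ)^(L*z) := one_le_pow₀ (by linarith)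
    have c4 : 1 ≤ P * Y^S := one_le_mul_of_one_le_of_one_le hP1 c2
    exact one_le_mul_of_one_le_of_one_le c1 (one_le_mul_of_one_le_of_one_le c4 c3)
  have := liouville (hp k) (hp_monic k) k (hp_natDegree k) α
    (by simp [hp, α_rel h1 hα]) (Tp k n d b p m1 m2 z) _ hB1
    (fun ζ hζ => Tp_bound hk hb hb9 p m1 m2 z S hm P Y hY hP hx hy (hp_root hζ))
    (by rw [hT]; exact mul_ne_zero (by positivity) hF)
  refine this.trans ?_
  rw [hT, abs_mul, abs_of_nonneg (by positivity : 0 ≤ v ^ (L*z))]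
  gcongr

lemma α_indep {k : ℕ} {α : ℝ} (h1 : 9/5 < α) (hα : α ^ k * (2 - α) = 1) {a b : ℕ} (ha : 0 < a)
    (h : α ^ a = 10 ^ b) : False := by
  have hα0 : α ≠ 0 := by linarith
  have hint : IsIntegral ℤ α⁻¹ := by
    refine ⟨X ^ (k+1) - (C 2 * X - C 1), monic_X_pow_sub ?_, ?_⟩
    · have hk0 : k ≠ 0 := by
        rintro rfl; simp at hα; linarith
      have : (C 2 * X - C 1 : ℤ[X]).degree ≤ 1 := by compute_degree
      refine this.trans_lt ?_
      exact_mod_cast (by omega : 1 < k+1)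
    · have e : α⁻¹ ^ (k+1) = 2 * α⁻¹ - 1 := by
        rw [inv_pow]; field_simp; rw [pow_succ]; linear_combination -α * hα
      simp only [eval₂_sub, eval₂_mul, eval₂_pow, eval₂_X, eval₂_C]
      rw [e]; simp
  have h3 : IsIntegral ℤ ((1 / 10 ^ b : ℚ)) := by
    have h4 := hint.pow a
    rw [inv_pow, h] at h4
    have h5 : ((10:ℝ)^b)⁻¹ = algebraMap ℚ ℝ (1/10^b) := by simp
    rw [h5] at h4
    exact (isIntegral_algebraMap_iff (algebraMap ℚ ℝ).injective).1 h4
  obtain ⟨N, hN⟩ := IsIntegrallyClosed.isIntegral_iff.1 h3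
  have hb : b ≠ 0 := by
    rintro rfl
    have : 1 < α ^ a := one_lt_pow₀ (by linarith) ha.ne'
    rw [h] at this; simp at this
  have h6 : N * 10 ^ b = 1 := by
    have : (N:ℚ) * 10^b = 1 := by
      rw [eq_intCast] at hN
      rw [hN]; field_simp
    exact_mod_cast this
  have h7 : (10:ℤ)^b ∣ 1 := ⟨N, by rw [mul_comm]; exact h6.symm⟩
  have h8 : (10:ℤ) ∣ 1 := (dvd_pow_self 10 hb).trans h7
  norm_num at h8

lemma α_indep' {k : ℕ} {α : ℝ} (h1 : 9/5 < α) (hα : α ^ k * (2 - α) = 1) {a b a' b' : ℕ}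
    (h : α ^ a * 10 ^ b = α ^ a' * 10 ^ b') : a = a' ∧ b = b' := by
  have main : ∀ {a b a' b' : ℕ}, a < a' → α ^ a * 10 ^ b = α ^ a' * 10 ^ b' → False := by
    intro a b a' b' hlt h
    obtain ⟨c, rfl⟩ := Nat.exists_eq_add_of_lt hlt
    have hα0 : α ^ a ≠ 0 := pow_ne_zero _ (by linarith)
    have h2 : (10:ℝ)^b = α ^ (c+1) * 10^b' := by
      apply mul_left_cancel₀ hα0; rw [h]; ring
    have hgt : 1 < α ^ (c+1) := one_lt_pow₀ (by linarith) (by omega)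
    have hbb : b' ≤ b := by
      by_contra! hb
      have : (10:ℝ)^b ≤ 10^b' := pow_le_pow_right₀ (by norm_num) hb.le
      nlinarith [pow_pos (by norm_num : (0:ℝ) < 10) b']
    obtain ⟨e, rfl⟩ := Nat.exists_eq_add_of_le hbb
    apply α_indep h1 hα (a := c+1) (b := e) (by omega)
    have : (10:ℝ)^b' ≠ 0 := by positivity
    apply mul_right_cancel₀ this
    rw [← h2]; ring
  rcases lt_trichotomy a a' with hh | hh | hh
  · exact (main hh h).elim
  · subst hh
    refine ⟨rfl, ?_⟩
    have hα0 : α ^ a ≠ 0 := pow_ne_zero _ (by linarith)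
    have := mul_left_cancel₀ hα0 h
    exact pow_right_injective₀ (by norm_num : (0:ℝ) < 10) (by norm_num) this
  · exact (main hh h.symm).elim
end polys
end

section
open Finset

lemma red_mono {L : ℕ} {k n d : ℕ} (hk : 3 ≤ k) {b : ℤ} (hb : 1 ≤ b) (hb9 : b ≤ 9)
    (Y : ℤ) (hY : 1 ≤ Y) (l : Ix L) (hx : |xx n l| ≤ Y) (hy : |yy d l| ≤ Y)
    (α u v : ℝ) (h1 : 9/5 < α) (hα : α ^ k * (2 - α) = 1)
    (hu : u = b * α * ((k+1) * α - 2 * k)) (hv : v = (2*α-1)*(α-1)) (m1 m2 z S R0 : ℕ)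
    (hm1 : m1 ≤ S) (hm2 : m2 ≤ S) (hz : z ≤ R0) :
    Red k α ((xx n l : ℝ) ^ m1 * (yy d l : ℝ)^ m2 * (v ^ (L*z) * Zr α (u/v) l ^ z))
      (Y^(2*S) * (2160 * k)^(L*R0)) := by
  have hk1 : 1 ≤ k := by omega
  have hk' : (3:ℤ) ≤ k := by exact_mod_cast hk
  have hv0 : v ≠ 0 := by
    have : 0 < v := by rw [hv]; nlinarith
    exact this.ne'
  have hrel := α_rel h1 hα
  have r1 : ∀ ξ A, Red k α ξ A → Red k α (α * ξ) (2 * A) := fun ξ A h => h.mulα hk1 hrel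
  have r2 : ∀ ξ A, Red k α ξ A → Red k α (10 * ξ) (10 * A) := fun ξ A h => by
    have := h.smul 10; simpa using this
  have r3 : ∀ ξ A, Red k α ξ A → Red k α (u * ξ) ((108 * k : ℤ) * A) := fun ξ A h => by
    have a0 := h.nonneg
    have a1 := ((r1 _ _ h).smul ((k:ℤ)+1)).add (h.smul (-(2*(k:ℤ))))
    have a2 := (r1 _ _ a1).smul b
    have e : u * ξ = (b:ℝ) * (α * ((((k:ℤ)+1 : ℤ):ℝ) * (α * ξ) + ((-(2*(k:ℤ)) : ℤ):ℝ) * ξ)) := by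
      rw [hu]; push_cast; ring
    rw [e]
    refine a2.mono ?_
    rw [abs_neg, abs_of_nonneg (by linarith : (0:ℤ) ≤ 2 * k), abs_of_nonneg (by linarith : (0:ℤ) ≤ (k:ℤ)+1),
      abs_of_nonneg (by linarith : (0:ℤ) ≤ b)]
    calc b * (2 * (((k:ℤ)+1) * (2*A) + 2*k*A)) ≤ 9 * (2 * (((k:ℤ)+1) * (2*A) + 2*k*A)) := by
          apply mul_le_mul_of_nonneg_right hb9; positivity
      _ ≤ _ := by nlinarith
  have r4 : ∀ ξ A, Red k α ξ A → Red k α (v * ξ) ((108 * k : ℤ) * A) := fun ξ A h => by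
    have a0 := h.nonneg
    have a1 := (((r1 _ _ (r1 _ _ h)).smul 2).add ((r1 _ _ h).smul (-3))).add h
    have e : v * ξ = ((2:ℤ):ℝ) * (α * (α * ξ)) + ((-3:ℤ):ℝ) * (α * ξ) + ξ := by
      rw [hv]; push_cast; ring
    rw [e]
    refine a1.mono ?_
    norm_num
    nlinarith
  have hl1 : (l.1:ℕ) ≤ L := by omega
  have hl2 : (l.2.1:ℕ) ≤ L := by omega
  have hl : (l.2.2:ℕ) ≤ L := by omega
  have c := Red.mul_pow r1 (Red.mul_pow r2 (Red.mul_pow r3 (Red.mul_pow r4 (Red.one hk1 α)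
    ((L - (l.2.2:ℕ)) * z)) ((l.2.2:ℕ) * z)) ((l.2.1:ℕ) * z)) ((l.1:ℕ) * z)
  have c' := c.smul (xx n l ^ m1 * yy d l ^ m2)
  have e3 : v ^ (L*z) = v ^ ((l.2.2:ℕ) * z) * v ^ ((L - (l.2.2:ℕ)) * z) := by
    rw [← pow_add, ← add_mul, Nat.add_sub_cancel' hl]
  have e : ((xx n l : ℝ) ^ m1 * (yy d l : ℝ)^ m2 * (v ^ (L*z) * Zr α (u/v) l ^ z)) =
    ((xx n l ^ m1 * yy d l ^ m2 : ℤ) : ℝ) * (α ^ ((l.1:ℕ) * z) * (10 ^ ((l.2.1:ℕ) * z) *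
      (u ^ ((l.2.2:ℕ) * z) * (v ^ ((L - (l.2.2:ℕ)) * z) * 1)))) := by
    rw [e3]; unfold Zr
    rw [mul_pow, mul_pow, ← pow_mul, ← pow_mul, ← pow_mul, div_pow]
    push_cast
    field_simp
  rw [e]
  refine c'.mono ?_
  rw [abs_mul, abs_pow, abs_pow]
  have b1 : |xx n l| ^ m1 * |yy d l| ^ m2 ≤ Y^(2*S) := by
    calc _ ≤ Y ^ m1 * Y ^ m2 := by gcongr
      _ = Y ^ (m1+m2) := by rw [pow_add]
      _ ≤ Y ^ (2*S) := pow_le_pow_right₀ hY (by omega)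
  have b2 : (2:ℤ) ^ ((l.1:ℕ) * z) * (10 ^ ((l.2.1:ℕ) * z) *
      ((108 * k : ℤ) ^ ((l.2.2:ℕ) * z) * ((108 * k : ℤ) ^ ((L - (l.2.2:ℕ)) * z) * 1))) ≤ (2160 * k)^(L*R0) := by
    have f1 : (2:ℤ) ^ ((l.1:ℕ) * z) ≤ 2 ^ (L*R0) := pow_le_pow_right₀ (by norm_num) (by gcongr)
    have f2 : (10:ℤ) ^ ((l.2.1:ℕ) * z) ≤ 10 ^ (L*R0) := pow_le_pow_right₀ (by norm_num) (by gcongr)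
    have f3 : (108 * k : ℤ) ^ ((l.2.2:ℕ) * z) * ((108 * k : ℤ) ^ ((L - (l.2.2:ℕ)) * z) * 1) ≤ (108*k)^(L*R0) := by
      rw [mul_one, ← pow_add, ← add_mul, Nat.add_sub_cancel' hl]
      exact pow_le_pow_right₀ (by linarith) (by gcongr)
    calc _ ≤ (2:ℤ)^(L*R0) * (10^(L*R0) * (108*k)^(L*R0)) := by gcongr
      _ = _ := by rw [← mul_pow, ← mul_pow]; ring_nf
  have := mul_le_mul b1 b2 (by positivity) (by positivity)
  exact this

lemma siegel_app {L : ℕ} {k n d : ℕ} (hk : 3 ≤ k) {b : ℤ} (hb : 1 ≤ b) (hb9 : b ≤ 9)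
    (Y : ℤ) (hY : 1 ≤ Y) (hx : ∀ l : Ix L, |xx n l| ≤ Y) (hy : ∀ l : Ix L, |yy d l| ≤ Y)
    (α u v : ℝ) (h1 : 9/5 < α) (hα : α ^ k * (2 - α) = 1)
    (hu : u = b * α * ((k+1) * α - 2 * k)) (hv : v = (2*α-1)*(α-1)) (S R0 : ℕ)
    (hS : 1 ≤ S) (hR0 : 1 ≤ R0) (hcard : 2 * (S * (S * R0) * k) ≤ (L+1)^3) :
    ∃ p : Ix L → ℤ, p ≠ 0 ∧ (∀ l, |p l| ≤ (L+1)^3 * (Y^(2*S) * (2160 * k)^(L*R0))) ∧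
      ∀ m1 < S, ∀ m2 < S, ∀ z < R0,
        FF (fun l => (p l : ℝ)) (fun l => (xx n l : ℝ)) (fun l => (yy d l : ℝ)) (Zr α (u/v)) m1 m2 z = 0 := by
  have hk' : (3:ℤ) ≤ k := by exact_mod_cast hk
  have hcI : Fintype.card (Ix L) = (L+1)^3 := by simp; ring
  obtain ⟨p, hp0, hp, hz⟩ := siegel (k := k) (by omega) α
    (fun (e : Fin S × Fin S × Fin R0) (l : Ix L) =>
      ((xx n l : ℝ) ^ (e.1:ℕ) * (yy d l : ℝ)^ (e.2.1:ℕ) * (v ^ (L*(e.2.2:ℕ)) * Zr α (u/v) l ^ (e.2.2:ℕ))))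
    (Y^(2*S) * (2160 * k)^(L*R0))
    (one_le_mul_of_one_le_of_one_le (one_le_pow₀ hY) (one_le_pow₀ (by linarith)))
    (fun e l => red_mono hk hb hb9 Y hY l (hx l) (hy l) α u v h1 hα hu hv _ _ _ S R0 (by omega) (by omega) (by omega))
    (by simp only [Fintype.card_prod, Fintype.card_fin]; positivity)
    (by rw [hcI]; simpa using hcard)
  refine ⟨p, hp0, ?_, ?_⟩
  · intro l
    have := hp l
    rw [hcI] at this
    exact_mod_cast this
  · intro m1 hm1 m2 hm2 z hzz
    have := hz (⟨m1, hm1⟩, ⟨m2, hm2⟩, ⟨z, hzz⟩)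
    have hv0 : v ≠ 0 := by
      have : 0 < v := by rw [hv]; nlinarith
      exact this.ne'
    have e : ∑ l, (p l : ℝ) * ((xx n l : ℝ) ^ m1 * (yy d l : ℝ)^ m2 * (v ^ (L*z) * Zr α (u/v) l ^ z)) =
      v ^ (L*z) * FF (fun l => (p l : ℝ)) (fun l => (xx n l : ℝ)) (fun l => (yy d l : ℝ)) (Zr α (u/v)) m1 m2 z := by
      unfold FF
      rw [mul_sum]
      exact sum_congr rfl fun l _ => by ring
    simp only at this
    rw [e] at this
    exact (mul_eq_zero.1 this).resolve_left (pow_ne_zero _ hv0)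
end

section
open Finset

lemma key_pow (l : ℕ) (hl : 512 ≤ l) : 2^80 * l^48 ≤ 2^l := by
  induction l, hl using Nat.le_induction with
  | base =>
    have : (512:ℕ)^48 = 2^(9*48) := by rw [pow_mul]; norm_num
    rw [this, ← pow_add]
  | succ l hl ih =>
    have h1 : (l+1)^48 ≤ 2 * l^48 := by
      have e : 512 * (l+1) ≤ 513 * l := by omega
      have h2 : (512 * (l+1))^48 ≤ (513 * l)^48 := Nat.pow_le_pow_left e 48
      rw [mul_pow, mul_pow] at h2
      have h3 : 513^48 * l^48 ≤ (2 * 512^48) * l^48 := Nat.mul_le_mul_right _ (by norm_num)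
      have h4 : 512^48 * (l+1)^48 ≤ 512^48 * (2 * l^48) := by
        calc _ ≤ _ := h2
          _ ≤ _ := h3
          _ = _ := by ring
      exact Nat.le_of_mul_le_mul_left h4 (by norm_num)
    rw [pow_succ 2 l]
    linarith

lemma eta_bound {L : ℕ} (n d R : ℕ) (α γ : ℝ) (h1 : 9/5 < α) (h2 : α < 2) (hγ0 : 0 ≤ γ) (hγ : γ ≤ 20)
    (hγ' : α^n / 10^d ≤ 20) (hd : |γ - α^n/10^d| ≤ 10 / 10^d) (hL : 1 ≤ L) (l : Ix L) (z : ℕ) (hz : z < 2*R) :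
    |Real.exp (((xx n l:ℝ) * Real.log α + (yy d l:ℝ) * Real.log 10) * z) - Zr α γ l ^ z| ≤
      400^(2*L*R) * (20*L*R) / 10^d := by
  have hα0 : 0 < α := by linarith
  set γ' := α^n/10^d with hγ'd
  have hγ'0 : 0 < γ' := by positivity
  have e1 : Real.exp (((xx n l:ℝ) * Real.log α + (yy d l:ℝ) * Real.log 10) * z) = Zr α γ' l ^ z := by
    have : (xx n l:ℝ) * Real.log α + (yy d l:ℝ) * Real.log 10 = Real.log (Zr α γ' l) := by
      unfold Zr xx yy
      rw [Real.log_mul (by positivity) (by positivity), Real.log_mul (by positivity) (by positivity),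
        Real.log_pow, Real.log_pow, Real.log_pow, hγ'd, Real.log_div (by positivity) (by positivity),
        Real.log_pow, Real.log_pow]
      push_cast; ring
    rw [this, mul_comm, Real.exp_nat_mul, Real.exp_log (by unfold Zr; positivity)]
  rw [e1]
  have hl1 : (l.1:ℕ) ≤ L := by omega
  have hl2 : (l.2.1:ℕ) ≤ L := by omega
  have hl : (l.2.2:ℕ) ≤ L := by omega
  have e2 : Zr α γ' l ^ z - Zr α γ l ^ z = α^((l.1:ℕ)*z) * 10^((l.2.1:ℕ)*z) * (γ'^((l.2.2:ℕ)*z) - γ^((l.2.2:ℕ)*z)) := by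
    unfold Zr
    simp only [mul_pow, ← pow_mul]; ring
  have hm : (l.2.2:ℕ)*z ≤ 2*L*R := by
    calc (l.2.2:ℕ)*z ≤ L * (2*R) := by gcongr
      _ = _ := by ring
  have hm1 : (l.1:ℕ)*z ≤ 2*L*R := by
    calc (l.1:ℕ)*z ≤ L * (2*R) := by gcongr
      _ = _ := by ring
  have hm2 : (l.2.1:ℕ)*z ≤ 2*L*R := by
    calc (l.2.1:ℕ)*z ≤ L * (2*R) := by gcongr
      _ = _ := by ring
  have e3 : |γ'^((l.2.2:ℕ)*z) - γ^((l.2.2:ℕ)*z)| ≤ 10/10^d * (2*L*R) * 20^(2*L*R) := by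
    refine (abs_pow_sub_pow_le _ _ _).trans ?_
    rw [abs_sub_comm]
    have hmm : ((((l.2.2:ℕ)*z : ℕ)):ℝ) ≤ 2*L*R := by exact_mod_cast hm
    have hmax : max |γ'| |γ| ≤ 20 := by
      rw [abs_of_pos hγ'0, abs_of_nonneg hγ0]; exact max_le hγ' hγ
    calc _ ≤ 10/10^d * (2*L*R:ℝ) * 20^((l.2.2:ℕ)*z - 1) := by gcongr
      _ ≤ _ := by
        have : (20:ℝ)^((l.2.2:ℕ)*z - 1) ≤ 20^(2*L*R) := pow_le_pow_right₀ (by norm_num) (by omega)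
        gcongr
  rw [e2, abs_mul, abs_of_nonneg (by positivity)]
  have e4 : α^((l.1:ℕ)*z) * 10^((l.2.1:ℕ)*z) ≤ 20^(2*L*R) := by
    calc _ ≤ (2:ℝ)^((l.1:ℕ)*z) * 10^((l.2.1:ℕ)*z) := by gcongr
      _ ≤ 2^(2*L*R) * 10^(2*L*R) := by
        gcongr <;> norm_num
      _ = _ := by rw [← mul_pow]; norm_num
  calc _ ≤ (20:ℝ)^(2*L*R) * (10/10^d * (2*L*R) * 20^(2*L*R)) := by gcongr
    _ = _ := by
      rw [show (400:ℝ) = 20*20 by norm_num, mul_pow]; ring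

lemma kill {L : ℕ} (k n : ℕ) (hL : L < n) (p : Ix L → ℤ) (y : Ix L → ℝ)
    (α γ : ℝ) (h1 : 9/5 < α) (hα : α ^ k * (2 - α) = 1) (hγ : γ ≠ 0)
    (h : ∀ m < L+1, ∀ z < (L+1)^3, FF (fun l => (p l : ℝ)) (fun l => (xx n l : ℝ)) y (Zr α γ) m 0 z = 0) :
    p = 0 := by
  have hcI : Fintype.card (Ix L) = (L+1)^3 := by simp; ring
  have hZ : ∀ l l' : Ix L, Zr α γ l = Zr α γ l' → l.2.2 = l'.2.2 → l = l' := by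
    intro l l' hZ h3
    unfold Zr at hZ
    rw [h3] at hZ
    have := mul_right_cancel₀ (pow_ne_zero _ hγ) hZ
    obtain ⟨a1, a2⟩ := α_indep' h1 hα this
    ext
    · exact a1
    · exact a2
    · exact congrArg _ h3
  funext l
  have := vand (fun l => (p l : ℝ)) (fun l : Ix L => (xx n l : ℝ)) (Zr α γ) (L+1)
    (by
      intro m hm z hz
      rw [hcI] at hz
      have := h m hm z hz
      simpa [FF] using this)
    (by
      intro l
      have : (univ.filter fun l' : Ix L => Zr α γ l' = Zr α γ l).card ≤ (univ : Finset (Fin (L+1))).card := by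
        apply card_le_card_of_injOn (fun l' => l'.2.2) (fun _ _ => by simp)
        intro a ha b hb hab
        simp only [coe_filter, mem_univ, true_and, Set.mem_ofPred_eq] at ha hb
        exact hZ a b (ha.trans hb.symm) hab
      simpa using this)
    (by
      intro l l' h1 h2
      refine hZ l l' h1 ?_
      have h3 : xx n l = xx n l' := by exact_mod_cast h2
      unfold xx at h3
      have b1 : (l.1:ℕ) < n := by omega
      have b2 : (l'.1:ℕ) < n := by omega
      have h4 : (l.1:ℕ) + (l.2.2:ℕ) * n = (l'.1:ℕ) + (l'.2.2:ℕ) * n := by exact_mod_cast h3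
      have h5 := congrArg (· / n) h4
      simp only [Nat.add_mul_div_right _ _ (by omega : 0 < n), Nat.div_eq_of_lt b1, Nat.div_eq_of_lt b2, zero_add] at h5
      exact Fin.ext h5) l
  exact_mod_cast this

lemma geo_bound (K : ℝ) (hK : 1 ≤ K) (N : ℕ) : ∑ i ∈ range N, K^i ≤ (2*K)^N := by
  calc ∑ i ∈ range N, K^i ≤ ∑ i ∈ range N, K^N := by
        refine sum_le_sum fun i hi => ?_
        exact pow_le_pow_right₀ hK (mem_range.1 hi).le
    _ = N * K^N := by simp
    _ ≤ 2^N * K^N := by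
        gcongr
        exact_mod_cast (Nat.lt_two_pow_self).le
    _ = _ := by rw [mul_pow]

set_option maxHeartbeats 2000000 in
lemma step_num (ℓ L R R0 S s d k z π : ℕ) (F Θ : ℝ) (hℓ : 512 ≤ ℓ) (hL : 1 ≤ L)
    (hs : s = 4*ℓ^2*L) (hS : S = 8*ℓ^3*L) (hR0 : R0 = 16*ℓ^3) (hR : R0 ≤ R) (hπ : π = ℓ + 4*ℓ*S + ℓ*L*R0)
    (hΘ0 : 0 ≤ Θ) (hΘ : Θ ≤ 2^ℓ) (hk : k ≤ 4*ℓ) (hk2 : (2160*k : ℝ) ≤ 2^ℓ) (hk1 : 1 ≤ k) (hz : z < 2*R)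
    (hKK : (4*R*(s+1) : ℝ) ≤ 2^ℓ) (hd : 9*ℓ^3*L*R ≤ d)
    (hlow : F ≠ 0 → 1 ≤ 3^(L*z) * |F| * (Θ * (2^π * (2^(2*ℓ))^S * (2160*k)^(L*z)))^k)
    (hup : |F| ≤ (Θ * 2^π * (2^(2*ℓ))^S * (400^(2*L*R) * (20*L*R) / 10^d)) +
      (4^s * (Θ * 2^π * (2^(2*ℓ))^S * (400^(2*L*R) * (20*L*R) / 10^d))) * ∑ i ∈ range (s*R), (4*R*(s+1) : ℝ)^i
      + (Θ * 2^π * (2^(2*ℓ))^S * Real.exp ((7*L) * (2049*R))) * (1/256)^(s*R)) : F = 0 := by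
  by_contra hF
  have hlow := hlow hF
  have hR1 : 1 ≤ R := by
    have : 0 < ℓ^3 := by positivity
    omega
  obtain ⟨M, hM⟩ : ∃ M, M = L * R := ⟨_, rfl⟩
  have hM1 : 1 ≤ M := by rw [hM]; exact Nat.mul_pos hL hR1
  -- basic facts
  have f1 : 2 * S ≤ M := by
    rw [hS, hM]
    calc 2*(8*ℓ^3*L) = L * (16*ℓ^3) := by ring
      _ ≤ L * R := by gcongr; omega
  have f2 : L * R0 ≤ M := by rw [hM]; gcongr
  have f3 : s * R = 4*ℓ^2*M := by rw [hs, hM]; ring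
  have f4 : ℓ + π + 2*ℓ*S ≤ 5*ℓ*M := by
    rw [hπ]
    have a1 : ℓ * (2*S) ≤ ℓ * M := by gcongr
    have a2 : ℓ * (L*R0) ≤ ℓ * M := by gcongr
    have a3 : ℓ * 16 ≤ ℓ * M := by
      gcongr
      have : 1 ≤ ℓ^3 := Nat.one_le_pow _ _ (by omega)
      calc 16 ≤ 16 * ℓ^3 := by omega
        _ ≤ R := by omega
        _ ≤ L * R := Nat.le_mul_of_pos_left _ hL
        _ = M := hM.symm
    nlinarith
  have hc : Θ * 2^π * (2^(2*ℓ))^S ≤ 2^(5*ℓ*M) := by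
    calc Θ * 2^π * (2^(2*ℓ))^S ≤ 2^ℓ * 2^π * (2^(2*ℓ))^S := by gcongr
      _ = 2^(ℓ+π+2*ℓ*S) := by rw [← pow_mul, ← pow_add, ← pow_add]
      _ ≤ _ := pow_le_pow_right₀ (by norm_num) f4
  have hc0 : 0 ≤ Θ * 2^π * (2^(2*ℓ))^S := by positivity
  -- lower
  have low : 1 ≤ 2^(29*ℓ^2*M) * |F| := by
    have hLz : L * z ≤ 2 * M := by
      rw [hM]; calc L * z ≤ L * (2*R) := by gcongr
        _ = _ := by ring
    have a1 : (3:ℝ)^(L*z) ≤ 2^(4*M) := by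
      calc (3:ℝ)^(L*z) ≤ 4^(L*z) := by gcongr; norm_num
        _ ≤ 4^(2*M) := pow_le_pow_right₀ (by norm_num) hLz
        _ = _ := by rw [show (4:ℝ) = 2^2 by norm_num, ← pow_mul]; ring_nf
    have a2 : Θ * (2^π * (2^(2*ℓ))^S * (2160*k)^(L*z)) ≤ 2^(7*ℓ*M) := by
      calc Θ * (2^π * (2^(2*ℓ))^S * (2160*k)^(L*z)) = (Θ * 2^π * (2^(2*ℓ))^S) * (2160*k)^(L*z) := by ring
        _ ≤ 2^(5*ℓ*M) * (2^ℓ)^(2*M) := by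
          have : (2160*k:ℝ)^(L*z) ≤ (2^ℓ)^(2*M) := by
            calc (2160*k:ℝ)^(L*z) ≤ (2^ℓ)^(L*z) := by gcongr
              _ ≤ _ := pow_le_pow_right₀ (one_le_pow₀ (by norm_num)) hLz
          gcongr
        _ = _ := by rw [← pow_mul, ← pow_add]; ring_nf
    have a3 : (Θ * (2^π * (2^(2*ℓ))^S * (2160*k)^(L*z)))^k ≤ 2^(28*ℓ^2*M) := by
      calc _ ≤ ((2:ℝ)^(7*ℓ*M))^k := by gcongr
        _ ≤ ((2:ℝ)^(7*ℓ*M))^(4*ℓ) := pow_le_pow_right₀ (one_le_pow₀ (by norm_num)) hk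
        _ = _ := by rw [← pow_mul]; ring_nf
    calc 1 ≤ _ := hlow
      _ ≤ 2^(4*M) * |F| * 2^(28*ℓ^2*M) := by gcongr
      _ = 2^(4*M + 28*ℓ^2*M) * |F| := by rw [pow_add]; ring
      _ ≤ _ := by
        gcongr
        · norm_num
        · nlinarith
  have third : (Θ * 2^π * (2^(2*ℓ))^S * Real.exp ((7*L) * (2049*R))) * (1/256)^(s*R) * 2^(31*ℓ^2*M) ≤ 1 := by
    have a1 : Real.exp ((7*L) * (2049*R)) ≤ 2^(22000*M) := by
      have e1 : ((7*L) * (2049*R) : ℝ) ≤ ((7172*M : ℕ):ℝ) * 2 := by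
        rw [hM]; push_cast; nlinarith [mul_nonneg (Nat.cast_nonneg (α := ℝ) L) (Nat.cast_nonneg (α := ℝ) R)]
      have e2 : Real.exp 2 ≤ 2^3 := by
        have := Real.exp_one_lt_d9
        have h : Real.exp 2 = Real.exp 1 * Real.exp 1 := by rw [← Real.exp_add]; norm_num
        rw [h]; nlinarith [Real.exp_pos 1]
      calc Real.exp ((7*L) * (2049*R)) ≤ Real.exp (((7172*M : ℕ):ℝ) * 2) := Real.exp_le_exp.2 e1
        _ = Real.exp 2 ^ (7172*M) := Real.exp_nat_mul _ _
        _ ≤ (2^3)^(7172*M) := by gcongr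
        _ = 2^(3*(7172*M)) := by rw [← pow_mul]
        _ ≤ _ := pow_le_pow_right₀ (by norm_num) (by omega)
    have a2 : ((1/256:ℝ))^(s*R) = 1 / 2^(32*ℓ^2*M) := by
      rw [f3, div_pow, one_pow, show (256:ℝ) = 2^8 by norm_num, ← pow_mul]; ring_nf
    rw [a2, mul_one_div, div_mul_eq_mul_div, div_le_one (by positivity)]
    calc _ ≤ (2:ℝ)^(5*ℓ*M) * 2^(22000*M) * 2^(31*ℓ^2*M) := by gcongr
      _ = 2^(5*ℓ*M + 22000*M + 31*ℓ^2*M) := by rw [pow_add, pow_add]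
      _ ≤ _ := by
        apply pow_le_pow_right₀ (by norm_num)
        have : 5*ℓ+22000 ≤ ℓ^2 := by nlinarith
        nlinarith
  have err : ((Θ * 2^π * (2^(2*ℓ))^S * (400^(2*L*R) * (20*L*R) / 10^d)) +
      (4^s * (Θ * 2^π * (2^(2*ℓ))^S * (400^(2*L*R) * (20*L*R) / 10^d))) * ∑ i ∈ range (s*R), (4*R*(s+1) : ℝ)^i)
      * 2^(31*ℓ^2*M) ≤ 1 := by
    have a1 : (400:ℝ)^(2*L*R) ≤ 2^(18*M) := by
      calc (400:ℝ)^(2*L*R) ≤ (2^9)^(2*L*R) := by gcongr; norm_num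
        _ = _ := by rw [← pow_mul, hM]; ring_nf
    have a2 : (20*L*R:ℝ) ≤ 2^(20*M) := by
      have : 20*M ≤ 2^(20*M) := Nat.lt_two_pow_self.le
      have h : ((20*M : ℕ):ℝ) ≤ 2^(20*M) := by exact_mod_cast this
      rw [hM] at h ⊢; push_cast at h; linarith
    have a3 : (2:ℝ)^(27*ℓ^3*M) ≤ 10^d := by
      calc (2:ℝ)^(27*ℓ^3*M) = (2^3)^(9*ℓ^3*L*R) := by rw [← pow_mul, hM]; ring_nf
        _ ≤ (2^3)^d := pow_le_pow_right₀ (by norm_num) hd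
        _ ≤ 10^d := by gcongr; norm_num
    have a4 : ∑ i ∈ range (s*R), (4*R*(s+1) : ℝ)^i ≤ 2^((ℓ+1)*(s*R)) := by
      have hR' : (1:ℝ) ≤ R := by exact_mod_cast hR1
      have hs' : (0:ℝ) ≤ s := Nat.cast_nonneg _
      refine (geo_bound _ (by nlinarith) _).trans ?_
      calc (2*(4*R*(s+1)) : ℝ)^(s*R) ≤ (2*2^ℓ)^(s*R) := by gcongr
        _ = _ := by rw [← pow_succ', ← pow_mul]
    have a5 : (4:ℝ)^s = 2^(2*s) := by rw [show (4:ℝ) = 2^2 by norm_num, ← pow_mul]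
    set E0 := Θ * 2^π * (2^(2*ℓ))^S * (400^(2*L*R) * (20*L*R) / 10^d) with hE0
    have hE : E0 ≤ 2^(5*ℓ*M + 38*M) / 2^(27*ℓ^3*M) := by
      calc E0 ≤ 2^(5*ℓ*M) * (2^(18*M) * 2^(20*M) / 2^(27*ℓ^3*M)) := by
            rw [hE0]; gcongr
        _ = _ := by rw [← pow_add, ← mul_div_assoc, ← pow_add]; ring_nf
    have hE00 : 0 ≤ E0 := by positivity
    have hT : 1 + 4^s * ∑ i ∈ range (s*R), (4*R*(s+1) : ℝ)^i ≤ 2^(1 + 2*s + (ℓ+1)*(s*R)) := by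
      have : (1:ℝ) ≤ 2^(2*s + (ℓ+1)*(s*R)) := one_le_pow₀ (by norm_num)
      calc 1 + 4^s * ∑ i ∈ range (s*R), (4*R*(s+1) : ℝ)^i ≤ 1 + 2^(2*s) * 2^((ℓ+1)*(s*R)) := by
            rw [a5]; gcongr
        _ = 1 + 2^(2*s + (ℓ+1)*(s*R)) := by rw [pow_add]
        _ ≤ 2 * 2^(2*s + (ℓ+1)*(s*R)) := by linarith
        _ = _ := by rw [← pow_succ']; ring_nf
    calc _ = E0 * (1 + 4^s * ∑ i ∈ range (s*R), (4*R*(s+1) : ℝ)^i) * 2^(31*ℓ^2*M) := by ring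
      _ ≤ (2^(5*ℓ*M + 38*M) / 2^(27*ℓ^3*M)) * 2^(1 + 2*s + (ℓ+1)*(s*R)) * 2^(31*ℓ^2*M) := by gcongr
      _ = 2^(5*ℓ*M + 38*M + (1 + 2*s + (ℓ+1)*(s*R)) + 31*ℓ^2*M) / 2^(27*ℓ^3*M) := by
          rw [pow_add _ _ (31*ℓ^2*M), pow_add _ _ (1 + 2*s + (ℓ+1)*(s*R))]; ring
      _ ≤ 1 := by
          rw [div_le_one (by positivity)]
          apply pow_le_pow_right₀ (by norm_num)
          have g1 : s ≤ 4*ℓ^2*M := by rw [← f3]; exact Nat.le_mul_of_pos_right _ hR1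
          have g2 : 512*(ℓ^2*M) ≤ ℓ^3*M := by
            calc 512*(ℓ^2*M) ≤ ℓ*(ℓ^2*M) := by gcongr
              _ = _ := by ring
          have g3 : 512*(ℓ*M) ≤ ℓ^2*M := by
            calc 512*(ℓ*M) ≤ ℓ*(ℓ*M) := by gcongr
              _ = _ := by ring
          have g4 : 512*M ≤ ℓ*M := by gcongr
          rw [f3]
          have g5 : (ℓ+1)*(4*ℓ^2*M) = 4*(ℓ^3*M) + 4*(ℓ^2*M) := by ring
          rw [g5]
          nlinarith
  have hQ : (2:ℝ)^(31*ℓ^2*M) = 2^(29*ℓ^2*M) * 2^(2*ℓ^2*M) := by rw [← pow_add]; ring_nf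
  have hq4 : (4:ℝ) ≤ 2^(2*ℓ^2*M) := by
    calc (4:ℝ) = 2^2 := by norm_num
      _ ≤ _ := by
        apply pow_le_pow_right₀ (by norm_num)
        have : 1 ≤ ℓ^2*M := Nat.mul_pos (by positivity) hM1
        nlinarith
  have fin : |F| * 2^(31*ℓ^2*M) ≤ 2 := by
    calc _ ≤ _ := mul_le_mul_of_nonneg_right hup (by positivity)
      _ ≤ 2 := by rw [add_mul]; linarith
  rw [hQ] at fin
  nlinarith
end

section
open Finset

lemma uv_bounds {k : ℕ} {b : ℤ} (hb : 1 ≤ b) (hb9 : b ≤ 9) {α u v : ℝ} (h1 : 9/5 < α) (h2 : α < 2)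
    (he : (k+1) * (2-α) ≤ 1)
    (hu : u = b * α * ((k+1) * α - 2 * k)) (hv : v = (2*α-1)*(α-1)) :
    9/5 ≤ u ∧ u ≤ 36 ∧ 2 ≤ v ∧ v ≤ 3 ∧ u ≤ 18 * v := by
  have hb' : (1:ℝ) ≤ b := by exact_mod_cast hb
  have hb9' : (b:ℝ) ≤ 9 := by exact_mod_cast hb9
  have hD1 : 1 ≤ (k+1) * α - 2 * k := by linarith
  have hD2 : (k+1) * α - 2 * k ≤ 2 := by nlinarith
  have hv2 : 52/25 ≤ v := by rw [hv]; nlinarith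
  have hu2 : u ≤ 36 := by
    calc u = b * α * ((k+1) * α - 2 * k) := hu
      _ ≤ 9 * 2 * 2 := by gcongr
      _ = 36 := by norm_num
  refine ⟨?_, hu2, by linarith, by rw [hv]; nlinarith, by linarith⟩
  calc 9/5 = 1 * (9/5) * 1 := by norm_num
    _ ≤ b * α * ((k+1) * α - 2 * k) := by gcongr
    _ = u := hu.symm

lemma dn_bounds {n d : ℕ} (hn : 100 ≤ n) {α u v : ℝ} (h1 : 9/5 < α) (h2 : α < 2)
    (b1 : 9/5 ≤ u) (b2 : u ≤ 36) (b3 : 2 ≤ v) (b4 : v ≤ 3)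
    (h : |u * 10^d - v * α^n| ≤ 20) : d ≤ n ∧ n ≤ 8 * d := by
  obtain ⟨hl, hr⟩ := abs_le.1 h
  constructor
  · by_contra! hd
    have e1 : (10:ℝ)^n ≤ 10^d := pow_le_pow_right₀ (by norm_num) hd.le
    have e2 : α^n ≤ 2^n := by gcongr
    have e3 : (5:ℝ)^100 ≤ 5^n := pow_le_pow_right₀ (by norm_num) hn
    have e4 : (10:ℝ)^n = 2^n * 5^n := by rw [← mul_pow]; norm_num
    have e5 : (1:ℝ) ≤ 2^n := one_le_pow₀ (by norm_num)
    have e6 : (100:ℝ) ≤ 5^n := le_trans (by norm_num) e3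
    have e7 : 9/5 * 10^d ≤ u * 10^d := by gcongr
    have e8 : v * α^n ≤ 3 * 2^n := by gcongr
    nlinarith
  · by_contra! hd
    have e1 : (9/5:ℝ)^n ≤ α^n := by gcongr
    have e2 : (9/5:ℝ)^n = ((9/5)^4)^d * (9/5)^(n-4*d) := by
      rw [← pow_mul, ← pow_add]; congr 1; omega
    have e3 : (10:ℝ)^d ≤ ((9/5)^4)^d := by gcongr; norm_num
    have e4 : (9/5:ℝ)^50 ≤ (9/5)^(n-4*d) := pow_le_pow_right₀ (by norm_num) (by omega)
    have e5 : (1000:ℝ) ≤ (9/5)^(n-4*d) := le_trans (by norm_num) e4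
    have e6 : (1:ℝ) ≤ 10^d := one_le_pow₀ (by norm_num)
    have e7 : (10:ℝ)^d * 1000 ≤ α^n := by
      refine le_trans ?_ e1
      rw [e2]; gcongr
    have e8 : u * 10^d ≤ 36 * 10^d := by gcongr
    have e9 : 2 * α^n ≤ v * α^n := by gcongr
    linarith

set_option maxHeartbeats 4000000 in
theorem partB (k n d ℓ : ℕ) (b : ℤ) (α u v : ℝ) (hk : 3 ≤ k) (hb : 1 ≤ b) (hb9 : b ≤ 9)
    (hℓ : 512 ≤ ℓ) (hkℓ : k ≤ 4*ℓ) (hn1 : 2^ℓ ≤ n) (hn2 : n < 2^(ℓ+1))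
    (h1 : 9/5 < α) (h2 : α < 2) (hα : α ^ k * (2 - α) = 1) (he : (k+1) * (2-α) ≤ 1)
    (hu : u = b * α * ((k+1) * α - 2 * k)) (hv : v = (2*α-1)*(α-1))
    (habs : |u * 10^d - v * α^n| ≤ 20) : False := by
  obtain ⟨b1, b2, b3, b4, b5⟩ := uv_bounds hb hb9 h1 h2 he hu hv
  have hkp := key_pow ℓ hℓ
  have kp : ∀ a c, a ≤ 80 → c ≤ 48 → 2^a * ℓ^c ≤ 2^ℓ := by
    intro a c ha hc
    refine le_trans ?_ hkp
    exact Nat.mul_le_mul (Nat.pow_le_pow_right (by norm_num) ha) (Nat.pow_le_pow_right (by omega) hc)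
  have hn100 : 100 ≤ n := by
    have := kp 80 0 le_rfl (by norm_num)
    norm_num at this
    omega
  obtain ⟨hdn, hnd⟩ := dn_bounds hn100 h1 h2 b1 b2 b3 b4 habs
  have hℓ1 : ∀ c, 1 ≤ ℓ^c := fun c => Nat.one_le_pow _ _ (by omega)
  obtain ⟨L, hL⟩ : ∃ L, L = 8192*ℓ^10 := ⟨_, rfl⟩
  obtain ⟨s, hs⟩ : ∃ s, s = 4*ℓ^2*L := ⟨_, rfl⟩
  obtain ⟨S, hS⟩ : ∃ S, S = 8*ℓ^3*L := ⟨_, rfl⟩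
  obtain ⟨R0, hR0⟩ : ∃ R0, R0 = 16*ℓ^3 := ⟨_, rfl⟩
  have hL1 : 1 ≤ L := by have := hℓ1 10; omega
  have hR01 : 1 ≤ R0 := by have := hℓ1 3; omega
  have hs1 : L + 1 ≤ s := by rw [hs]; nlinarith [hℓ1 2]
  have hSs : S = 2*ℓ*s := by rw [hS, hs]; ring
  have hS1 : 1 ≤ S := by rw [hSs]; nlinarith
  have hΘ : (L+1)^3 ≤ 2^42 * ℓ^30 := by
    have : L + 1 ≤ 2^14*ℓ^10 := by have := hℓ1 10; omega
    calc (L+1)^3 ≤ (2^14*ℓ^10)^3 := Nat.pow_le_pow_left this 3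
      _ = _ := by ring
  have hΘℓ : (L+1)^3 ≤ 2^ℓ := hΘ.trans (kp _ _ (by norm_num) (by norm_num))
  have hYb : L * n + L * n ≤ 2^(2*ℓ) := by
    have a1 := kp 15 10 (by norm_num) (by norm_num)
    calc L*n + L*n = (2*L) * n := by ring
      _ ≤ (2^14*ℓ^10) * 2^(ℓ+1) := by
        apply Nat.mul_le_mul _ hn2.le
        rw [hL]; omega
      _ = (2^15*ℓ^10) * 2^ℓ := by rw [pow_succ 2 ℓ]; ring
      _ ≤ 2^ℓ * 2^ℓ := Nat.mul_le_mul_right _ a1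
      _ = _ := by rw [← pow_add]; ring_nf
  have hLn : L < n := by
    have a1 := kp 14 10 (by norm_num) (by norm_num)
    have := hℓ1 10
    omega
  have hx : ∀ l : Ix L, |xx n l| ≤ 2^(2*ℓ) := by
    intro l
    have hl1 : (l.1:ℕ) ≤ L := by omega
    have hl3 : (l.2.2:ℕ) ≤ L := by omega
    have a1 : (l.1:ℕ) + (l.2.2:ℕ) * n ≤ 2^(2*ℓ) := by
      refine le_trans ?_ hYb
      have : (l.2.2:ℕ) * n ≤ L * n := Nat.mul_le_mul_right _ hl3
      nlinarith
    unfold xx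
    rw [abs_of_nonneg (by positivity)]
    exact_mod_cast a1
  have hy : ∀ l : Ix L, |yy d l| ≤ 2^(2*ℓ) := by
    intro l
    have hl1 : (l.2.1:ℕ) ≤ L := by omega
    have hl3 : (l.2.2:ℕ) ≤ L := by omega
    have a1 : (l.2.1:ℕ) + (l.2.2:ℕ) * d ≤ 2^(2*ℓ) := by
      refine le_trans ?_ hYb
      have : (l.2.2:ℕ) * d ≤ L * n := Nat.mul_le_mul hl3 hdn
      nlinarith
    have a2 : (((l.2.1:ℕ):ℤ) + ((l.2.2:ℕ):ℤ) * d) ≤ 2^(2*ℓ) := by exact_mod_cast a1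
    have a3 : (0:ℤ) ≤ ((l.2.1:ℕ):ℤ) := by positivity
    have a4 : (0:ℤ) ≤ ((l.2.2:ℕ):ℤ) * d := by positivity
    unfold yy
    rw [abs_le]
    constructor <;> linarith
  have hk2N : 2160 * k ≤ 2^ℓ := by
    have := kp 14 1 (by norm_num) (by norm_num)
    rw [pow_one] at this
    omega
  have hk2 : (2160 * k : ℝ) ≤ 2^ℓ := by exact_mod_cast hk2N
  have hcard : 2 * (S * (S * R0) * k) ≤ (L+1)^3 := by
    calc 2 * (S * (S * R0) * k) ≤ 2 * (S * (S * R0) * (4*ℓ)) := by gcongr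
      _ = L^2 * (8192*ℓ^10) := by rw [hS, hR0]; ring
      _ = L^3 := by rw [← hL]; ring
      _ ≤ (L+1)^3 := Nat.pow_le_pow_left (by omega) 3
  obtain ⟨p, hp0, hp, hF0⟩ := siegel_app hk hb hb9 (2^(2*ℓ)) (one_le_pow₀ (by norm_num)) hx hy α u v h1 hα hu hv S R0
    hS1 hR01 hcard
  obtain ⟨π, hπ⟩ : ∃ π, π = ℓ + 4*ℓ*S + ℓ*L*R0 := ⟨_, rfl⟩
  have hpP : ∀ l, |(p l : ℝ)| ≤ 2^π := by
    intro l
    have a1 := hp l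
    have a2 : ((L:ℤ)+1)^3 * ((2^(2*ℓ))^(2*S) * (2160*k)^(L*R0)) ≤ 2^π := by
      have c1 : ((L:ℤ)+1)^3 ≤ 2^ℓ := by exact_mod_cast hΘℓ
      have c2 : (2160*k:ℤ) ≤ 2^ℓ := by exact_mod_cast hk2N
      calc ((L:ℤ)+1)^3 * ((2^(2*ℓ))^(2*S) * (2160*k)^(L*R0)) ≤ 2^ℓ * ((2^(2*ℓ))^(2*S) * (2^ℓ)^(L*R0)) := by gcongr
        _ = 2^π := by rw [← pow_mul, ← pow_mul, ← pow_add, ← pow_add, hπ]; ring_nf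
    exact_mod_cast a1.trans a2
  -- analytic data
  have hα0 : 0 < α := by linarith
  have h10d : (1:ℝ) ≤ 10^d := one_le_pow₀ (by norm_num)
  have h10d' : (1000:ℝ) ≤ 10^d := by
    have : (10:ℝ)^3 ≤ 10^d := pow_le_pow_right₀ (by norm_num) (by omega)
    linarith
  set γ := u / v with hγ
  have hγ1 : 3/5 ≤ γ := by rw [hγ, le_div_iff₀ (by linarith)]; linarith
  have hγ2 : γ ≤ 18 := by rw [hγ, div_le_iff₀ (by linarith)]; linarith
  have hγd : |γ - α^n/10^d| ≤ 10/10^d := by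
    have e : γ - α^n/10^d = (u*10^d - v*α^n) / (v * 10^d) := by
      rw [hγ]; field_simp
    rw [e, abs_div, abs_of_pos (by positivity : 0 < v*10^d), div_le_div_iff₀ (by positivity) (by positivity)]
    calc |u*10^d - v*α^n| * 10^d ≤ 20 * 10^d := by gcongr
      _ ≤ 10 * (v*10^d) := by nlinarith
  have hsm : (10:ℝ)/10^d ≤ 1/100 := by
    rw [div_le_div_iff₀ (by positivity) (by norm_num)]; linarith
  obtain ⟨g1, g2⟩ := abs_le.1 hγd
  have hγ'1 : 1/2 ≤ α^n/10^d := by linarith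
  have hγ'2 : α^n/10^d ≤ 20 := by linarith
  have hexp : Real.exp 3 = Real.exp 1 * Real.exp 1 * Real.exp 1 := by
    rw [← Real.exp_add, ← Real.exp_add]; norm_num
  have he1 := Real.exp_one_gt_d9
  have hexp20 : 20 ≤ Real.exp 3 := by
    rw [hexp]
    have : (2.7182818283:ℝ) * 2.7182818283 ≤ Real.exp 1 * Real.exp 1 := by gcongr
    have : (2.7182818283:ℝ) * 2.7182818283 * 2.7182818283 ≤ Real.exp 1 * Real.exp 1 * Real.exp 1 := by gcongr
    linarith
  have hlogα0 : 0 ≤ Real.log α := Real.log_nonneg (by linarith)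
  have hlogα : Real.log α ≤ 1 := by
    rw [Real.log_le_iff_le_exp hα0]; linarith
  have hlog100 : 0 ≤ Real.log 10 := Real.log_nonneg (by norm_num)
  have hlog10 : Real.log 10 ≤ 3 := by
    rw [Real.log_le_iff_le_exp (by norm_num)]; linarith
  have hlogγ : |n * Real.log α - d * Real.log 10| ≤ 3 := by
    have e : n * Real.log α - d * Real.log 10 = Real.log (α^n/10^d) := by
      rw [Real.log_div (by positivity) (by positivity), Real.log_pow, Real.log_pow]
    rw [e, abs_le]
    constructor
    · rw [Real.le_log_iff_exp_le (by positivity), Real.exp_neg, inv_le_comm₀ (by positivity) (by positivity)]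
      have : (α^n/10^d)⁻¹ ≤ (1/2)⁻¹ := inv_anti₀ (by norm_num) hγ'1
      norm_num at this
      have e3 : (α^n/10^d)⁻¹ = 10^d/α^n := inv_div _ _
      rw [e3]; linarith
    · rw [Real.log_le_iff_le_exp (by positivity)]; linarith
  have hW : ∀ l : Ix L, |(xx n l:ℝ) * Real.log α + (yy d l:ℝ) * Real.log 10| ≤ 7*L := by
    intro l
    have hl1 : ((l.1:ℕ):ℝ) ≤ L := by exact_mod_cast (by omega : (l.1:ℕ) ≤ L)
    have hl2 : ((l.2.1:ℕ):ℝ) ≤ L := by exact_mod_cast (by omega : (l.2.1:ℕ) ≤ L)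
    have hl3 : ((l.2.2:ℕ):ℝ) ≤ L := by exact_mod_cast (by omega : (l.2.2:ℕ) ≤ L)
    have e : (xx n l:ℝ) * Real.log α + (yy d l:ℝ) * Real.log 10 =
      ((l.1:ℕ):ℝ) * Real.log α + ((l.2.1:ℕ):ℝ) * Real.log 10 + ((l.2.2:ℕ):ℝ) * (n * Real.log α - d * Real.log 10) := by
      unfold xx yy; push_cast; ring
    rw [e]
    refine (abs_add_le _ _).trans ?_
    refine (add_le_add (abs_add_le _ _) le_rfl).trans ?_
    rw [abs_mul, abs_mul, abs_mul, abs_of_nonneg hlogα0, abs_of_nonneg hlog100]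
    simp only [Nat.abs_cast]
    have t1 : ((l.1:ℕ):ℝ) * Real.log α ≤ L * 1 := by gcongr
    have t2 : ((l.2.1:ℕ):ℝ) * Real.log 10 ≤ L * 3 := by gcongr
    have t3 : ((l.2.2:ℕ):ℝ) * |n * Real.log α - d * Real.log 10| ≤ L * 3 := by gcongr
    linarith
  have hcI : Fintype.card (Ix L) = (L+1)^3 := by simp; ring
  obtain ⟨J, hJ⟩ : ∃ J, J = Nat.clog 2 ((L+1)^3) := ⟨_, rfl⟩
  have hJℓ : J ≤ ℓ := by rw [hJ]; exact Nat.clog_le_of_le_pow hΘℓ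
  have hJΘ : (L+1)^3 ≤ 2^J := by rw [hJ]; exact Nat.le_pow_clog (by norm_num) _
  have hxR : ∀ l : Ix L, |(xx n l:ℝ)| ≤ 2^(2*ℓ) := fun l => by exact_mod_cast hx l
  have hyR : ∀ l : Ix L, |(yy d l:ℝ)| ≤ 2^(2*ℓ) := fun l => by exact_mod_cast hy l
  have hind : ∀ j ≤ J, ∀ m1 m2, m1 + m2 + j*s < S → ∀ z < R0*2^j,
      FF (fun l => (p l : ℝ)) (fun l => (xx n l : ℝ)) (fun l => (yy d l : ℝ)) (Zr α γ) m1 m2 z = 0 := by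
    intro j
    induction j with
    | zero =>
      intro _ m1 m2 hm z hz
      exact hF0 m1 (by omega) m2 (by omega) z (by simpa using hz)
    | succ j ih =>
      intro hj m1 m2 hm z hz
      have ih := ih (by omega)
      obtain ⟨R, hRd⟩ : ∃ R, R = R0 * 2^j := ⟨_, rfl⟩
      rw [← hRd] at ih
      have hRR0 : R0 ≤ R := by rw [hRd]; exact Nat.le_mul_of_pos_right _ (by positivity)
      have hzR : z < 2*R := by rw [hRd]; rw [pow_succ] at hz; linarith
      have h2j : 2^j ≤ (L+1)^3 := by
        have : j < Nat.clog 2 ((L+1)^3) := by omega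
        exact ((Nat.lt_clog_iff_pow_lt (by norm_num)).1 this).le
      have hRb : R ≤ 2^46 * ℓ^33 := by
        calc R = R0 * 2^j := hRd
          _ ≤ (16*ℓ^3) * (2^42*ℓ^30) := by rw [hR0]; exact Nat.mul_le_mul_left _ (h2j.trans hΘ)
          _ = _ := by ring
      have hm' : m1 + m2 + s ≤ S - j*s := by
        rw [add_mul, one_mul] at hm; omega
      have hup := extrap (fun l => (p l : ℝ)) (fun l : Ix L => (xx n l : ℝ)) (fun l => (yy d l : ℝ))
        (fun l => (xx n l:ℝ) * Real.log α + (yy d l:ℝ) * Real.log 10) (Zr α γ) (Real.log α) (Real.log 10)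
        (fun _ => rfl) hlogα0 hlog100 (by linarith) (2^π) (2^(2*ℓ)) (7*L) (400^(2*L*R) * (20*L*R) / 10^d)
        (by positivity) (one_le_pow₀ (by norm_num)) (by positivity) hpP hxR hyR hW (by positivity)
        R s S (S - j*s) (by omega) (by omega)
        (fun l z hz => eta_bound n d R α γ h1 h2 (by linarith) (by linarith) hγ'2 hγd hL1 l z hz)
        (fun m1 m2 hm z hz => ih m1 m2 (by omega) z hz) (by omega) m1 m2 hm' z hzR
      rw [hcI] at hup
      refine step_num ℓ L R R0 S s d k z π _ (((L+1)^3 : ℕ):ℝ) hℓ hL1 hs hS hR0 hRR0 hπ (by positivity)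
        (by exact_mod_cast hΘℓ) hkℓ hk2 (by omega) hzR ?_ ?_ ?_ hup
      · have : 4*R*(s+1) ≤ 2^ℓ := by
          have a1 : s + 1 ≤ 2^16*ℓ^12 := by
            have : s = 2^15*ℓ^12 := by rw [hs, hL]; ring
            have := hℓ1 12
            omega
          calc 4*R*(s+1) ≤ 4*(2^46*ℓ^33)*(2^16*ℓ^12) := by gcongr
            _ = 2^64*ℓ^45 := by ring
            _ ≤ _ := kp _ _ (by norm_num) (by norm_num)
        exact_mod_cast this
      · have a1 : 8 * (9*ℓ^3*L*R) ≤ 8*d := by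
          calc 8 * (9*ℓ^3*L*R) ≤ 8 * (9*ℓ^3*(8192*ℓ^10)*(2^46*ℓ^33)) := by rw [hL]; gcongr
            _ = 9*2^62*ℓ^46 := by ring
            _ ≤ 2^66*ℓ^46 := Nat.mul_le_mul_right _ (by norm_num)
            _ ≤ 2^ℓ := kp _ _ (by norm_num) (by norm_num)
            _ ≤ 8*d := hn1.trans hnd
        omega
      · intro hF
        have := FF_lower hk hb hb9 p m1 m2 z S (by omega) (2^π) (2^(2*ℓ)) (one_le_pow₀ (by norm_num))
          (one_le_pow₀ (by norm_num)) hpP hxR hyR α u v h1 h2 hα hu hv hF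
        rw [hcI] at this
        exact this
  apply hp0
  refine kill k n hLn p (fun l => (yy d l : ℝ)) α γ h1 hα (by linarith : γ ≠ 0) ?_
  intro m hm z hz
  refine hind J le_rfl m 0 ?_ z ?_
  · have a1 : J * s ≤ ℓ * s := Nat.mul_le_mul_right _ hJℓ
    have a2 : s ≤ ℓ * s := Nat.le_mul_of_pos_left _ (by omega)
    have : S = ℓ*s + ℓ*s := by rw [hSs]; ring
    omega
  · calc z < (L+1)^3 := hz
      _ ≤ 2^J := hJΘ
      _ ≤ R0 * 2^J := Nat.le_mul_of_pos_left _ hR01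
end

section

noncomputable def cF (x : ℕ) (f : ℕ → ℕ) : ℕ := Nat.rec (f 0) (fun n _ => f (Nat.succ n)) x

noncomputable def cpw (O x c : ℕ) (fuel : ℕ) : ℕ → ℕ :=
  Nat.rec (fun _ => O) (fun _ ih k =>
    Nat.rec O (fun _ _ => cF (cF (Nat.div k 2) ih) (fun h =>
      cF (Nat.add (Nat.div (Nat.mul h h) O) c) (fun h2 =>
        Nat.rec h2 (fun _ _ => Nat.add (Nat.div (Nat.mul h2 x) O) c) (Nat.mod k 2)))) k) fuel

noncomputable def citer (O k : ℕ) (fuel : ℕ) : ℕ → ℕ :=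
  Nat.rec (fun E => E) (fun _ ih E =>
    cF (Nat.sub (Nat.mul 2 O) E) (fun x => cF (Nat.div (Nat.mul O O) (cpw O x 0 12 k)) ih)) fuel

noncomputable def cml (O t : ℕ) (fuel : ℕ) : ℕ → ℕ → ℕ → ℕ :=
  Nat.rec (fun _ _ s => s) (fun _ ih i p s =>
    Nat.rec s (fun _ _ => cF (Nat.div (Nat.mul p t) O) (fun p' => cF (Nat.add s (Nat.div p i)) (fun s' =>
      cF (Nat.add i 1) (fun i' => ih i' p' s')))) p) fuel

noncomputable def clog (O t : ℕ) : ℕ := cF t (fun t => cml O t 1300 1 t 0)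

noncomputable def ceu (B : ℕ) (K : ℕ → ℕ → ℕ) (fuel : ℕ) : ℕ → ℕ → ℕ → ℕ → ℕ :=
  Nat.rec (fun _ _ q0 q1 => K q0 q1) (fun _ ih r0 r1 q0 q1 =>
    Nat.rec (K q0 q1) (fun _ _ => cF (Nat.mod r0 r1) (fun r2 =>
      cF (Nat.add (Nat.mul (Nat.div r0 r1) q1) q0) (fun q2 => ih r1 r2 q1 q2))) (Nat.sub B q1)) fuel

def cdist (a b : ℕ) : ℕ := Nat.add (Nat.sub a b) (Nat.sub b a)

def cround (a T : ℕ) : ℕ := Nat.div (Nat.add a (Nat.div T 2)) T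

noncomputable def cg1 (T q B G : ℕ) (K : ℕ) : ℕ :=
  cF (Nat.mod (Nat.mul q G) T) (fun x =>
    cond (Nat.ble (Nat.succ B) x) (cond (Nat.ble (Nat.succ (Nat.add x B)) T) 1 K) K)

noncomputable def cg2 (T q p B x : ℕ) : ℕ :=
  cond (Nat.ble (Nat.succ (Nat.add (Nat.mul q x) B)) T)
    (cond (Nat.beq (Nat.gcd p q) 1) (cond (Nat.ble (Nat.pow 2 512) q) 1 0) 0) 0

def cand (a b : ℕ) : ℕ := cond (Nat.ble 1 a) b 0

noncomputable def cfin (l2 l3 l5 l7 T A G q : ℕ) : ℕ :=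
  cF (cround (Nat.mul q A) T) (fun p =>
  cF (Nat.add (Nat.mul (Nat.pow 2 512) (cdist (Nat.mul q A) (Nat.mul p T))) (Nat.pow 2 1120)) (fun B =>
  cand (cond (Nat.ble q (Nat.pow 2 570)) 1 0) (
  cand (cg1 T q B G 0) (
  cand (cg1 T q B (Nat.add l2 G) 0) (
  cand (cg1 T q B (Nat.add l3 G) (cg2 T q p B (cdist (Nat.add l3 G) (Nat.mul 2 A)))) (
  cand (cg1 T q B (Nat.add (Nat.mul 2 l2) G) 0) (
  cand (cg1 T q B (Nat.add l5 G) 0) (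
  cand (cg1 T q B (Nat.add (Nat.add l2 l3) G) (cg2 T q p B (cdist (Nat.add (Nat.add l2 l3) G) (Nat.mul 3 A)))) (
  cand (cg1 T q B (Nat.add l7 G) 0) (
  cand (cg1 T q B (Nat.add (Nat.mul 3 l2) G) 0)
   (cg1 T q B (Nat.add (Nat.mul 2 l3) G) 0)))))))))))

noncomputable def ck2 (O l2 l3 l5 l7 T : ℕ) (Q : ℕ → ℕ) (k E : ℕ) : ℕ :=
  cF (clog O (Nat.div E 2)) (fun m1 =>
  cF (clog O (Nat.div (Nat.mul (Nat.succ k) E) 2)) (fun m2 =>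
  cF (clog O (Nat.div (Nat.mul 2 E) 3)) (fun m3 =>
  cF (clog O E) (fun m4 =>
  cF (Nat.add (Nat.add (Nat.mul 2 l2) m3) m4) (fun X =>
  cF (Nat.add (Nat.add l3 m1) m2) (fun Y =>
  cand (cond (Nat.ble m1 l2) 1 0) (cand (cond (Nat.ble Y X) 1 0) (
  cF (Nat.sub l2 m1) (fun A =>
  cF (Nat.sub X Y) (fun G =>
  cF (Q A) (fun q => cfin l2 l3 l5 l7 T A G q)))))))))))

noncomputable def ck1 (O k E : ℕ) : ℕ :=
  cF (Nat.sub E 1024) (fun el => cF (Nat.add E 1024) (fun eh =>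
  cand (cond (Nat.ble (Nat.mul (Nat.succ k) eh) O) 1 0) (
  cand (cond (Nat.ble (Nat.mul el (cpw O (Nat.sub (Nat.mul 2 O) el) 1 12 k)) (Nat.mul O O)) 1 0)
    (cond (Nat.ble (Nat.mul O O) (Nat.mul eh (cpw O (Nat.sub (Nat.mul 2 O) eh) 0 12 k))) 1 0))))

noncomputable def ck (O l2 l3 l5 l7 T : ℕ) (Q : ℕ → ℕ) (k : ℕ) : ℕ :=
  cF (citer O k (Nat.add (Nat.div 2600 k) 4) 0) (fun E =>
    cand (ck1 O k E) (ck2 O l2 l3 l5 l7 T Q k E))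

noncomputable def clp (f : ℕ → ℕ) (m : ℕ) : ℕ → ℕ :=
  Nat.rec (fun _ => 1) (fun _ ih k => cand (f k) (cF (Nat.succ k) ih)) m

noncomputable def ctop (K : ℕ → ℕ → ℕ → ℕ → ℕ → ℕ → ℕ) : ℕ :=
  cF (Nat.pow 3 757) (fun O =>
  cF (clog O (Nat.div O 2)) (fun l2 =>
  cF (Nat.add l2 (clog O (Nat.div O 3))) (fun l3 =>
  cF (Nat.add (Nat.mul 2 l2) (clog O (Nat.div O 5))) (fun l5 =>
  cF (clog O (Nat.div O 8)) (fun m7 =>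
  cand (cond (Nat.ble m7 (Nat.mul 3 l2)) 1 0) (
  cF (Nat.sub (Nat.mul 3 l2) m7) (fun l7 =>
  cF (Nat.add l2 l5) (fun T => K O l2 l3 l5 l7 T))))))))

noncomputable def cwarm (T l2 w : ℕ) (K : (ℕ → ℕ) → ℕ) : ℕ :=
  ceu (Nat.pow 2 w) (fun q0 q1 =>
    cF (Nat.rec T (fun _ _ => Nat.mul (cround (Nat.mul q0 l2) T) T) q0) (fun t0 =>
    cF (Nat.mul (cround (Nat.mul q1 l2) T) T) (fun t1 =>
    K (fun A => cF (cdist (Nat.mul q0 A) t0) (fun r0 => cF (cdist (Nat.mul q1 A) t1) (fun r1 =>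
      ceu (Nat.pow 2 552) (fun _ q => q) 1000 r0 r1 q0 q1)))))) 1000 T l2 0 1

noncomputable def cchunk (w k m : ℕ) : ℕ :=
  ctop (fun O l2 l3 l5 l7 T => cwarm T l2 w (fun Q => clp (ck O l2 l3 l5 l7 T Q) m k))
end

section
set_option maxRecDepth 100000
theorem cc0 : Nat.ble 1 (cchunk 0 3 97) = true := by decide +kernel
theorem cc1 : Nat.ble 1 (cchunk 40 100 100) = true := by decide +kernel
theorem cc2 : Nat.ble 1 (cchunk 90 200 100) = true := by decide +kernel
theorem cc3 : Nat.ble 1 (cchunk 140 300 100) = true := by decide +kernel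
theorem cc4 : Nat.ble 1 (cchunk 190 400 100) = true := by decide +kernel
theorem cc5 : Nat.ble 1 (cchunk 240 500 100) = true := by decide +kernel
theorem cc6 : Nat.ble 1 (cchunk 290 600 100) = true := by decide +kernel
theorem cc7 : Nat.ble 1 (cchunk 340 700 100) = true := by decide +kernel
theorem cc8 : Nat.ble 1 (cchunk 390 800 100) = true := by decide +kernel
theorem cc9 : Nat.ble 1 (cchunk 440 900 100) = true := by decide +kernel
theorem cc10 : Nat.ble 1 (cchunk 490 1000 70) = true := by decide +kernel
theorem cc11 : Nat.ble 1 (cchunk 552 1070 468) = true := by decide +kernel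
end

section

theorem cF_eq (x : ℕ) (f : ℕ → ℕ) : cF x f = f x := by cases x <;> rfl

theorem cpw_zero (O x c k : ℕ) : cpw O x c 0 k = O := rfl
theorem cpw_succ0 (O x c fuel : ℕ) : cpw O x c (fuel+1) 0 = O := rfl
theorem cpw_succ (O x c fuel k : ℕ) : cpw O x c (fuel+1) (k+1) =
    if (k+1) % 2 = 0 then (cpw O x c fuel ((k+1)/2))^2 / O + c else
     ((cpw O x c fuel ((k+1)/2))^2 / O + c) * x / O + c := by
  have h : cpw O x c (fuel+1) (k+1) = cF (cF (Nat.div (k+1) 2) (cpw O x c fuel)) (fun h =>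
      cF (Nat.add (Nat.div (Nat.mul h h) O) c) (fun h2 =>
        Nat.rec h2 (fun _ _ => Nat.add (Nat.div (Nat.mul h2 x) O) c) (Nat.mod (k+1) 2))) := rfl
  rw [h, cF_eq, cF_eq, cF_eq]
  have e : Nat.mod (k+1) 2 = (k+1) % 2 := rfl
  rw [e]
  rcases Nat.mod_two_eq_zero_or_one (k+1) with h | h <;> rw [h, pow_two]
  · rw [if_pos rfl]; rfl
  · rw [if_neg (by norm_num)]; rfl

theorem fdiv_le (a O : ℕ) (hO : 0 < O) : ((a / O : ℕ) : ℝ) * O ≤ a := by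
  exact_mod_cast Nat.div_mul_le_self a O
theorem lt_fdiv (a O : ℕ) (hO : 0 < O) : (a : ℝ) < (((a / O : ℕ) : ℝ) + 1) * O := by
  have h : a < (a / O + 1) * O := by
    have h1 := Nat.div_add_mod a O
    have h2 := Nat.mod_lt a hO
    nlinarith
  exact_mod_cast h

theorem cpw_lower (O x : ℕ) (hO : 0 < O) (fuel : ℕ) : ∀ k, k < 2^fuel →
    (cpw O x 0 fuel k : ℝ) / O ≤ ((x:ℝ)/O)^k := by
  have hO' : (0:ℝ) < O := by exact_mod_cast hO
  induction fuel with
  | zero => intro k hk; have : k = 0 := by simpa using hk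
            subst this; rw [cpw_zero, pow_zero, div_self hO'.ne']
  | succ f ih =>
    intro k hk
    cases k with
    | zero => rw [cpw_succ0, pow_zero, div_self hO'.ne']
    | succ k =>
      have h := ih ((k+1)/2) (by rw [pow_succ] at hk; omega)
      rw [cpw_succ]
      set y := cpw O x 0 f ((k+1)/2)
      have h2 : ((y^2/O + 0 : ℕ):ℝ)/O ≤ ((x:ℝ)/O)^(2*((k+1)/2)) := by
        rw [add_zero, mul_comm, pow_mul]
        have := fdiv_le (y^2) O hO
        calc ((y^2/O : ℕ):ℝ)/O ≤ ((y:ℝ)/O)^2 := by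
              rw [div_pow, div_le_div_iff₀ hO' (by positivity)]
              push_cast at this ⊢
              nlinarith
          _ ≤ _ := pow_le_pow_left₀ (by positivity) h 2
      split_ifs with hp
      · rwa [show 2*((k+1)/2) = k+1 by omega] at h2
      · set z := y^2/O+0
        have := fdiv_le (z*x) O hO
        rw [show k+1 = 2*((k+1)/2)+1 by omega, pow_succ, add_zero]
        calc ((z*x/O : ℕ):ℝ)/O ≤ ((z:ℝ)/O)*(x/O) := by
              rw [div_mul_div_comm, div_le_div_iff₀ hO' (by positivity)]
              push_cast at this ⊢
              nlinarith
          _ ≤ _ := by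
            exact mul_le_mul_of_nonneg_right h2 (by positivity)

theorem cpw_upper (O x : ℕ) (hO : 0 < O) (fuel : ℕ) : ∀ k, k < 2^fuel →
    ((x:ℝ)/O)^k ≤ (cpw O x 1 fuel k : ℝ) / O := by
  have hO' : (0:ℝ) < O := by exact_mod_cast hO
  induction fuel with
  | zero => intro k hk; have : k = 0 := by simpa using hk
            subst this; rw [cpw_zero, pow_zero, div_self hO'.ne']
  | succ f ih =>
    intro k hk
    cases k with
    | zero => rw [cpw_succ0, pow_zero, div_self hO'.ne']
    | succ k =>
      have h := ih ((k+1)/2) (by rw [pow_succ] at hk; omega)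
      rw [cpw_succ]
      set y := cpw O x 1 f ((k+1)/2)
      have h2 : ((x:ℝ)/O)^(2*((k+1)/2)) ≤ ((y^2/O + 1 : ℕ):ℝ)/O := by
        rw [mul_comm, pow_mul]
        have := lt_fdiv (y^2) O hO
        calc _ ≤ ((y:ℝ)/O)^2 := pow_le_pow_left₀ (by positivity) h 2
          _ ≤ _ := by
              rw [div_pow, div_le_div_iff₀ (by positivity) hO']
              push_cast at this ⊢
              nlinarith
      split_ifs with hp
      · rwa [show 2*((k+1)/2) = k+1 by omega] at h2
      · set z := y^2/O+1
        have := lt_fdiv (z*x) O hO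
        rw [show k+1 = 2*((k+1)/2)+1 by omega, pow_succ]
        calc _ ≤ ((z:ℝ)/O)*(x/O) := by
              exact mul_le_mul_of_nonneg_right h2 (by positivity)
          _ ≤ _ := by
              rw [div_mul_div_comm, div_le_div_iff₀ (by positivity) hO']
              push_cast at this ⊢
              nlinarith

theorem f_mono (k : ℕ) (x y : ℝ) (hx : 0 ≤ x) (hxy : x < y) (hy : ((k:ℝ)+1)*y ≤ 1) :
    x*(2-x)^k < y*(2-y)^k := by
  have hk0 : (0:ℝ) ≤ k := by positivity
  have hy1 : y ≤ 1 := by nlinarith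
  have h2x : 0 < 2 - x := by linarith
  have hb := one_add_mul_le_pow (a := (2-y)/(2-x) - 1) (by
    have : 0 ≤ (2-y)/(2-x) := by apply div_nonneg <;> linarith
    linarith) k
  rw [add_sub_cancel, div_pow] at hb
  have hp : 0 < (2-x)^k := by positivity
  rw [le_div_iff₀ hp] at hb
  have key : x < y * (1 + k*((2-y)/(2-x)-1)) := by
    have e : (2-y)/(2-x)-1 = -(y-x)/(2-x) := by field_simp; ring
    rw [e]
    have e2 : y * (1 + k*(-(y-x)/(2-x))) - x = (y-x)*(1-k*y/(2-x)) := by field_simp; ring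
    have : k*y/(2-x) < 1 := by rw [div_lt_one h2x]; nlinarith
    nlinarith [mul_pos (sub_pos.2 hxy) (sub_pos.2 this)]
  calc x*(2-x)^k < (y * (1 + k*((2-y)/(2-x)-1))) * (2-x)^k := mul_lt_mul_of_pos_right key hp
    _ = y * ((1 + k*((2-y)/(2-x)-1)) * (2-x)^k) := by ring
    _ ≤ _ := mul_le_mul_of_nonneg_left hb (by linarith)

theorem cand_iff (a b : ℕ) : 1 ≤ cand a b ↔ 1 ≤ a ∧ 1 ≤ b := by
  cases a with
  | zero => show 1 ≤ 0 ↔ _; simp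
  | succ a => show 1 ≤ b ↔ _; simp
theorem cond_iff (b : Bool) : 1 ≤ (cond b 1 0 : ℕ) ↔ b = true := by cases b <;> simp
theorem ble_iff (a b : ℕ) : Nat.ble a b = true ↔ a ≤ b := by rw [Nat.ble_eq]

set_option maxRecDepth 100000 in
theorem ck1_sound (O k E : ℕ) (e : ℝ) (hO : 0 < O) (hk : k < 2^12) (he0 : 0 < e)
    (he1 : ((k:ℝ)+1)*e ≤ 1) (hf : e*(2-e)^k = 1) (h : 1 ≤ ck1 O k E) :
    |(E:ℝ) - O*e| ≤ 1024 ∧ (k+1)*E ≤ O := by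
  have hO' : (0:ℝ) < O := by exact_mod_cast hO
  unfold ck1 at h
  rw [cF_eq, cF_eq, cand_iff, cand_iff, cond_iff, cond_iff, cond_iff, ble_iff, ble_iff, ble_iff] at h
  simp only [Nat.add_eq, Nat.mul_eq, Nat.sub_eq, Nat.succ_eq_add_one] at h
  generalize hel : E - 1024 = el at h
  generalize heh : E + 1024 = eh at h
  obtain ⟨g1, g2, g3⟩ := h
  have hEO : eh ≤ O := by nlinarith
  have u := cpw_upper O (2*O-el) hO 12 k hk
  have l := cpw_lower O (2*O-eh) hO 12 k hk
  rw [Nat.cast_sub (by omega)] at u l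
  have c1 : ((2*O:ℕ):ℝ) - el = O * (2 - el/O) := by push_cast; field_simp
  have c2 : ((2*O:ℕ):ℝ) - eh = O * (2 - eh/O) := by push_cast; field_simp
  rw [c1, mul_div_cancel_left₀ _ hO'.ne'] at u
  rw [c2, mul_div_cancel_left₀ _ hO'.ne'] at l
  have g1' : ((k:ℝ)+1)*(eh/O) ≤ 1 := by
    rw [← mul_div_assoc, div_le_one hO']; exact_mod_cast g1
  have hle : (el:ℝ)/O ≤ eh/O := by
    apply div_le_div_of_nonneg_right _ hO'.le
    have : el ≤ eh := by omega
    exact_mod_cast this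
  have lo : (el:ℝ)/O ≤ e := by
    by_contra hc
    push Not at hc
    have m := f_mono k e (el/O) he0.le hc (by
      have : (0:ℝ) ≤ (k:ℝ)+1 := by positivity
      nlinarith)
    rw [hf] at m
    have : (el:ℝ)/O * (2 - el/O)^k ≤ (el:ℝ)/O * ((cpw O (2*O-el) 1 12 k : ℝ)/O) :=
      mul_le_mul_of_nonneg_left u (by positivity)
    have t : (el:ℝ)/O * ((cpw O (2*O-el) 1 12 k : ℝ)/O) ≤ 1 := by
      rw [div_mul_div_comm, div_le_one (by positivity)]; exact_mod_cast g2
    linarith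
  have hi : e ≤ eh/O := by
    by_contra hc
    push Not at hc
    have m := f_mono k (eh/O) e (by positivity) hc he1
    rw [hf] at m
    have : (eh:ℝ)/O * ((cpw O (2*O-eh) 0 12 k : ℝ)/O) ≤ (eh:ℝ)/O * (2 - eh/O)^k :=
      mul_le_mul_of_nonneg_left l (by positivity)
    have t : 1 ≤ (eh:ℝ)/O * ((cpw O (2*O-eh) 0 12 k : ℝ)/O) := by
      rw [div_mul_div_comm, one_le_div (by positivity)]; exact_mod_cast g3
    linarith
  rw [div_le_iff₀ hO'] at lo
  rw [le_div_iff₀ hO'] at hi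
  constructor
  · have a1 : (E:ℝ) ≤ el + 1024 := by
      have : E ≤ el + 1024 := by omega
      exact_mod_cast this
    have a2 : (eh:ℝ) = E + 1024 := by rw [← heh]; push_cast; ring
    rw [abs_le]; constructor <;> linarith
  · nlinarith

theorem cml_zero (O t i p s : ℕ) : cml O t 0 i p s = s := rfl
theorem cml_stop (O t f i s : ℕ) : cml O t (f+1) i 0 s = s := rfl
theorem cml_succ (O t f i p s : ℕ) : cml O t (f+1) i (p+1) s =
    cml O t f (i+1) ((p+1)*t/O) (s + (p+1)/i) := by
  have h : cml O t (f+1) i (p+1) s = cF (Nat.div (Nat.mul (p+1) t) O) (fun p' => cF (Nat.add s (Nat.div (p+1) i)) (fun s' =>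
      cF (Nat.add i 1) (fun i' => cml O t f i' p' s'))) := rfl
  rw [h, cF_eq, cF_eq, cF_eq]; rfl

theorem cml_end (O : ℕ) (x : ℝ) (j : ℕ) (s : ℝ) (hx0 : 0 ≤ x) (hx : x ≤ 1/2)
    (hp : O * x^(j+1) ≤ 2)
    (hs1 : s ≤ O * ∑ a ∈ Finset.range j, x^(a+1)/((a:ℝ)+1))
    (hs2 : O * ∑ a ∈ Finset.range j, x^(a+1)/((a:ℝ)+1) ≤ s + 3*j) :
    |s + O * Real.log (1-x)| ≤ 3*j+4 := by
  have h := Real.abs_log_sub_add_sum_range_le (x := x) (by rw [abs_of_nonneg hx0]; linarith) j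
  rw [abs_of_nonneg hx0] at h
  have h1 : x^(j+1)/(1-x) ≤ 2*x^(j+1) := by
    rw [div_le_iff₀ (by linarith)]
    have : 0 ≤ x^(j+1) := by positivity
    nlinarith
  set S := ∑ a ∈ Finset.range j, x^(a+1)/((a:ℝ)+1)
  have h2 : |O * (S + Real.log (1-x))| ≤ 4 := by
    rw [abs_mul, abs_of_nonneg (by positivity : (0:ℝ) ≤ O)]
    calc (O:ℝ) * _ ≤ O * (2*x^(j+1)) := mul_le_mul_of_nonneg_left (h.trans h1) (by positivity)
      _ ≤ 4 := by linarith
  rw [abs_le] at h2 ⊢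
  constructor <;> nlinarith [h2.1, h2.2]

theorem cml_spec (O t : ℕ) (x : ℝ) (hO : 0 < O) (hxt : (t:ℝ) = x * O) (hx0 : 0 ≤ x) (hx : x ≤ 1/2) (fuel : ℕ) :
    ∀ j p s : ℕ, (O:ℝ) ≤ 2^(j+1+fuel) → (p:ℝ) ≤ O * x^(j+1) → O * x^(j+1) ≤ p + 2 →
    ((s:ℝ) ≤ O * ∑ a ∈ Finset.range j, x^(a+1)/((a:ℝ)+1)) →
    (O * ∑ a ∈ Finset.range j, x^(a+1)/((a:ℝ)+1) ≤ s + 3*j) →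
    |(cml O t fuel (j+1) p s : ℝ) + O * Real.log (1-x)| ≤ 3*(j+fuel)+4 := by
  have hO' : (0:ℝ) < O := by exact_mod_cast hO
  induction fuel with
  | zero =>
    intro j p s hO2 hp1 hp2 hs1 hs2
    rw [cml_zero]
    have : O * x^(j+1) ≤ 2 := by
      have e : x^(j+1) ≤ (1/2)^(j+1) := pow_le_pow_left₀ hx0 hx _
      calc O * x^(j+1) ≤ 2^(j+1+0) * (1/2)^(j+1) := mul_le_mul hO2 e (by positivity) (by positivity)
        _ = 1 := by rw [add_zero, ← mul_pow]; norm_num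
        _ ≤ 2 := by norm_num
    simpa using cml_end O x j s hx0 hx this hs1 hs2
  | succ f ih =>
    intro j p s hO2 hp1 hp2 hs1 hs2
    cases p with
    | zero =>
      rw [cml_stop]
      refine (cml_end O x j s hx0 hx (by simpa using hp2) hs1 hs2).trans ?_
      push_cast; linarith [Nat.cast_nonneg (α := ℝ) f]
    | succ p =>
      rw [cml_succ]
      set P := p+1
      have d1 := fdiv_le (P*t) O hO
      have d2 := lt_fdiv (P*t) O hO
      have d3 := fdiv_le P (j+1) (by omega)
      have d4 := lt_fdiv P (j+1) (by omega)
      push_cast at d1 d2 d3 d4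
      rw [hxt, ← mul_assoc] at d1 d2
      have e1 := le_of_mul_le_mul_right d1 hO'
      have e2 := lt_of_mul_lt_mul_right d2 hO'.le
      have hj : (0:ℝ) < (j:ℝ)+1 := by positivity
      have := ih (j+1) (P*t/O) (s + P/(j+1)) (by convert hO2 using 2; omega)
        (by rw [pow_succ x (j+1)]; nlinarith)
        (by rw [pow_succ x (j+1)]; nlinarith)
        (by
          rw [Finset.sum_range_succ]; push_cast
          have : ((P/(j+1):ℕ):ℝ) ≤ O * (x^(j+1)/((j:ℝ)+1)) := by
            rw [← mul_div_assoc, le_div_iff₀ hj]; linarith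
          linarith)
        (by
          rw [Finset.sum_range_succ]; push_cast
          have : O * (x^(j+1)/((j:ℝ)+1)) ≤ ((P/(j+1):ℕ):ℝ) + 3 := by
            rw [← mul_div_assoc, div_le_iff₀ hj]
            have : (1:ℝ) ≤ (j:ℝ)+1 := by linarith [Nat.cast_nonneg (α := ℝ) j]
            nlinarith
          linarith)
      push_cast at this ⊢
      rw [show (j:ℝ)+1+f = j+(f+1) by ring] at this
      exact this

set_option maxRecDepth 100000 in
set_option exponentiation.threshold 3000 in
theorem clog_spec (O t : ℕ) (hO : 0 < O) (hO2 : O ≤ 2^1200) (ht : 2*t ≤ O) (X R : ℝ) (hX : X ≤ 1/2)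
    (hR : |(t:ℝ) - O*X| ≤ R) :
    |(clog O t : ℝ) + O * Real.log (1-X)| ≤ 4000 + 2*R := by
  have hO' : (0:ℝ) < O := by exact_mod_cast hO
  have e : clog O t = cml O t 1300 (0+1) t 0 := by unfold clog; rw [cF_eq]
  set x : ℝ := t/O with hx
  have hxt : (t:ℝ) = x*O := by rw [hx]; field_simp
  have hx0 : 0 ≤ x := by positivity
  have hx2 : x ≤ 1/2 := by
    rw [hx, div_le_iff₀ hO']
    have : (2:ℝ)*t ≤ O := by exact_mod_cast ht
    linarith
  have h := cml_spec O t x hO hxt hx0 hx2 1300 0 t 0 (by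
    have : O ≤ 2^(0+1+1300) := hO2.trans (Nat.pow_le_pow_right (by norm_num) (by norm_num))
    exact_mod_cast this) (by rw [hxt]; simp [mul_comm]) (by rw [hxt]; ring_nf; linarith) (by simp) (by simp)
  rw [← e] at h
  have hl : |Real.log (1-X) - Real.log (1-x)| ≤ 2*|x-X| := by
    have p1 : 0 < 1-X := by linarith
    have p2 : 0 < 1-x := by linarith
    have a1 := Real.log_le_sub_one_of_pos (div_pos p1 p2)
    have a2 := Real.log_le_sub_one_of_pos (div_pos p2 p1)
    rw [Real.log_div p1.ne' p2.ne'] at a1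
    rw [Real.log_div p2.ne' p1.ne'] at a2
    have b1 : (1-X)/(1-x) - 1 ≤ 2*|x-X| := by
      rw [sub_le_iff_le_add, div_le_iff₀ p2]
      nlinarith [le_abs_self (x-X), abs_nonneg (x-X)]
    have b2 : (1-x)/(1-X) - 1 ≤ 2*|x-X| := by
      rw [sub_le_iff_le_add, div_le_iff₀ p1]
      nlinarith [neg_abs_le (x-X), abs_nonneg (x-X)]
    rw [abs_le]; constructor <;> linarith
  have hl2 : |O * (Real.log (1-X) - Real.log (1-x))| ≤ 2*R := by
    rw [abs_mul, abs_of_pos hO']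
    have : O * |x-X| = |(t:ℝ)-O*X| := by
      rw [hxt, ← abs_of_pos hO', ← abs_mul, abs_of_pos hO']; congr 1; ring
    nlinarith
  have : (clog O t : ℝ) + O * Real.log (1-X) =
    ((clog O t : ℝ) + O * Real.log (1-x)) + O * (Real.log (1-X) - Real.log (1-x)) := by ring
  rw [this]
  refine (abs_add_le _ _).trans ?_
  have : |(clog O t : ℝ) + O * Real.log (1-x)| ≤ 4000 := h.trans (by norm_num)
  linarith
end

section
set_option exponentiation.threshold 3000
set_option maxRecDepth 20000

theorem cg1_sound (T q B G K : ℕ) (N : ℤ) (hN : |N*T - q*G| ≤ B) (h : 1 ≤ cg1 T q B G K) : 1 ≤ K := by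
  unfold cg1 at h
  rw [cF_eq] at h
  generalize h1 : Nat.ble (Nat.succ B) (Nat.mod (Nat.mul q G) T) = c1 at h
  generalize h2 : Nat.ble (Nat.succ (Nat.add (Nat.mod (Nat.mul q G) T) B)) T = c2 at h
  cases c1 with
  | false => exact h
  | true => cases c2 with
    | false => exact h
    | true =>
      exfalso
      rw [ble_iff] at h1 h2
      have h1' : B + 1 ≤ (q*G) % T := h1
      have h2' : (q*G) % T + B + 1 ≤ T := h2
      have h3 := Nat.div_add_mod (q*G) T
      generalize (q*G) % T = x at *
      generalize (q*G) / T = w at *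
      have h3' : (T:ℤ)*w + x = q*G := by exact_mod_cast h3
      rw [← h3', abs_le] at hN
      have e : N*T - (T*w+x) = (N-w)*T - x := by ring
      rw [e] at hN
      zify at h1' h2'
      rcases le_or_gt (N-w) 0 with hs | hs
      · nlinarith [hN.1]
      · have : 1 ≤ N - w := hs
        nlinarith [hN.2]

theorem cg2_sound (T q p B x n' d : ℕ) (h0 : 0 < n') (h1 : n' < 2^512)
    (hN : |((n':ℤ)*p - q*d) * T| ≤ q*x+B) : ¬ 1 ≤ cg2 T q p B x := by
  intro h
  unfold cg2 at h
  generalize e1 : Nat.ble (Nat.succ (Nat.add (Nat.mul q x) B)) T = c1 at h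
  generalize e2 : Nat.beq (Nat.gcd p q) 1 = c2 at h
  generalize e3 : Nat.ble (Nat.pow 2 512) q = c3 at h
  cases c1 with
  | false => exact absurd h (by simp)
  | true => cases c2 with
    | false => exact absurd h (by simp)
    | true => cases c3 with
      | false => exact absurd h (by simp)
      | true =>
        rw [ble_iff] at e1 e3
        have e1' : q*x+B+1 ≤ T := e1
        have e2' : Nat.gcd p q = 1 := Nat.eq_of_beq_eq_true e2
        rw [Nat.pow_eq] at e3
        generalize 2^512 = M at *
        have hz : (n':ℤ)*p - q*d = 0 := by
          by_contra hne
          have := Int.one_le_abs hne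
          rw [abs_mul, abs_of_nonneg (by positivity : (0:ℤ) ≤ T)] at hN
          zify at e1'
          nlinarith
        have : n'*p = q*d := by zify; linarith
        have hq : q ∣ n' := (Nat.Coprime.symm e2').dvd_of_dvd_mul_right ⟨d, this⟩
        have := Nat.le_of_dvd h0 hq
        omega

theorem cdist_eq (a b : ℕ) : (cdist a b : ℤ) = |(a:ℤ) - b| := by
  have : cdist a b = (a-b)+(b-a) := rfl
  rw [this]
  rcases le_total a b with h | h
  · rw [abs_of_nonpos (by omega)]; omega
  · rw [abs_of_nonneg (by omega)]; omega

theorem core_int (n d p q A T G B M S Z W : ℤ) (hn0 : 0 ≤ n) (hn : n ≤ M) (hq0 : 0 ≤ q) (hq : q ≤ S)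
    (hZ : |n*A-d*T-G| ≤ Z) (hB : B = M*|q*A-p*T| + W) (hW : S*Z ≤ W) :
    |(n*p-q*d)*T - q*G| ≤ B := by
  have e : (n*p-q*d)*T - q*G = q*(n*A-d*T-G) - n*(q*A-p*T) := by ring
  rw [e]
  refine (abs_sub _ _).trans ?_
  rw [abs_mul, abs_mul, abs_of_nonneg hn0, abs_of_nonneg hq0, hB]
  have : q*|n*A-d*T-G| ≤ S*Z := mul_le_mul hq hZ (abs_nonneg _) (by linarith)
  have : n*|q*A-p*T| ≤ M*|q*A-p*T| := mul_le_mul_of_nonneg_right hn (abs_nonneg _)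
  linarith

theorem core_int2 (n c d p q A T G B M S Z W : ℤ) (hn0 : 0 ≤ n-c) (hc : 0 ≤ c) (hn : n ≤ M) (hq0 : 0 ≤ q) (hq : q ≤ S)
    (hZ : |n*A-d*T-G| ≤ Z) (hB : B = M*|q*A-p*T| + W) (hW : S*Z ≤ W) :
    |((n-c)*p-q*d)*T| ≤ q*|G-c*A| + B := by
  have e : ((n-c)*p-q*d)*T = (((n-c)*p-q*d)*T - q*(G-c*A)) + q*(G-c*A) := by ring
  have := core_int (n-c) d p q A T (G-c*A) B M S Z W hn0 (by linarith) hq0 hq (by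
    rw [show (n-c)*A-d*T-(G-c*A) = n*A-d*T-G by ring]; exact hZ) hB hW
  rw [e]
  refine (abs_add_le _ _).trans ?_
  rw [abs_mul q, abs_of_nonneg hq0]
  linarith

theorem real_int (n d A T G O : ℕ) (a t g : ℝ) (hO : 0 < O) (hdn : d ≤ n) (hn : n < 2^512)
    (hA : |(A:ℝ) - O*a| ≤ 2^25) (hT : |(T:ℝ) - O*t| ≤ 2^25) (hG : |(G:ℝ)-O*g| ≤ 2^25)
    (h : |n*a-d*t-g| ≤ 1/O) : |(n:ℤ)*A-d*T-G| ≤ 2^540 := by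
  have hO' : (0:ℝ) < O := by exact_mod_cast hO
  have hn' : (n:ℝ)+1 ≤ 2^512 := by exact_mod_cast hn
  have hd' : (d:ℝ) ≤ n := by exact_mod_cast hdn
  have e : (n:ℝ)*A-d*T-G = n*(A-O*a) - d*(T-O*t) - (G-O*g) + O*(n*a-d*t-g) := by ring
  have h1 : |O*(n*a-d*t-g)| ≤ 1 := by
    rw [abs_mul, abs_of_pos hO']
    rw [le_div_iff₀ hO'] at h; linarith
  have h2 : |(n:ℝ)*(A-O*a)| ≤ n*2^25 := by
    rw [abs_mul, abs_of_nonneg (by positivity : (0:ℝ) ≤ n)]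
    exact mul_le_mul_of_nonneg_left hA (by positivity)
  have h3 : |(d:ℝ)*(T-O*t)| ≤ n*2^25 := by
    rw [abs_mul, abs_of_nonneg (by positivity : (0:ℝ) ≤ d)]
    exact mul_le_mul hd' hT (abs_nonneg _) (by positivity)
  have key : |(n:ℝ)*A-d*T-G| ≤ 2^540 := by
    rw [e]
    have : (2:ℝ)^540 = 2^512*2^28 := by rw [← pow_add]
    rw [this]
    rw [abs_le] at *
    generalize (2:ℝ)^512 = M at *
    have h0 : (0:ℝ) ≤ n := by positivity
    constructor <;> nlinarith [h1.1, h1.2, h2.1,h2.2,h3.1,h3.2,hG.1,hG.2]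
  exact_mod_cast key

theorem cfin_sound (l2 l3 l5 l7 T A G q n d O : ℕ) (b : ℕ) (a t g : ℝ) (hb : 1 ≤ b) (hb9 : b ≤ 9) (hO : 0 < O) (hdn : d ≤ n)
    (hn3 : 3 < n) (hn : n < 2^512)
    (hA : |(A:ℝ) - O*a| ≤ 2^22) (hT : |(T:ℝ) - O*t| ≤ 2^22) (hG : |(G:ℝ)-O*g| ≤ 2^24)
    (h2 : |(l2:ℝ)-O*Real.log 2| ≤ 2^20) (h3 : |(l3:ℝ)-O*Real.log 3| ≤ 2^20)
    (h5 : |(l5:ℝ)-O*Real.log 5| ≤ 2^20) (h7 : |(l7:ℝ)-O*Real.log 7| ≤ 2^20)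
    (h : |n*a-d*t-(Real.log b + g)| ≤ 1/O) : ¬ 1 ≤ cfin l2 l3 l5 l7 T A G q := by
  intro H
  unfold cfin at H
  rw [cF_eq, cF_eq] at H
  generalize hp : cround (Nat.mul q A) T = p at H
  generalize hB : Nat.add (Nat.mul (Nat.pow 2 512) (cdist (Nat.mul q A) (Nat.mul p T))) (Nat.pow 2 1120) = B at H
  simp only [cand_iff, cond_iff, ble_iff, Nat.add_eq, Nat.mul_eq, Nat.pow_eq] at H hB
  obtain ⟨H0, H1, H2, H3, H4, H5, H6, H7, H8, H9⟩ := H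
  have hB' : (B:ℤ) = 2^512 * |(q:ℤ)*A-p*T| + 2^1120 := by
    rw [← hB]; push_cast [cdist_eq]; rfl
  have hS : (q:ℤ) ≤ 2^570 := by exact_mod_cast H0
  have hSW : (2:ℤ)^570*2^540 ≤ 2^1120 := by
    rw [← pow_add]; exact pow_le_pow_right₀ (by norm_num) (by norm_num)
  have hnM : (n:ℤ) ≤ 2^512 := by exact_mod_cast hn.le
  have base : ∀ G' : ℕ, |(G':ℝ) - O*(Real.log b + g)| ≤ 2^25 → |(n:ℤ)*A-d*T-G'| ≤ 2^540 := fun G' hG' =>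
    real_int n d A T G' O a t (Real.log b + g) hO hdn hn (hA.trans (by norm_num)) (hT.trans (by norm_num)) hG' h
  have g1 : ∀ G' K : ℕ, |(G':ℝ) - O*(Real.log b + g)| ≤ 2^25 → 1 ≤ cg1 T q B G' K → 1 ≤ K := fun G' K hG' hh =>
    cg1_sound T q B G' K ((n:ℤ)*p-q*d)
      (core_int n d p q A T G' B _ _ _ _ (by positivity) hnM (by positivity) hS (base G' hG') hB' hSW) hh
  have g2 : ∀ G' c : ℕ, 0 < c → c ≤ 3 → |(G':ℝ) - O*(Real.log b + g)| ≤ 2^25 → ¬ 1 ≤ cg2 T q p B (cdist G' (c*A)) := by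
    intro G' c hc0 hc hG'
    apply cg2_sound T q p B _ (n-c) d (by omega) (by omega)
    have := core_int2 n c d p q A T G' B _ _ _ _ (by omega) (by positivity) hnM (by positivity) hS (base G' hG') hB' hSW
    rw [cdist_eq, Nat.cast_sub (by omega)]
    push_cast
    exact this
  have l4 : Real.log 4 = 2*Real.log 2 := by
    rw [show (4:ℝ) = 2^2 by norm_num, Real.log_pow]; norm_num
  have l8 : Real.log 8 = 3*Real.log 2 := by
    rw [show (8:ℝ) = 2^3 by norm_num, Real.log_pow]; norm_num
  have l9 : Real.log 9 = 2*Real.log 3 := by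
    rw [show (9:ℝ) = 3^2 by norm_num, Real.log_pow]; norm_num
  have l6 : Real.log 6 = Real.log 2 + Real.log 3 := by
    rw [show (6:ℝ) = 2*3 by norm_num, Real.log_mul (by norm_num) (by norm_num)]
  clear hSW hnM hS hB hB' H0 base h hn hA hT
  rw [abs_le] at h2 h3 h5 h7 hG
  obtain ⟨a2, b2⟩ := h2
  obtain ⟨a3, b3⟩ := h3
  obtain ⟨a5, b5⟩ := h5
  obtain ⟨a7, b7⟩ := h7
  obtain ⟨a0, b0⟩ := hG
  interval_cases b
  · exact absurd (g1 _ _ (by rw [abs_le]; push_cast; norm_num at *; constructor <;> linarith) H1) (by norm_num)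
  · exact absurd (g1 _ _ (by rw [abs_le]; push_cast; norm_num at *; constructor <;> linarith) H2) (by norm_num)
  · have e : |((l3+G : ℕ):ℝ) - O*(Real.log (3:ℕ) + g)| ≤ 2^25 := by
      rw [abs_le]; push_cast; norm_num at *; constructor <;> linarith
    exact g2 _ 2 (by norm_num) (by norm_num) e (g1 _ _ e H3)
  · exact absurd (g1 _ _ (by rw [abs_le]; push_cast; rw [l4]; norm_num at *; constructor <;> linarith) H4) (by norm_num)
  · exact absurd (g1 _ _ (by rw [abs_le]; push_cast; norm_num at *; constructor <;> linarith) H5) (by norm_num)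
  · have e : |((l2+l3+G : ℕ):ℝ) - O*(Real.log (6:ℕ) + g)| ≤ 2^25 := by
      rw [abs_le]; push_cast; rw [l6]; norm_num at *; constructor <;> linarith
    exact g2 _ 3 (by norm_num) (by norm_num) e (g1 _ _ e H6)
  · exact absurd (g1 _ _ (by rw [abs_le]; push_cast; norm_num at *; constructor <;> linarith) H7) (by norm_num)
  · exact absurd (g1 _ _ (by rw [abs_le]; push_cast; rw [l8]; norm_num at *; constructor <;> linarith) H8) (by norm_num)
  · exact absurd (g1 _ _ (by rw [abs_le]; push_cast; rw [l9]; norm_num at *; constructor <;> linarith) H9) (by norm_num)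
end

section
set_option exponentiation.threshold 3000
set_option maxRecDepth 20000

theorem ndiv_eq (a b : ℕ) : Nat.div a b = a / b := rfl

theorem fdiv_close (a c : ℕ) (y R : ℝ) (hc : 0 < c) (h : |(a:ℝ) - c*y| ≤ R*c) :
    |((a / c : ℕ):ℝ) - y| ≤ R + 1 := by
  have hc' : (0:ℝ) < c := by exact_mod_cast hc
  have h1 := fdiv_le a c hc
  have h2 := lt_fdiv a c hc
  rw [abs_le] at *
  generalize ((a / c : ℕ):ℝ) = z at *
  constructor
  · by_contra hcon
    push Not at hcon
    nlinarith [h.1]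
  · by_contra hcon
    push Not at hcon
    nlinarith [h.2]

theorem ck2_sound (O l2 l3 l5 l7 T k E n d b : ℕ) (Q : ℕ → ℕ) (e : ℝ) (hk : 3 ≤ k) (hk2 : k < 1538)
    (hO : 0 < O) (hO2 : O ≤ 2^1200)
    (he0 : 0 < e) (he1 : ((k:ℝ)+1)*e ≤ 1) (hE : |(E:ℝ)-O*e| ≤ 1024) (hE2 : (k+1)*E ≤ O)
    (hb : 1 ≤ b) (hb9 : b ≤ 9) (hdn : d ≤ n) (hn3 : 3 < n) (hn : n < 2^512)
    (h2 : |(l2:ℝ)-O*Real.log 2| ≤ 20000) (h3 : |(l3:ℝ)-O*Real.log 3| ≤ 20000)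
    (h5 : |(l5:ℝ)-O*Real.log 5| ≤ 20000) (h7 : |(l7:ℝ)-O*Real.log 7| ≤ 20000)
    (hT : |(T:ℝ)-O*Real.log 10| ≤ 40000)
    (h : |n*(Real.log 2 + Real.log (1-e/2)) - d*Real.log 10 - (Real.log b + (2*Real.log 2
      + Real.log (1-e/2) + Real.log (1-((k:ℝ)+1)*e/2) - Real.log 3 - Real.log (1-2*e/3) - Real.log (1-e)))| ≤ 1/O) :
    ¬ 1 ≤ ck2 O l2 l3 l5 l7 T Q k E := by
  intro H
  have hkr : (3:ℝ) ≤ k := by exact_mod_cast hk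
  have hkr2 : (k:ℝ) + 1 ≤ 1538 := by exact_mod_cast hk2
  have hE4 : 4*E ≤ O := by nlinarith
  have he4 : e ≤ 1/4 := by nlinarith
  unfold ck2 at H
  have M1 := clog_spec O (E/2) hO hO2 (by omega) (e/2) (2^20) (by linarith) (by
    have := fdiv_close E 2 (O*(e/2)) 1000 (by norm_num) (by
      push_cast; rw [show 2*(O*(e/2)) = O*e by ring]; linarith)
    linarith)
  have M2 := clog_spec O ((k+1)*E/2) hO hO2 (by omega) (((k:ℝ)+1)*e/2) (2^20) (by linarith) (by
    have := fdiv_close ((k+1)*E) 2 (O*(((k:ℝ)+1)*e/2)) 1000000 (by norm_num) (by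
      push_cast
      rw [show ((k:ℝ)+1)*E - 2*(O*(((k:ℝ)+1)*e/2)) = (k+1)*(E-O*e) by ring, abs_mul, abs_of_nonneg (by linarith)]
      have : ((k:ℝ)+1) * |(E:ℝ)-O*e| ≤ 1538*1024 := mul_le_mul hkr2 hE (abs_nonneg _) (by norm_num)
      linarith)
    linarith)
  have M3 := clog_spec O (2*E/3) hO hO2 (by omega) (2*e/3) (2^20) (by linarith) (by
    have := fdiv_close (2*E) 3 (O*(2*e/3)) 1000 (by norm_num) (by
      push_cast
      rw [show (2:ℝ)*E - 3*(O*(2*e/3)) = 2*(E-O*e) by ring, abs_mul, abs_of_pos (by norm_num : (0:ℝ) < 2)]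
      linarith)
    linarith)
  have M4 := clog_spec O E hO hO2 (by omega) e (2^20) (by linarith) (by linarith)
  simp only [cF_eq, cand_iff, cond_iff, ble_iff, Nat.add_eq, Nat.mul_eq, Nat.sub_eq, ndiv_eq, Nat.succ_eq_add_one] at H
  generalize clog O (E/2) = m1 at *
  generalize clog O ((k+1)*E/2) = m2 at *
  generalize clog O (2*E/3) = m3 at *
  generalize clog O E = m4 at *
  obtain ⟨H1, H2, H3⟩ := H
  refine cfin_sound l2 l3 l5 l7 T _ _ _ n d O b _ _ _ hb hb9 hO hdn hn3 hn ?_ ?_ ?_ ?_ ?_ ?_ ?_ h H3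
  · rw [Nat.cast_sub H1]; rw [abs_le] at *
    constructor <;> linarith [h2.1, h2.2, M1.1, M1.2]
  · exact hT.trans (by norm_num)
  · rw [Nat.cast_sub H2]; push_cast; rw [abs_le] at *
    constructor <;> linarith [h2.1, h2.2, h3.1, h3.2, M1.1, M1.2, M2.1, M2.2, M3.1, M3.2, M4.1, M4.2]
  · exact h2.trans (by norm_num)
  · exact h3.trans (by norm_num)
  · exact h5.trans (by norm_num)
  · exact h7.trans (by norm_num)

theorem clp_sound (f : ℕ → ℕ) (m : ℕ) : ∀ k, 1 ≤ clp f m k → ∀ j, k ≤ j → j < k + m → 1 ≤ f j := by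
  induction m with
  | zero => intro k _ j h1 h2; omega
  | succ m ih =>
    intro k h j h1 h2
    have h' : 1 ≤ cand (f k) (cF (Nat.succ k) (clp f m)) := h
    rw [cand_iff, cF_eq] at h'
    rcases Nat.eq_or_lt_of_le h1 with e | e
    · rw [← e]; exact h'.1
    · exact ih _ h'.2 j e (by omega)

theorem ceu_sound (B : ℕ) (K : ℕ → ℕ → ℕ) (fuel : ℕ) : ∀ r0 r1 q0 q1, 1 ≤ ceu B K fuel r0 r1 q0 q1 → ∃ a b, 1 ≤ K a b := by
  induction fuel with
  | zero => intro r0 r1 q0 q1 h; exact ⟨q0, q1, h⟩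
  | succ f ih =>
    intro r0 r1 q0 q1 h
    have h' : 1 ≤ (Nat.rec (K q0 q1) (fun _ _ => cF (Nat.mod r0 r1) (fun r2 =>
      cF (Nat.add (Nat.mul (Nat.div r0 r1) q1) q0) (fun q2 => ceu B K f r1 r2 q1 q2))) (Nat.sub B q1) : ℕ) := h
    generalize Nat.sub B q1 = z at h'
    cases z with
    | zero => exact ⟨q0, q1, h'⟩
    | succ z =>
      have h'' : 1 ≤ cF (Nat.mod r0 r1) (fun r2 =>
      cF (Nat.add (Nat.mul (Nat.div r0 r1) q1) q0) (fun q2 => ceu B K f r1 r2 q1 q2)) := h'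
      rw [cF_eq, cF_eq] at h''
      exact ih _ _ _ _ h''

theorem cwarm_sound (T l2 w : ℕ) (K : (ℕ → ℕ) → ℕ) (h : 1 ≤ cwarm T l2 w K) : ∃ Q, 1 ≤ K Q := by
  unfold cwarm at h
  obtain ⟨a, b, h⟩ := ceu_sound _ _ _ _ _ _ _ h
  rw [cF_eq, cF_eq] at h
  exact ⟨_, h⟩

theorem O_le : (3:ℕ)^757 ≤ 2^1200 := by norm_num

theorem ctop_sound (K : ℕ → ℕ → ℕ → ℕ → ℕ → ℕ → ℕ) (h : 1 ≤ ctop K) :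
    ∃ l2 l3 l5 l7 T : ℕ, 1 ≤ K (3^757) l2 l3 l5 l7 T ∧
     |(l2:ℝ)-(3^757:ℕ)*Real.log 2| ≤ 20000 ∧ |(l3:ℝ)-(3^757:ℕ)*Real.log 3| ≤ 20000 ∧
     |(l5:ℝ)-(3^757:ℕ)*Real.log 5| ≤ 20000 ∧ |(l7:ℝ)-(3^757:ℕ)*Real.log 7| ≤ 20000 ∧
     |(T:ℝ)-(3^757:ℕ)*Real.log 10| ≤ 40000 := by
  unfold ctop at h
  simp only [cF_eq, cand_iff, cond_iff, ble_iff, Nat.add_eq, Nat.mul_eq, Nat.sub_eq, ndiv_eq, Nat.pow_eq] at h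
  have hO2 := O_le
  have hO : 0 < (3:ℕ)^757 := by positivity
  generalize (3:ℕ)^757 = O at *
  have cl : ∀ c : ℕ, 2 ≤ c → |(clog O (O/c):ℝ) + O*Real.log (1-1/(c:ℝ))| ≤ 4002 := by
    intro c hc
    have hcr : (2:ℝ) ≤ c := by exact_mod_cast hc
    have hle : O/c ≤ O/2 := Nat.div_le_div_left hc (by norm_num)
    have := clog_spec O (O/c) hO hO2 (by omega) (1/(c:ℝ)) 1 (by
      rw [div_le_div_iff₀ (by linarith) (by norm_num)]; linarith) (by
      have := fdiv_close O c (O*(1/(c:ℝ))) 0 (by omega) (by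
        rw [show (O:ℝ) - c*(O*(1/(c:ℝ))) = 0 by field_simp; ring]; simp)
      linarith)
    linarith
  have c2 := cl 2 (by norm_num)
  have c3 := cl 3 (by norm_num)
  have c5 := cl 5 (by norm_num)
  have c8 := cl 8 (by norm_num)
  have e2 : Real.log (1-1/((2:ℕ):ℝ)) = - Real.log 2 := by
    rw [← Real.log_inv]; norm_num
  have e3 : Real.log (1-1/((3:ℕ):ℝ)) = Real.log 2 - Real.log 3 := by
    rw [← Real.log_div (by norm_num) (by norm_num)]; norm_num
  have l4 : Real.log 4 = 2*Real.log 2 := by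
    rw [show (4:ℝ) = 2^2 by norm_num, Real.log_pow]; norm_num
  have l8 : Real.log 8 = 3*Real.log 2 := by
    rw [show (8:ℝ) = 2^3 by norm_num, Real.log_pow]; norm_num
  have l10 : Real.log 10 = Real.log 2 + Real.log 5 := by
    rw [show (10:ℝ) = 2*5 by norm_num, Real.log_mul (by norm_num) (by norm_num)]
  have e5 : Real.log (1-1/((5:ℕ):ℝ)) = 2*Real.log 2 - Real.log 5 := by
    rw [← l4, ← Real.log_div (by norm_num) (by norm_num)]; norm_num
  have e8 : Real.log (1-1/((8:ℕ):ℝ)) = Real.log 7 - 3*Real.log 2 := by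
    rw [← l8, ← Real.log_div (by norm_num) (by norm_num)]; norm_num
  rw [e2] at c2; rw [e3] at c3; rw [e5] at c5; rw [e8] at c8
  clear cl
  generalize clog O (O/2) = l2 at *
  generalize clog O (O/3) = m3 at *
  generalize clog O (O/5) = m5 at *
  generalize clog O (O/8) = m7 at *
  obtain ⟨H1, H2⟩ := h
  refine ⟨_, _, _, _, _, H2, ?_⟩
  rw [Nat.cast_sub H1, l10]
  push_cast
  simp only [abs_le] at *
  refine ⟨⟨?_, ?_⟩, ⟨?_, ?_⟩, ⟨?_, ?_⟩, ⟨?_, ?_⟩, ⟨?_, ?_⟩⟩ <;>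
   linarith [c2.1, c2.2, c3.1, c3.2, c5.1, c5.2, c8.1, c8.2]

theorem cchunk_sound (w k0 m k n d b : ℕ) (e : ℝ) (H : Nat.ble 1 (cchunk w k0 m) = true)
    (hk0 : k0 ≤ k) (hkm : k < k0 + m) (hk : 3 ≤ k) (hk2 : k < 1538)
    (he0 : 0 < e) (he1 : ((k:ℝ)+1)*e ≤ 1) (hf : e*(2-e)^k = 1)
    (hb : 1 ≤ b) (hb9 : b ≤ 9) (hdn : d ≤ n) (hn3 : 3 < n) (hn : n < 2^512)
    (h : |n*(Real.log 2 + Real.log (1-e/2)) - d*Real.log 10 - (Real.log b + (2*Real.log 2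
      + Real.log (1-e/2) + Real.log (1-((k:ℝ)+1)*e/2) - Real.log 3 - Real.log (1-2*e/3) - Real.log (1-e)))| ≤ 1/(3^757:ℕ)) :
    False := by
  rw [ble_iff] at H
  unfold cchunk at H
  obtain ⟨l2, l3, l5, l7, T, H, h2, h3, h5, h7, hT⟩ := ctop_sound _ H
  obtain ⟨Q, H⟩ := cwarm_sound _ _ _ _ H
  have H := clp_sound _ _ _ H k hk0 hkm
  unfold ck at H
  rw [cF_eq, cand_iff] at H
  have hO : 0 < (3:ℕ)^757 := by positivity
  obtain ⟨E1, E2⟩ := ck1_sound _ _ _ e hO (by omega) he0 he1 hf H.1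
  exact ck2_sound _ l2 l3 l5 l7 T k _ n d b Q e hk hk2 hO O_le he0 he1 E1 E2 hb hb9 hdn hn3 hn h2 h3 h5 h7 hT h H.2
end

section
set_option exponentiation.threshold 3000
set_option maxRecDepth 20000

theorem log_close (y z M : ℝ) (hM : 0 < M) (hy : 20*M ≤ y) (hz : 20*M ≤ z) (h : |y-z| ≤ 20) :
    |Real.log z - Real.log y| ≤ 1/M := by
  have py : 0 < y := by linarith
  have pz : 0 < z := by linarith
  have a1 := Real.log_le_sub_one_of_pos (div_pos py pz)
  have a2 := Real.log_le_sub_one_of_pos (div_pos pz py)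
  rw [Real.log_div py.ne' pz.ne'] at a1
  rw [Real.log_div pz.ne' py.ne'] at a2
  rw [abs_le] at h
  have b1 : y/z - 1 ≤ 1/M := by
    rw [div_sub_one pz.ne', div_le_div_iff₀ pz hM]; nlinarith
  have b2 : z/y - 1 ≤ 1/M := by
    rw [div_sub_one py.ne', div_le_div_iff₀ py hM]; nlinarith
  rw [abs_le]; constructor <;> linarith

theorem partC (k n d : ℕ) (b : ℤ) (α u v : ℝ) (hk : 3 ≤ k) (hk2 : k < 1538) (hb : 1 ≤ b) (hb9 : b ≤ 9)
    (hn1 : 2000 ≤ n) (hn2 : n < 2^512) (hdn : d ≤ n) (h1 : 9/5 < α) (h2 : α < 2) (hα : α^k*(2-α)=1)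
    (he : ((k:ℝ)+1)*(2-α) ≤ 1) (hu : u = b*α*((k+1)*α-2*k)) (hv : v = (2*α-1)*(α-1))
    (huv : 2 ≤ v) (habs : |u*10^d - v*α^n| ≤ 20) : False := by
  lift b to ℕ using (by linarith)
  have hb' : 1 ≤ b := by exact_mod_cast hb
  have hb9' : b ≤ 9 := by exact_mod_cast hb9
  have hbr : (0:ℝ) < b := by exact_mod_cast hb'
  have hO : (0:ℝ) < ((3^757:ℕ):ℝ) := by positivity
  have hz : 20*((3^757:ℕ):ℝ) + 20 ≤ v*α^n := by
    have a1 : (3:ℝ)^1000 ≤ α^2000 := by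
      rw [show 2000 = 2*1000 by norm_num, pow_mul α 2 1000]
      exact pow_le_pow_left₀ (by norm_num) (by nlinarith) _
    have a2 : α^2000 ≤ α^n := pow_le_pow_right₀ (by linarith) hn1
    have a3 : 20*((3^757:ℕ):ℝ) + 20 ≤ 2*3^1000 := by
      have : 20*(3^757)+20 ≤ 2*3^1000 := by norm_num
      exact_mod_cast this
    have a4 : (0:ℝ) < 3^1000 := by positivity
    nlinarith
  have hy : 20*((3^757:ℕ):ℝ) ≤ u*10^d := by rw [abs_le] at habs; linarith
  have hlog := log_close (u*10^d) (v*α^n) _ hO hy (by linarith) habs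
  generalize hOO : ((3^757:ℕ):ℝ) = OO at hO hy hz hlog
  obtain ⟨e, hee⟩ : ∃ e, e = 2 - α := ⟨_, rfl⟩
  have hαe : α = 2*(1-e/2) := by rw [hee]; ring
  have he0 : 0 < e := by linarith
  have he1 : ((k:ℝ)+1)*e ≤ 1 := by rw [hee]; exact he
  have hf : e*(2-e)^k = 1 := by rw [hee, mul_comm]; simpa using hα
  have he5 : e < 1/5 := by linarith
  have q1 : 0 < 1 - e/2 := by linarith
  have q2 : 0 < 1 - ((k:ℝ)+1)*e/2 := by linarith
  have q3 : 0 < 1 - 2*e/3 := by linarith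
  have q4 : 0 < 1 - e := by linarith
  have lα : Real.log α = Real.log 2 + Real.log (1-e/2) := by
    rw [hαe, Real.log_mul (by norm_num) q1.ne']
  have lu : Real.log u = Real.log b + (2*Real.log 2 + Real.log (1-e/2) + Real.log (1-((k:ℝ)+1)*e/2)) := by
    have : u = b*((2*(1-e/2))*(2*(1-((k:ℝ)+1)*e/2))) := by rw [hu, hee]; push_cast; ring
    rw [this, Real.log_mul hbr.ne' (by positivity), Real.log_mul (by positivity) (by positivity),
      Real.log_mul (by norm_num) q1.ne', Real.log_mul (by norm_num) q2.ne']; ring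
  have lv : Real.log v = Real.log 3 + Real.log (1-2*e/3) + Real.log (1-e) := by
    have : v = 3*(1-2*e/3)*(1-e) := by rw [hv, hee]; ring
    rw [this, Real.log_mul (by positivity) q4.ne', Real.log_mul (by norm_num) q3.ne']
  have hu0 : 0 < u := by
    by_contra hc
    push Not at hc
    have : (0:ℝ) < 10^d := by positivity
    nlinarith
  have hfin : |n*(Real.log 2 + Real.log (1-e/2)) - d*Real.log 10 - (Real.log b + (2*Real.log 2
      + Real.log (1-e/2) + Real.log (1-((k:ℝ)+1)*e/2) - Real.log 3 - Real.log (1-2*e/3) - Real.log (1-e)))| ≤ 1/(3^757:ℕ) := by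
    rw [hOO]
    rw [Real.log_mul hu0.ne' (by positivity), Real.log_mul (by linarith) (by positivity), Real.log_pow,
      Real.log_pow, lu, lv, lα] at hlog
    refine le_trans (le_of_eq ?_) hlog
    congr 1; ring
  have fin : ∀ w k0 m, Nat.ble 1 (cchunk w k0 m) = true → k0 ≤ k → k < k0 + m → False := fun w k0 m H a c =>
    cchunk_sound w k0 m k n d b e H a c hk hk2 he0 he1 hf hb' hb9' hdn (by omega) hn2 hfin
  by_cases c0 : k < 100
  · exact fin _ _ _ cc0 hk c0
  by_cases c1 : k < 200
  · exact fin _ _ _ cc1 (by omega) c1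
  by_cases c2 : k < 300
  · exact fin _ _ _ cc2 (by omega) c2
  by_cases c3 : k < 400
  · exact fin _ _ _ cc3 (by omega) c3
  by_cases c4 : k < 500
  · exact fin _ _ _ cc4 (by omega) c4
  by_cases c5 : k < 600
  · exact fin _ _ _ cc5 (by omega) c5
  by_cases c6 : k < 700
  · exact fin _ _ _ cc6 (by omega) c6
  by_cases c7 : k < 800
  · exact fin _ _ _ cc7 (by omega) c7
  by_cases c8 : k < 900
  · exact fin _ _ _ cc8 (by omega) c8
  by_cases c9 : k < 1000
  · exact fin _ _ _ cc9 (by omega) c9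
  by_cases c10 : k < 1070
  · exact fin _ _ _ cc10 (by omega) c10
  exact fin _ _ _ cc11 (by omega) hk2


end

set_option exponentiation.threshold 3000
set_option maxRecDepth 20000
/-- If `L_n^{(k)} = b·10^d` with `1 ≤ b ≤ 9` and `d ≥ 2`, then
`n < 2.1·10^{17} k^4 (log k)^4`. -/
theorem n_bound_b_pow_ten (k n d : ℕ) (b : ℤ) (hk : 2 ≤ k) (hn : 5 < n)
    (hb1 : 1 ≤ b) (hb9 : b ≤ 9) (hd : 2 ≤ d)
    (heq : lucasL k n = b * 10 ^ d) :
    (n : ℝ) < 2.1 * 10 ^ 17 * (k : ℝ) ^ 4 * Real.log k ^ 4 := by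
  by_contra hcon
  push Not at hcon
  rcases Nat.eq_or_lt_of_le hk with hk2 | hk3
  · subst hk2
    apply lucas_two_mod n
    rw [heq]
    apply Dvd.dvd.mul_left
    exact dvd_pow (by norm_num) (by omega)
  have hk3 : 3 ≤ k := hk3
  have hkr : (3:ℝ) ≤ k := by exact_mod_cast hk3
  have hlog : 1 ≤ Real.log k := by
    rw [Real.le_log_iff_exp_le (by linarith)]
    linarith [Real.exp_one_lt_d9]
  have hbig : 10^17*k ≤ n := by
    have p1 : 1 ≤ Real.log k ^ 4 := one_le_pow₀ hlog
    have p2 : (k:ℝ) ≤ (k:ℝ)^4 := le_self_pow₀ (by linarith) (by norm_num)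
    have : (10:ℝ)^17*k ≤ n := by
      refine le_trans ?_ hcon
      have : (k:ℝ) ≤ (k:ℝ)^4 * Real.log k ^ 4 := by nlinarith
      nlinarith
    exact_mod_cast this
  obtain ⟨α, h1, h2, hα, he⟩ := alpha_exists k hk3
  obtain ⟨u, hu⟩ : ∃ u : ℝ, u = b*α*((k+1)*α-2*k) := ⟨_, rfl⟩
  obtain ⟨v, hv⟩ : ∃ v : ℝ, v = (2*α-1)*(α-1) := ⟨_, rfl⟩
  obtain ⟨u1, u2, v1, v2, _⟩ := uv_bounds hb1 hb9 h1 h2 he hu hv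
  have habs : |u*10^d - v*α^n| ≤ 20 := by
    have := partR k n α hk3 h1 h2 hα he
    rw [heq] at this
    push_cast at this
    rw [hu, hv]
    convert this using 2
    ring
  obtain ⟨hdn, hnd⟩ := dn_bounds (by omega) h1 h2 u1 u2 v1 v2 habs
  have hA := partA k n d b hk3 hn (by omega) heq
  by_cases hs : n < 2^512
  · have hk1538 : k < 1538 := by
      by_contra hc
      push Not at hc
      have a1 : 2^1539 ≤ 2^(k+1) := Nat.pow_le_pow_right (by norm_num) (by omega)
      have a2 : n^3 ≤ (2^512-1)^3 := Nat.pow_le_pow_left (by omega) 3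
      have a3 : n^3 < 2^1536 := by
        calc n^3 < (2^512)^3 := Nat.pow_lt_pow_left hs (by norm_num)
          _ = 2^1536 := by rw [← pow_mul]
      have a4 : (2:ℕ)^1539 = 8*2^1536 := by rw [show 1539 = 3+1536 by norm_num, pow_add]; norm_num
      clear hs a2
      generalize (2:ℕ)^1536 = M at *
      omega
    exact partC k n d b α u v hk3 hk1538 hb1 hb9 (by omega) hs hdn h1 h2 hα he hu hv v1 habs
  · push Not at hs
    have hn0 : n ≠ 0 := by omega
    obtain ⟨ℓ, hℓ⟩ : ∃ ℓ, ℓ = Nat.log 2 n := ⟨_, rfl⟩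
    have l1 : 2^ℓ ≤ n := by rw [hℓ]; exact Nat.pow_log_le_self 2 hn0
    have l2 : n < 2^(ℓ+1) := by rw [hℓ]; exact Nat.lt_pow_succ_log_self (by norm_num) n
    have l3 : 512 ≤ ℓ := by rw [hℓ]; exact Nat.le_log_of_pow_le (by norm_num) hs
    have l4 : k ≤ 4*ℓ := by
      have a3 : n^3 < 2^(3*(ℓ+1)) := by
        calc n^3 < (2^(ℓ+1))^3 := Nat.pow_lt_pow_left l2 (by norm_num)
          _ = _ := by rw [← pow_mul, mul_comm]
      have a5 : 2^(k+1) < 2^(3*(ℓ+1)+3) := by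
        rw [pow_add 2 (3*(ℓ+1)) 3]; omega
      have := (Nat.pow_lt_pow_iff_right (by norm_num)).1 a5
      omega
    exact partB k n d ℓ b α u v hk3 hb1 hb9 l3 l4 l1 l2 h1 h2 hα he hu hv habs
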